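/- arXiv:1204.6530 — 2 statements merged into one kernel-verified Lean document; each statement's English description precedes it below -/
import Mathlib

section
/- For every positive real δ and every integer k ≥ 3, there exists a positive real ε such that the following holds for all sufficiently large n: every subset A ⊆ {1,…,n} with |A| ≥ δn contains at least ε·n² k-term arithmetic progressions, i.e., there are at least ε·n² pairs (a,d) of positive integers with d ≥ 1 such that {a, a+d, …, a+(k−1)d} ⊆ A. -/
attribute [local instance] Classical.propDecidable

/-!
The proof is the removal-lemma proof of Szemerédi's theorem, with the hypergraph removal lemma
obtained by Tao's infinitary method. Given `A` in a finite abelian group `G`, sample a random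
sequence of elements in each of `k` vertex classes and record, for every choice of one vertex per
class, whether the linear forms `∑ i, (i - j) • x i` land in `A`. The form `j` does not involve
class `j`, the forms at a given point are the terms of an arithmetic progression with difference
`-∑ i, x i`, and the law of the recorded array is invariant under permuting the vertices of each
class.

Mark one vertex of each class as its root. Because the other vertices are infinitely many copies of
the roots, exchangeability makes entries with different root sets of the same size independent
conditionally on the entries with fewer roots. Descending on the number of roots, this shows
that if `k` events, the `j`-th of which ignores the root of class `j`, almost surely never occur
together, then each can be shrunk by a small amount so that they never occur together at all. By
compactness of the space of exchangeable laws the same holds when they occur together with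
sufficiently small probability. Since trivial progressions (`∑ i, x i = 0`) occur as often as
`A` is dense, and conditioning on `∑ i, x i = 0` cannot be detected by an event that ignores one
root, a dense `A` has many progressions. Finally `{1, …, n}` is embedded in `ZMod (2 * n)`, where
no progression of its elements wraps around.
-/

namespace Varnavides

open MeasureTheory ProbabilityTheory Filter Topology

section Agreement

variable {ι : Type*} {X : ι → Type*}

/-- The cylinder of all points that agree with `a` on the coordinates in `K`. -/
def agreeSet (K : Finset ι) (a : ∀ i, X i) : Set (∀ i, X i) := {x | ∀ i ∈ K, x i = a i}

theorem agreeSet_congr {K : Finset ι} {a b : ∀ i, X i} (hab : ∀ i ∈ K, a i = b i) :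
    agreeSet K a = agreeSet K b :=
  Set.ext fun x => forall₂_congr fun i hi => by rw [hab i hi]

theorem exists_finset_forall_exists_eqOn [∀ i, Finite (X i)] (K : Finset ι) :
    ∃ P : Finset (∀ i, X i), ∀ x : (∀ i, X i), ∃ a ∈ P, ∀ i ∈ K, a i = x i := by
  have : Fintype (Set.range (K.restrict : (∀ i, X i) → ∀ i : K, X i)) := Fintype.ofFinite _
  refine ⟨Finset.univ.image (Set.rangeSplitting K.restrict), fun x =>
    ⟨_, Finset.mem_image_of_mem _ (Finset.mem_univ ⟨K.restrict x, x, rfl⟩), fun i hi => ?_⟩⟩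
  exact congrFun (Set.apply_rangeSplitting K.restrict ⟨K.restrict x, x, rfl⟩) ⟨i, hi⟩

end Agreement

section CylinderEvents

variable {ι : Type*} {X : ι → Type*} [∀ i, MeasurableSpace (X i)] {Δ : Set ι}

theorem cylinderEvents_eq_comap_domRestrict (Δ : Set ι) :
    cylinderEvents (X := X) Δ = MeasurableSpace.comap Δ.domRestrict MeasurableSpace.pi := by
  refine le_antisymm (iSup₂_le fun i hi => ?_) (measurable_restrict_cylinderEvents Δ).comap_le
  rintro _ ⟨B, hB, rfl⟩
  exact ⟨(fun z => z ⟨i, hi⟩) ⁻¹' B, measurable_pi_apply _ hB, rfl⟩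

theorem mem_iff_mem_of_eqOn {A : Set (∀ i, X i)} (hA : MeasurableSet[cylinderEvents Δ] A)
    {x y : ∀ i, X i} (hxy : ∀ i ∈ Δ, x i = y i) : x ∈ A ↔ y ∈ A := by
  rw [cylinderEvents_eq_comap_domRestrict] at hA
  obtain ⟨B, -, rfl⟩ := hA
  have hres : Δ.domRestrict x = Δ.domRestrict y := funext fun i => hxy i i.2
  rw [Set.mem_preimage, Set.mem_preimage, hres]

theorem apply_eq_apply_of_eqOn {β : Type*} [MeasurableSpace β] [MeasurableSingletonClass β]
    {f : (∀ i, X i) → β} (hf : Measurable[cylinderEvents Δ] f) {x y : ∀ i, X i}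
    (hxy : ∀ i ∈ Δ, x i = y i) : f x = f y :=
  (mem_iff_mem_of_eqOn (hf (measurableSet_singleton (f y))) hxy).2 rfl

theorem iSup_cylinderEvents {α : Type*} (Δ : α → Set ι) :
    ⨆ a, cylinderEvents (X := X) (Δ a) = cylinderEvents (⋃ a, Δ a) := by
  refine le_antisymm (iSup_le fun a => cylinderEvents_mono (Set.subset_iUnion Δ a))
    (iSup₂_le fun i hi => ?_)
  obtain ⟨a, ha⟩ := Set.mem_iUnion.1 hi
  exact (measurable_cylinderEvent_apply ha).comap_le.trans
    (le_iSup (fun a => cylinderEvents (X := X) (Δ a)) a)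

/-- The filtration of a product space generated by an increasing sequence of sets of
coordinates. -/
def cylinderFiltration (Δ : ℕ → Set ι) (hΔ : Monotone Δ) :
    Filtration ℕ (MeasurableSpace.pi : MeasurableSpace (∀ i, X i)) where
  seq n := cylinderEvents (Δ n)
  mono' _ _ h := cylinderEvents_mono (hΔ h)
  le' _ := cylinderEvents_le_pi

theorem measurableSet_agreeSet [∀ i, MeasurableSingletonClass (X i)] {K : Finset ι}
    (hK : (K : Set ι) ⊆ Δ) (a : ∀ i, X i) : MeasurableSet[cylinderEvents Δ] (agreeSet K a) := by
  have heq : agreeSet K a = ⋂ i ∈ K, (fun x => x i) ⁻¹' {a i} := by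
    ext x; simp [agreeSet]
  rw [heq]
  exact .biInter K.countable_toSet fun i hi =>
    measurable_cylinderEvent_apply (hK hi) (measurableSet_singleton (a i))

theorem measurableSet_cylinderEvents_diagonal [∀ i, MeasurableSingletonClass (X i)]
    [∀ i, Finite (X i)] {K : Finset ι} (hK : (K : Set ι) ⊆ Δ)
    {G : (∀ i, X i) → Set (∀ i, X i)} (hG : ∀ c, MeasurableSet[cylinderEvents Δ] (G c))
    (hcongr : ∀ c c', (∀ i ∈ K, c i = c' i) → G c = G c') :
    MeasurableSet[cylinderEvents Δ] {x | x ∈ G x} := by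
  obtain ⟨P, hP⟩ := exists_finset_forall_exists_eqOn (X := X) K
  have hunion : {x | x ∈ G x} = ⋃ a ∈ P, agreeSet K a ∩ G a := by
    ext x
    simp only [Set.mem_ofPred_eq, Set.mem_iUnion, Set.mem_inter_iff, exists_prop]
    constructor
    · intro hx
      obtain ⟨a, haP, hax⟩ := hP x
      exact ⟨a, haP, fun i hi => (hax i hi).symm, by rwa [hcongr a x hax]⟩
    · rintro ⟨a, -, hxa, hx⟩
      rwa [hcongr x a hxa]
  rw [hunion]
  exact .biUnion P.countable_toSet fun a _ => (measurableSet_agreeSet hK a).inter (hG a)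

theorem isClopen_of_measurableSet_cylinderEvents [∀ i, TopologicalSpace (X i)]
    [∀ i, DiscreteTopology (X i)] (hΔ : Δ.Finite) {A : Set (∀ i, X i)}
    (hA : MeasurableSet[cylinderEvents Δ] A) : IsClopen A := by
  rw [cylinderEvents_eq_comap_domRestrict] at hA
  obtain ⟨B, -, rfl⟩ := hA
  have := hΔ.to_subtype
  exact (isClopen_discrete B).preimage (Pi.continuous_domRestrict Δ)

end CylinderEvents

section CondProb

variable {Ω : Type*} {m m0 : MeasurableSpace Ω} {μ : Measure Ω}

theorem abs_setIntegral_sub_setIntegral_le {f g : Ω → ℝ} (hf : Integrable f μ)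
    (hg : Integrable g μ) (s : Set Ω) :
    |∫ x in s, f x ∂μ - ∫ x in s, g x ∂μ| ≤ ∫ x, |f x - g x| ∂μ := by
  rw [← integral_sub hf.integrableOn hg.integrableOn]
  exact (norm_integral_le_integral_norm fun x => f x - g x).trans
    (setIntegral_le_integral (hf.sub hg).norm (.of_forall fun _ => norm_nonneg _))

variable [IsFiniteMeasure μ]

theorem tendsto_integral_abs_condExp_sub (ℱ : Filtration ℕ m0) {f : Ω → ℝ}
    (hf : Integrable f μ) (hfm : StronglyMeasurable[⨆ n, ℱ n] f) :
    Tendsto (fun n => ∫ x, |μ[f | ℱ n] x - f x| ∂μ) atTop (𝓝 0) := by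
  refine ((ENNReal.tendsto_toReal ENNReal.zero_ne_top).comp
    (hf.tendsto_eLpNorm_condExp hfm)).congr fun n => ?_
  rw [Function.comp_apply, eLpNorm_one_eq_lintegral_enorm,
    ← integral_norm_eq_lintegral_enorm (integrable_condExp.sub hf).aestronglyMeasurable]
  rfl

theorem condExp_iSup_ae_eq_zero (ℱ : Filtration ℕ m0) {f : Ω → ℝ} (hf : Integrable f μ)
    (hzero : ∀ n s, MeasurableSet[ℱ n] s → ∫ x in s, f x ∂μ = 0) :
    μ[f | ⨆ n, ℱ n] =ᵐ[μ] 0 := by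
  have hlevel (n : ℕ) : μ[f | ℱ n] =ᵐ[μ] 0 := by
    refine (ae_eq_condExp_of_forall_setIntegral_eq (ℱ.le n) hf
      (fun _ _ _ => (integrable_zero _ _ _).integrableOn) (fun s hs _ => ?_)
      aestronglyMeasurable_zero).symm
    simp [hzero n s hs]
  filter_upwards [tendsto_ae_condExp (μ := μ) (ℱ := ℱ) f, ae_all_iff.2 hlevel] with x hlim hx
  refine tendsto_nhds_unique hlim ?_
  simp only [hx]
  exact tendsto_const_nhds

theorem setIntegral_condProb (hm : m ≤ m0) {s A : Set Ω} (hs : MeasurableSet[m] s)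
    (hA : MeasurableSet A) : ∫ x in s, (μ⟦A | m⟧) x ∂μ = μ.real (s ∩ A) := by
  rw [setIntegral_condExp hm ((integrable_const 1).indicator hA) hs, setIntegral_indicator hA]
  simp

theorem measure_inter_condProb_nonpos (hm : m ≤ m0) {A : Set Ω} (hA : MeasurableSet A) :
    μ (A ∩ {x | (μ⟦A | m⟧) x ≤ 0}) = 0 := by
  have hs : MeasurableSet[m] {x | (μ⟦A | m⟧) x ≤ 0} :=
    measurableSet_le stronglyMeasurable_condExp.measurable measurable_const
  have hle : μ.real ({x | (μ⟦A | m⟧) x ≤ 0} ∩ A) ≤ 0 :=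
    (setIntegral_condProb hm hs hA).symm.trans_le (setIntegral_nonpos (hm _ hs) fun _ hx => hx)
  rw [Set.inter_comm]
  exact (measureReal_eq_zero_iff).1 (hle.antisymm measureReal_nonneg)

theorem mul_measureReal_inter_le_integral_abs_sub {A : Set Ω} (hA : MeasurableSet A)
    {g : Ω → ℝ} (hgm : Measurable g) (hg : Integrable g μ) (θ : ℝ) :
    (1 - θ) * μ.real (A ∩ {x | g x ≤ θ}) ≤
      ∫ x, |g x - A.indicator (fun _ => (1 : ℝ)) x| ∂μ := by
  set B := A ∩ {x | g x ≤ θ}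
  have hBm : MeasurableSet B := hA.inter (measurableSet_le hgm measurable_const)
  have hone : ∫ x in B, A.indicator (fun _ => (1 : ℝ)) x ∂μ = μ.real B := by
    have hBA : B ∩ A = B := Set.inter_eq_left.2 Set.inter_subset_left
    rw [setIntegral_indicator hA, hBA]
    simp
  have hθ : ∫ x in B, g x ∂μ ≤ θ * μ.real B := by
    refine (setIntegral_mono_on hg.integrableOn (integrable_const θ).integrableOn hBm
      fun x hx => hx.2).trans_eq ?_
    simp [mul_comm]
  have hdiff := abs_setIntegral_sub_setIntegral_le hg
    ((integrable_const (1 : ℝ)).indicator hA) B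
  rw [hone] at hdiff
  linarith [(abs_le.1 hdiff).1]

theorem measure_eq_zero_of_measureReal_diff_le {κ : Type*} [Fintype κ] {W : Set Ω}
    {A : κ → Set Ω} (hA : μ (⋂ j, A j) = 0) {τ : ℝ} (hτ : Fintype.card κ * τ < 1)
    (hdiff : ∀ j, μ.real (W \ A j) ≤ τ * μ.real W) : μ W = 0 := by
  have hcover : W ⊆ (⋂ j, A j) ∪ ⋃ j, W \ A j := by
    rw [← Set.sdiff_iInter]
    exact fun x hx => (em (x ∈ ⋂ j, A j)).imp_right fun h => ⟨hx, h⟩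
  have hle : μ.real W ≤ Fintype.card κ * τ * μ.real W := by
    calc μ.real W ≤ μ.real (⋂ j, A j) + μ.real (⋃ j, W \ A j) :=
          (measureReal_mono hcover).trans (measureReal_union_le _ _)
      _ = μ.real (⋃ j, W \ A j) := by simp [Measure.real, hA]
      _ ≤ ∑ j, μ.real (W \ A j) := measureReal_iUnion_fintype_le _
      _ ≤ ∑ _j : κ, τ * μ.real W := Finset.sum_le_sum fun j _ => hdiff j
      _ = Fintype.card κ * τ * μ.real W := by simp [mul_assoc]
  rw [← measureReal_eq_zero_iff]
  nlinarith [measureReal_nonneg (μ := μ) (s := W)]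

end CondProb

section ExchangeableArrays

variable {κ : Type*}

/-- The positions of a family of arrays labelled by `κ`: a label together with one vertex in
each of the vertex classes, which are also labelled by `κ` and are all copies of `ℕ`. -/
abbrev ArrayIndex (κ : Type*) := κ × (κ → ℕ)

/-- A family of `0`-`1` arrays labelled by `κ`, that is, a family of edge-coloured hypergraphs on
the vertex classes. -/
abbrev BitArray (κ : Type*) := ArrayIndex κ → Bool

/-- The action on positions of a permutation of each vertex class. -/
def permuteIndex (s : κ → Equiv.Perm ℕ) (p : ArrayIndex κ) : ArrayIndex κ :=
  (p.1, fun i => s i (p.2 i))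

/-- The action on arrays of a permutation of each vertex class. -/
def permute (s : κ → Equiv.Perm ℕ) (x : BitArray κ) : BitArray κ :=
  fun p => x (permuteIndex s p)

/-- A random array is separately exchangeable if permuting the vertices inside each class does
not change its law. -/
def IsExchangeable (μ : Measure (BitArray κ)) : Prop :=
  ∀ s : κ → Equiv.Perm ℕ, MeasurePreserving (permute s) μ μ

/-- The positions all of whose vertices are at most `M`. -/
def indicesUpTo (M : ℕ) : Set (ArrayIndex κ) := {p | ∀ i, p.2 i ≤ M}

theorem monotone_indicesUpTo : Monotone (indicesUpTo : ℕ → Set (ArrayIndex κ)) :=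
  fun _ _ h _ hp i => (hp i).trans h

theorem iUnion_indicesUpTo [Finite κ] :
    ⋃ M, (indicesUpTo M : Set (ArrayIndex κ)) = Set.univ := by
  refine Set.eq_univ_of_forall fun p => Set.mem_iUnion.2 ?_
  obtain ⟨M, hM⟩ := (Set.finite_range p.2).bddAbove
  exact ⟨M, fun i => hM ⟨i, rfl⟩⟩

theorem finite_indicesUpTo [Finite κ] (M : ℕ) : (indicesUpTo M : Set (ArrayIndex κ)).Finite := by
  have heq : (indicesUpTo M : Set (ArrayIndex κ)) = Set.univ ×ˢ {v | ∀ i, v i ∈ Set.Iic M} := by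
    ext p; simp [indicesUpTo]
  rw [heq]
  exact Set.finite_univ.prod (Set.Finite.pi' fun _ => Set.finite_Iic M)

variable [Fintype κ]

/-- The classes in which a position uses the vertex `0`, the root of the class. The entries with
root set `e` play the role of the order-`#e` information carried by the roots in `e`. -/
noncomputable def rootSet (p : ArrayIndex κ) : Finset κ := {i | p.2 i = 0}

theorem mem_rootSet {p : ArrayIndex κ} {i : κ} : i ∈ rootSet p ↔ p.2 i = 0 := by
  simp [rootSet]

/-- The positions that use no root outside `e`. -/
def indicesWithin (e : Finset κ) : Set (ArrayIndex κ) := {p | rootSet p ⊆ e}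

/-- A set of positions that contains every position with a strictly smaller root set than one of
its members. -/
def IsRootClosed (T : Set (ArrayIndex κ)) : Prop :=
  ∀ p ∈ T, ∀ q, rootSet q ⊂ rootSet p → q ∈ T

/-- The permutation that exchanges the root with the vertex `M + 1` in the classes outside `e`. -/
noncomputable def swapRoots (e : Finset κ) (M : ℕ) (i : κ) : Equiv.Perm ℕ :=
  if i ∈ e then Equiv.refl ℕ else Equiv.swap 0 (M + 1)

variable {e : Finset κ} {M : ℕ} {T : Set (ArrayIndex κ)}

theorem permuteIndex_swapRoots_of_mem {p : ArrayIndex κ}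
    (hp : p ∈ indicesWithin e ∩ indicesUpTo M) : permuteIndex (swapRoots e M) p = p := by
  refine Prod.ext rfl (funext fun i => ?_)
  by_cases hi : i ∈ e
  · simp [permuteIndex, swapRoots, hi]
  · have hroot : p.2 i ≠ 0 := fun h => hi (hp.1 (mem_rootSet.2 h))
    have hbound : p.2 i ≠ M + 1 := (Nat.lt_succ_of_le (hp.2 i)).ne
    simp only [permuteIndex, swapRoots, hi, if_false]
    exact Equiv.swap_apply_of_ne_of_ne hroot hbound

theorem rootSet_permuteIndex_swapRoots {p : ArrayIndex κ} (hp : p ∈ indicesUpTo M) :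
    rootSet (permuteIndex (swapRoots e M) p) = rootSet p ∩ e := by
  ext i
  by_cases hi : i ∈ e
  · simp [mem_rootSet, permuteIndex, swapRoots, hi]
  · have hbound : p.2 i ≠ M + 1 := (Nat.lt_succ_of_le (hp i)).ne
    simp [mem_rootSet, permuteIndex, swapRoots, hi, Equiv.swap_apply_eq_iff, hbound]

theorem measurableSet_preimage_permute_swapRoots (hT : IsRootClosed T) {t : Set (BitArray κ)}
    (ht : MeasurableSet[cylinderEvents (T ∩ indicesUpTo M)] t) :
    MeasurableSet[cylinderEvents (T ∩ indicesWithin e)] (permute (swapRoots e M) ⁻¹' t) := by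
  suffices hmem : ∀ p ∈ T ∩ indicesUpTo M,
      permuteIndex (swapRoots e M) p ∈ T ∩ indicesWithin e from
    measurable_cylinderEvents_iff.2
      (fun p hp => measurable_cylinderEvent_apply (hmem p hp)) ht
  rintro p ⟨hpT, hpM⟩
  have hroot : rootSet (permuteIndex (swapRoots e M) p) = rootSet p ∩ e :=
    rootSet_permuteIndex_swapRoots hpM
  refine ⟨?_, hroot.trans_subset Finset.inter_subset_right⟩
  by_cases hpe : rootSet p ⊆ e
  · rwa [permuteIndex_swapRoots_of_mem ⟨hpe, hpM⟩]
  · refine hT p hpT _ (hroot ▸ ?_)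
    exact Finset.inter_subset_left.ssubset_of_ne fun h => hpe (Finset.inter_eq_left.1 h)

namespace IsExchangeable

variable {μ : Measure (BitArray κ)} (hμ : IsExchangeable μ)
include hμ

theorem setIntegral_preimage_swapRoots {v : BitArray κ → ℝ}
    (hv : StronglyMeasurable[cylinderEvents (indicesWithin e ∩ indicesUpTo M)] v)
    {t : Set (BitArray κ)} (ht : MeasurableSet t) :
    ∫ x in permute (swapRoots e M) ⁻¹' t, v x ∂μ = ∫ x in t, v x ∂μ := by
  have hinv (x : BitArray κ) : v (permute (swapRoots e M) x) = v x :=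
    apply_eq_apply_of_eqOn hv.measurable fun p hp =>
      congrArg x (permuteIndex_swapRoots_of_mem hp)
  have hmp := hμ (swapRoots e M)
  conv_rhs => rw [← hmp.map_eq]
  rw [setIntegral_map ht (hv.mono cylinderEvents_le_pi).aestronglyMeasurable
    hmp.measurable.aemeasurable]
  simp only [hinv]

variable [IsProbabilityMeasure μ]

/- Swapping the roots outside `e` with fresh vertices fixes all but an `L¹`-small part of `f`, and
moves a test set depending on `T` to one depending on `T ∩ indicesWithin e`. -/
theorem setIntegral_eq_zero (hT : IsRootClosed T) {f : BitArray κ → ℝ} (hf : Integrable f μ)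
    (hfm : StronglyMeasurable[cylinderEvents (indicesWithin e)] f)
    (hzero : ∀ s, MeasurableSet[cylinderEvents (T ∩ indicesWithin e)] s → ∫ x in s, f x ∂μ = 0)
    {t : Set (BitArray κ)} (ht : MeasurableSet[cylinderEvents (T ∩ indicesUpTo M)] t) :
    ∫ x in t, f x ∂μ = 0 := by
  have hmono : Monotone fun N => indicesWithin e ∩ indicesUpTo N :=
    fun _ _ h => Set.inter_subset_inter_right _ (monotone_indicesUpTo h)
  let ℱ := cylinderFiltration (X := fun _ => Bool) _ hmono
  have hlim : Tendsto (fun N => 2 * ∫ x, |μ[f | ℱ N] x - f x| ∂μ) atTop (𝓝 0) := by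
    have hsup : ⨆ N, ℱ N = cylinderEvents (indicesWithin e) := by
      refine (iSup_cylinderEvents _).trans ?_
      rw [← Set.inter_iUnion, iUnion_indicesUpTo, Set.inter_univ]
    simpa using (tendsto_integral_abs_condExp_sub ℱ hf (hsup ▸ hfm)).const_mul 2
  have hbound (N : ℕ) (hN : M ≤ N) :
      |∫ x in t, f x ∂μ| ≤ 2 * ∫ x, |μ[f | ℱ N] x - f x| ∂μ := by
    have htN : MeasurableSet[cylinderEvents (T ∩ indicesUpTo N)] t :=
      cylinderEvents_mono (Set.inter_subset_inter_right _ (monotone_indicesUpTo hN)) _ ht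
    have hswap := hμ.setIntegral_preimage_swapRoots (e := e) (M := N) (v := μ[f | ℱ N])
      stronglyMeasurable_condExp (cylinderEvents_le_pi _ ht)
    have hclose := abs_setIntegral_sub_setIntegral_le
      (integrable_condExp (m := ℱ N) (f := f)) hf t
    have hclose' := abs_setIntegral_sub_setIntegral_le
      (integrable_condExp (m := ℱ N) (f := f)) hf (permute (swapRoots e N) ⁻¹' t)
    rw [hswap, hzero _ (measurableSet_preimage_permute_swapRoots hT htN)] at hclose'
    rw [abs_le] at hclose hclose' ⊢
    constructor <;> linarith
  exact abs_nonpos_iff.1 (ge_of_tendsto hlim (eventually_atTop.2 ⟨M, hbound⟩))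

theorem condExp_inter_indicesWithin (hT : IsRootClosed T) {f : BitArray κ → ℝ}
    (hf : Integrable f μ) (hfm : StronglyMeasurable[cylinderEvents (indicesWithin e)] f) :
    μ[f | cylinderEvents T] =ᵐ[μ] μ[f | cylinderEvents (T ∩ indicesWithin e)] := by
  set f₀ := μ[f | cylinderEvents (T ∩ indicesWithin e)] with hf₀
  have hf₀i : Integrable f₀ μ := integrable_condExp
  have hf₀m : StronglyMeasurable[cylinderEvents (T ∩ indicesWithin e)] f₀ :=
    stronglyMeasurable_condExp
  have horth (s : Set (BitArray κ))
      (hs : MeasurableSet[cylinderEvents (T ∩ indicesWithin e)] s) :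
      ∫ x in s, (f - f₀) x ∂μ = 0 := by
    simp only [Pi.sub_apply]
    rw [integral_sub hf.integrableOn hf₀i.integrableOn, hf₀,
      setIntegral_condExp cylinderEvents_le_pi hf hs, sub_self]
  have hmono : Monotone fun N => T ∩ indicesUpTo N :=
    fun _ _ h => Set.inter_subset_inter_right _ (monotone_indicesUpTo h)
  have hzero : μ[f - f₀ | cylinderEvents T] =ᵐ[μ] 0 := by
    have hsup : ⨆ N, cylinderFiltration (X := fun _ => Bool) _ hmono N = cylinderEvents T := by
      refine (iSup_cylinderEvents _).trans ?_
      rw [← Set.inter_iUnion, iUnion_indicesUpTo, Set.inter_univ]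
    rw [← hsup]
    exact condExp_iSup_ae_eq_zero _ (hf.sub hf₀i) fun N s hs =>
      hμ.setIntegral_eq_zero hT (hf.sub hf₀i)
        (hfm.sub (hf₀m.mono (cylinderEvents_mono Set.inter_subset_right))) horth hs
  have hf₀T : μ[f₀ | cylinderEvents T] = f₀ :=
    condExp_of_stronglyMeasurable cylinderEvents_le_pi
      (hf₀m.mono (cylinderEvents_mono Set.inter_subset_left)) hf₀i
  filter_upwards [hzero, condExp_sub hf hf₀i (cylinderEvents T)] with x hx hsub
  rw [hsub, hf₀T] at hx
  exact sub_eq_zero.1 hx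

theorem setIntegral_condProb_inter_indicesWithin (hT : IsRootClosed T) {W A : Set (BitArray κ)}
    (hW : MeasurableSet[cylinderEvents T] W)
    (hA : MeasurableSet[cylinderEvents (indicesWithin e)] A) :
    ∫ x in W, (μ⟦A | cylinderEvents (T ∩ indicesWithin e)⟧) x ∂μ = μ.real (W ∩ A) := by
  have hA' : MeasurableSet A := cylinderEvents_le_pi _ hA
  rw [← setIntegral_condProb cylinderEvents_le_pi hW hA']
  refine setIntegral_congr_ae (cylinderEvents_le_pi _ hW) ?_
  filter_upwards [hμ.condExp_inter_indicesWithin hT ((integrable_const (1 : ℝ)).indicator hA')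
    (stronglyMeasurable_const.indicator hA)] with x hx _
  exact hx.symm

end IsExchangeable

end ExchangeableArrays

section LevelRefinement

open scoped Finset

variable {κ : Type*} [Fintype κ] {μ : Measure (BitArray κ)} {D : ℕ} {θ : ℝ}
  {I L : Finset (ArrayIndex κ)} {Δ : Set (ArrayIndex κ)} {e : Finset κ} {j : κ}
  {Q : Set (BitArray κ)} {c c' y : BitArray κ}

/-- The array with the entries of `c` at the positions with at least `D` roots, and those of `y`
at all other positions. -/
noncomputable def mergeAbove (D : ℕ) (c y : BitArray κ) : BitArray κ :=
  fun p => if D ≤ #(rootSet p) then c p else y p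

theorem mergeAbove_of_le {p : ArrayIndex κ} (h : D ≤ #(rootSet p)) : mergeAbove D c y p = c p :=
  if_pos h

theorem mergeAbove_of_lt {p : ArrayIndex κ} (h : #(rootSet p) < D) : mergeAbove D c y p = y p :=
  if_neg h.not_ge

theorem mergeAbove_self (D : ℕ) (c : BitArray κ) : mergeAbove D c c = c :=
  funext fun _ => ite_self _

theorem measurableSet_preimage_mergeAbove (D : ℕ) (c : BitArray κ)
    (hQ : MeasurableSet[cylinderEvents Δ] Q) :
    MeasurableSet[cylinderEvents (Δ ∩ {p | #(rootSet p) < D})] (mergeAbove D c ⁻¹' Q) := by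
  refine measurable_cylinderEvents_iff.2 (fun p hp => ?_) hQ
  by_cases h : D ≤ #(rootSet p)
  · simp only [mergeAbove_of_le h]
    exact measurable_const
  · simp only [mergeAbove_of_lt (not_le.1 h)]
    exact measurable_cylinderEvent_apply ⟨hp, not_le.1 h⟩

theorem preimage_mergeAbove_congr (hQ : MeasurableSet[cylinderEvents Δ] Q)
    (hc : ∀ p ∈ Δ, D ≤ #(rootSet p) → c p = c' p) :
    mergeAbove D c ⁻¹' Q = mergeAbove D c' ⁻¹' Q := by
  refine Set.ext fun y => mem_iff_mem_of_eqOn hQ fun p hp => ?_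
  by_cases h : D ≤ #(rootSet p)
  · rw [mergeAbove_of_le h, mergeAbove_of_le h, hc p hp h]
  · rw [mergeAbove_of_lt (not_le.1 h), mergeAbove_of_lt (not_le.1 h)]

/-- The positions with fewer than `D` roots, together with those in `L`. -/
def retained (D : ℕ) (L : Finset (ArrayIndex κ)) : Set (ArrayIndex κ) :=
  {p | #(rootSet p) < D ∨ p ∈ L}

theorem retained_mono {L' : Finset (ArrayIndex κ)} (h : L ⊆ L') : retained D L ⊆ retained D L' :=
  fun _ => Or.imp_right fun hp => h hp

theorem isRootClosed_retained (hL : ∀ p ∈ L, #(rootSet p) ≤ D) : IsRootClosed (retained D L) :=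
  fun p hp _ hq => Or.inl <|
    (Finset.card_lt_card hq).trans_le (hp.elim le_of_lt fun hpL => hL p hpL)

theorem iUnion_retained_indicesUpTo (D : ℕ) :
    ⋃ n, retained D {p ∈ (finite_indicesUpTo n).toFinset | #(rootSet p) = D} =
      {p : ArrayIndex κ | #(rootSet p) < D + 1} := by
  ext p
  have hp : ∃ n, p ∈ indicesUpTo n := Set.mem_iUnion.1
    (iUnion_indicesUpTo (κ := κ) ▸ Set.mem_univ p)
  simp only [retained, Set.mem_iUnion, Set.mem_ofPred_eq, Finset.mem_filter,
    Set.Finite.mem_toFinset, exists_or, exists_const, exists_and_right, hp, true_and]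
  omega

variable [DecidableEq κ]

/-- A family of events, the `j`-th of which ignores the root of class `j` and all but finitely
many entries with at least `D` roots, such that no choice of values for the entries with at least
`D` roots lets all the events occur with positive probability. -/
structure IsNullAtLevel (μ : Measure (BitArray κ)) (D : ℕ) (Q : κ → Set (BitArray κ)) :
    Prop where
  exists_measurableSet : ∃ I : Finset (ArrayIndex κ), (∀ p ∈ I, D ≤ #(rootSet p)) ∧
    ∀ j, MeasurableSet[cylinderEvents (retained D I ∩ indicesWithin {j}ᶜ)] (Q j)
  measure_iInter_eq_zero : ∀ c, μ (⋂ j, mergeAbove D c ⁻¹' Q j) = 0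

/-- The conditional probability, given the retained entries that ignore the root of class `j`, of
the slice of `Q` in which the entries with more than `D` roots are those of `c`. -/
noncomputable def sliceProb (μ : Measure (BitArray κ)) (D : ℕ) (L : Finset (ArrayIndex κ)) (j : κ)
    (Q : Set (BitArray κ)) (c : BitArray κ) : BitArray κ → ℝ :=
  μ⟦mergeAbove (D + 1) c ⁻¹' Q | cylinderEvents (retained D L ∩ indicesWithin {j}ᶜ)⟧

/-- The conditional probability, given all entries with fewer roots, that the entries in `L` with
root set `e` are those of `c`. -/
noncomputable def cellProb (μ : Measure (BitArray κ)) (L : Finset (ArrayIndex κ)) (e : Finset κ)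
    (c : BitArray κ) : BitArray κ → ℝ :=
  μ⟦agreeSet {p ∈ L | rootSet p = e} c | cylinderEvents {p | rootSet p ⊂ e}⟧

/-- The points at which the slice of `Q` determined by `c` has conditional probability more than
`θ`, and every order-`D` cell determined by `c` and ignoring the root of class `j` has positive
conditional probability. -/
def refinedSlice (μ : Measure (BitArray κ)) (θ : ℝ) (D : ℕ) (L : Finset (ArrayIndex κ)) (j : κ)
    (Q : Set (BitArray κ)) (c : BitArray κ) : Set (BitArray κ) :=
  {x | θ < sliceProb μ D L j Q c x ∧
    ∀ e ∈ Finset.powersetCard D ({j}ᶜ : Finset κ), 0 < cellProb μ L e c x}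

/-- The replacement for `Q` at level `D`: the points that lie in the refined slice which they
themselves determine. -/
def refinement (μ : Measure (BitArray κ)) (θ : ℝ) (D : ℕ) (L : Finset (ArrayIndex κ)) (j : κ)
    (Q : Set (BitArray κ)) : Set (BitArray κ) :=
  {x | x ∈ refinedSlice μ θ D L j Q x}

theorem stronglyMeasurable_sliceProb :
    StronglyMeasurable[cylinderEvents (retained D L ∩ indicesWithin {j}ᶜ)]
      (sliceProb μ D L j Q c) :=
  stronglyMeasurable_condExp

theorem stronglyMeasurable_cellProb :
    StronglyMeasurable[cylinderEvents {p | rootSet p ⊂ e}] (cellProb μ L e c) :=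
  stronglyMeasurable_condExp

theorem measurableSet_cell (L : Finset (ArrayIndex κ)) (e : Finset κ) (c : BitArray κ) :
    MeasurableSet[cylinderEvents (indicesWithin e)] (agreeSet {p ∈ L | rootSet p = e} c) :=
  measurableSet_agreeSet (fun _ hp => (Finset.mem_filter.1 hp).2.subset) c

theorem sliceProb_congr
    (hQ : MeasurableSet[cylinderEvents (retained (D + 1) I ∩ indicesWithin {j}ᶜ)] Q)
    (hc : ∀ p ∈ I, p ∈ indicesWithin {j}ᶜ → c p = c' p) :
    sliceProb μ D L j Q c = sliceProb μ D L j Q c' := by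
  rw [sliceProb, sliceProb, preimage_mergeAbove_congr hQ fun p hp hD =>
    hc p (hp.1.resolve_left hD.not_gt) hp.2]

theorem cellProb_congr (hc : ∀ p ∈ L, rootSet p = e → c p = c' p) :
    cellProb μ L e c = cellProb μ L e c' := by
  rw [cellProb, cellProb, agreeSet_congr fun p hp =>
    hc p (Finset.mem_filter.1 hp).1 (Finset.mem_filter.1 hp).2]

theorem refinedSlice_congr
    (hQ : MeasurableSet[cylinderEvents (retained (D + 1) I ∩ indicesWithin {j}ᶜ)] Q)
    (hc : ∀ p ∈ I ∪ L, p ∈ indicesWithin {j}ᶜ → c p = c' p) :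
    refinedSlice μ θ D L j Q c = refinedSlice μ θ D L j Q c' := by
  have hcell (e : Finset κ) (he : e ∈ Finset.powersetCard D ({j}ᶜ : Finset κ)) :
      cellProb μ L e c = cellProb μ L e c' :=
    cellProb_congr fun p hp hpe => hc p (Finset.mem_union_right _ hp)
      (hpe.trans_subset (Finset.mem_powersetCard.1 he).1)
  ext x
  refine and_congr ?_ (forall₂_congr fun e he => by rw [hcell e he])
  rw [sliceProb_congr hQ fun p hp => hc p (Finset.mem_union_left _ hp)]

theorem measurableSet_refinedSlice :
    MeasurableSet[cylinderEvents (retained D L ∩ indicesWithin {j}ᶜ)]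
      (refinedSlice μ θ D L j Q c) := by
  have hcells : refinedSlice μ θ D L j Q c = {x | θ < sliceProb μ D L j Q c x} ∩
      ⋂ e ∈ Finset.powersetCard D ({j}ᶜ : Finset κ), {x | 0 < cellProb μ L e c x} := by
    ext x; simp [refinedSlice]
  rw [hcells]
  refine (measurableSet_lt measurable_const stronglyMeasurable_sliceProb.measurable).inter
    (.biInter (Finset.countable_toSet _) fun e he => ?_)
  obtain ⟨hej, hcard⟩ := Finset.mem_powersetCard.1 he
  refine measurableSet_lt measurable_const
    (stronglyMeasurable_cellProb.mono (cylinderEvents_mono fun p hp => ?_)).measurable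
  exact ⟨Or.inl (hcard ▸ Finset.card_lt_card hp), hp.subset.trans hej⟩

theorem measurableSet_refinement
    (hQ : MeasurableSet[cylinderEvents (retained (D + 1) I ∩ indicesWithin {j}ᶜ)] Q) :
    MeasurableSet[cylinderEvents (retained D (I ∪ L) ∩ indicesWithin {j}ᶜ)]
      (refinement μ θ D L j Q) := by
  refine measurableSet_cylinderEvents_diagonal (K := {p ∈ I ∪ L | p ∈ indicesWithin {j}ᶜ})
    (fun p hp => ?_) (fun c => ?_) fun c c' hc => ?_
  · exact ⟨Or.inr (Finset.mem_filter.1 hp).1, (Finset.mem_filter.1 hp).2⟩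
  · exact cylinderEvents_mono (Set.inter_subset_inter_left _
      (retained_mono Finset.subset_union_right)) _ measurableSet_refinedSlice
  · exact refinedSlice_congr hQ fun p hp hpj => hc p (Finset.mem_filter.2 ⟨hp, hpj⟩)

theorem mergeAbove_mem_refinedSlice
    (hQ : MeasurableSet[cylinderEvents (retained (D + 1) I ∩ indicesWithin {j}ᶜ)] Q)
    (hIL : ∀ p ∈ I ∪ L, D ≤ #(rootSet p)) (hy : mergeAbove D c y ∈ refinement μ θ D L j Q) :
    mergeAbove D c y ∈ refinedSlice μ θ D L j Q c := by
  rwa [← refinedSlice_congr hQ fun p hp _ => mergeAbove_of_le (hIL p hp)]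

theorem cellProb_mergeAbove (he : #e = D) :
    cellProb μ L e c (mergeAbove D c' y) = cellProb μ L e c y :=
  apply_eq_apply_of_eqOn stronglyMeasurable_cellProb.measurable fun _ hp =>
    mergeAbove_of_lt (he ▸ Finset.card_lt_card hp)

theorem sliceProb_mergeAbove (hL : ∀ p ∈ L, #(rootSet p) = D) (hy : y ∈ agreeSet L c) :
    sliceProb μ D L j Q c (mergeAbove D c y) = sliceProb μ D L j Q c y :=
  apply_eq_apply_of_eqOn stronglyMeasurable_sliceProb.measurable fun p hp =>
    hp.1.elim mergeAbove_of_lt fun hpL =>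
      (mergeAbove_of_le (hL p hpL).ge).trans (hy p hpL).symm

theorem retained_inter_indicesWithin (he : #e = D) :
    retained D {p ∈ L | rootSet p ≠ e} ∩ indicesWithin e = {p | rootSet p ⊂ e} := by
  ext p
  constructor
  · rintro ⟨hp, hpe⟩
    refine Finset.ssubset_iff_subset_ne.2 ⟨hpe, ?_⟩
    rintro rfl
    exact hp.elim (fun h => h.ne he) fun h => (Finset.mem_filter.1 h).2 rfl
  · exact fun hp => ⟨Or.inl (he ▸ Finset.card_lt_card hp), (Finset.ssubset_iff_subset_ne.1 hp).1⟩

section Exchangeable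

variable [IsProbabilityMeasure μ] (hμ : IsExchangeable μ)
include hμ

theorem measure_inter_cell_ne_zero (hL : ∀ p ∈ L, #(rootSet p) = D) (he : #e = D)
    {W : Set (BitArray κ)}
    (hW : MeasurableSet[cylinderEvents (retained D {p ∈ L | rootSet p ≠ e})] W)
    (hpos : ∀ x ∈ W, 0 < cellProb μ L e c x) (hW₀ : μ W ≠ 0) :
    μ (W ∩ agreeSet {p ∈ L | rootSet p = e} c) ≠ 0 := by
  have hclosed : IsRootClosed (retained D {p ∈ L | rootSet p ≠ e}) :=
    isRootClosed_retained fun p hp => (hL p (Finset.mem_filter.1 hp).1).le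
  have hWm : MeasurableSet W := cylinderEvents_le_pi _ hW
  have hint : ∫ x in W, cellProb μ L e c x ∂μ =
      μ.real (W ∩ agreeSet {p ∈ L | rootSet p = e} c) := by
    rw [← hμ.setIntegral_condProb_inter_indicesWithin hclosed hW (measurableSet_cell L e c),
      retained_inter_indicesWithin he]
    rfl
  have hint_pos : 0 < ∫ x in W, cellProb μ L e c x ∂μ := by
    rw [setIntegral_pos_iff_support_of_nonneg_ae
      ((ae_restrict_iff' hWm).2 (.of_forall fun x hx => (hpos x hx).le))
      integrable_condExp.integrableOn]
    exact (pos_iff_ne_zero.2 hW₀).trans_le (measure_mono fun x hx => ⟨(hpos x hx).ne', hx⟩)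
  rw [hint] at hint_pos
  exact fun h => hint_pos.ne' ((measureReal_eq_zero_iff).2 h)

/- The cells with distinct root sets are conditionally independent, so they can be prescribed one
root set at a time. -/
theorem measure_inter_agreeSet_ne_zero (hL : ∀ p ∈ L, #(rootSet p) = D) {N : Set (BitArray κ)}
    (hN : MeasurableSet[cylinderEvents {p | #(rootSet p) < D}] N)
    (hpos : ∀ x ∈ N, ∀ e, #e = D → 0 < cellProb μ L e c x) (hN₀ : μ N ≠ 0) :
    μ (N ∩ agreeSet L c) ≠ 0 := by
  suffices hcells : ∀ E : Finset (Finset κ), (∀ e ∈ E, #e = D) →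
      μ (N ∩ agreeSet {p ∈ L | rootSet p ∈ E} c) ≠ 0 by
    have hall : {p ∈ L | rootSet p ∈ Finset.powersetCard D Finset.univ} = L :=
      Finset.filter_true_of_mem fun p hp => by simp [hL p hp]
    simpa only [hall] using hcells (Finset.powersetCard D Finset.univ) fun e he =>
      (Finset.mem_powersetCard.1 he).2
  intro E hE
  induction E using Finset.induction_on with
  | empty => simpa [agreeSet] using hN₀
  | insert e E heE ih =>
    set W := N ∩ agreeSet {p ∈ L | rootSet p ∈ E} c
    have hW : MeasurableSet[cylinderEvents (retained D {p ∈ L | rootSet p ≠ e})] W := by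
      refine (cylinderEvents_mono (fun p hp => Or.inl hp) _ hN).inter
        (measurableSet_agreeSet (fun p hp => Or.inr ?_) c)
      obtain ⟨hpL, hpE⟩ := Finset.mem_filter.1 hp
      exact Finset.mem_filter.2 ⟨hpL, fun h => heE (h ▸ hpE)⟩
    have he : #e = D := hE e (Finset.mem_insert_self e E)
    have hsub : W ∩ agreeSet {p ∈ L | rootSet p = e} c ⊆
        N ∩ agreeSet {p ∈ L | rootSet p ∈ insert e E} c := by
      rintro x ⟨⟨hxN, hxE⟩, hxe⟩
      refine ⟨hxN, fun p hp => ?_⟩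
      obtain ⟨hpL, hpE⟩ := Finset.mem_filter.1 hp
      exact (Finset.mem_insert.1 hpE).elim (fun h => hxe p (Finset.mem_filter.2 ⟨hpL, h⟩))
        fun h => hxE p (Finset.mem_filter.2 ⟨hpL, h⟩)
    exact fun h => measure_inter_cell_ne_zero hμ hL he hW (fun x hx => hpos x hx.1 e he)
      (ih fun e' he' => hE e' (Finset.mem_insert_of_mem he')) (measure_mono_null hsub h)

theorem measureReal_sdiff_slice_le (hL : ∀ p ∈ L, #(rootSet p) = D)
    (hQ : MeasurableSet[cylinderEvents (indicesWithin {j}ᶜ)] Q) {W : Set (BitArray κ)}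
    (hW : MeasurableSet[cylinderEvents (retained D L)] W)
    (hθ : ∀ x ∈ W, θ < sliceProb μ D L j Q c x) :
    μ.real (W \ mergeAbove (D + 1) c ⁻¹' Q) ≤ (1 - θ) * μ.real W := by
  have hslice : MeasurableSet[cylinderEvents (indicesWithin {j}ᶜ)]
      (mergeAbove (D + 1) c ⁻¹' Q) :=
    cylinderEvents_mono Set.inter_subset_left _ (measurableSet_preimage_mergeAbove _ c hQ)
  have hle : θ * μ.real W ≤ μ.real (W ∩ mergeAbove (D + 1) c ⁻¹' Q) := by
    calc θ * μ.real W = ∫ _ in W, θ ∂μ := by simp [mul_comm]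
      _ ≤ ∫ x in W, sliceProb μ D L j Q c x ∂μ :=
          setIntegral_mono_on (integrable_const θ).integrableOn integrable_condExp.integrableOn
            (cylinderEvents_le_pi _ hW) fun x hx => (hθ x hx).le
      _ = _ := hμ.setIntegral_condProb_inter_indicesWithin
          (isRootClosed_retained fun p hp => (hL p hp).le) hW hslice
  have hsplit := measureReal_inter_add_sdiff (μ := μ) (s := W) (cylinderEvents_le_pi _ hslice)
  linarith

theorem measure_iInter_mergeAbove_refinement_eq_zero (hD : D < Fintype.card κ)
    (hθ : Fintype.card κ * (1 - θ) < 1) {Q : κ → Set (BitArray κ)}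
    (hI : ∀ p ∈ I, D + 1 ≤ #(rootSet p)) (hL : ∀ p ∈ L, #(rootSet p) = D)
    (hQ : ∀ j, MeasurableSet[cylinderEvents (retained (D + 1) I ∩ indicesWithin {j}ᶜ)] (Q j))
    (hnull : μ (⋂ j, mergeAbove (D + 1) c ⁻¹' Q j) = 0) :
    μ (⋂ j, mergeAbove D c ⁻¹' refinement μ θ D L j (Q j)) = 0 := by
  set N := ⋂ j, mergeAbove D c ⁻¹' refinement μ θ D L j (Q j)
  have hIL : ∀ p ∈ I ∪ L, D ≤ #(rootSet p) := fun p hp =>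
    (Finset.mem_union.1 hp).elim (fun h => Nat.le_of_succ_le (hI p h)) fun h => (hL p h).ge
  have hslice (x : BitArray κ) (hx : x ∈ N) (j : κ) :
      mergeAbove D c x ∈ refinedSlice μ θ D L j (Q j) c :=
    mergeAbove_mem_refinedSlice (hQ j) hIL (Set.mem_iInter.1 hx j)
  have hN : MeasurableSet[cylinderEvents {p : ArrayIndex κ | #(rootSet p) < D}] N :=
    .iInter fun j => cylinderEvents_mono Set.inter_subset_right _
      (measurableSet_preimage_mergeAbove D c (measurableSet_refinement (hQ j)))
  have hcell (x : BitArray κ) (hx : x ∈ N) (e : Finset κ) (he : #e = D) :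
      0 < cellProb μ L e c x := by
    obtain ⟨j, hj⟩ : ∃ j, j ∉ e := by
      by_contra! h
      exact hD.ne (he ▸ congrArg Finset.card (Finset.eq_univ_of_forall h))
    rw [← cellProb_mergeAbove (c' := c) he]
    exact (hslice x hx j).2 e
      (Finset.mem_powersetCard.2 ⟨by simpa [Finset.subset_compl_singleton] using hj, he⟩)
  have hW : MeasurableSet[cylinderEvents (retained D L)] (N ∩ agreeSet L c) :=
    (cylinderEvents_mono (fun p hp => Or.inl hp) _ hN).inter
      (measurableSet_agreeSet (fun p hp => Or.inr hp) c)
  by_contra hN₀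
  refine measure_inter_agreeSet_ne_zero hμ hL hN hcell hN₀
    (measure_eq_zero_of_measureReal_diff_le hnull hθ fun j => ?_)
  refine measureReal_sdiff_slice_le hμ hL (cylinderEvents_mono Set.inter_subset_right _ (hQ j)) hW
    fun x hx => ?_
  rw [← sliceProb_mergeAbove hL hx.2]
  exact (hslice x hx.1 j).1

end Exchangeable


theorem ae_forall_cellProb_pos (μ : Measure (BitArray κ)) [IsProbabilityMeasure μ]
    (L : Finset (ArrayIndex κ)) : ∀ᵐ x ∂μ, ∀ e, 0 < cellProb μ L e x x := by
  refine ae_all_iff.2 fun e => ?_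
  obtain ⟨P, hP⟩ := exists_finset_forall_exists_eqOn (X := fun _ => Bool) L
  refine measure_mono_null (t := ⋃ a ∈ P, agreeSet {p ∈ L | rootSet p = e} a ∩
    {x | cellProb μ L e a x ≤ 0}) (fun x hx => ?_) ?_
  · obtain ⟨a, ha, hax⟩ := hP x
    refine Set.mem_biUnion ha ⟨fun p hp => (hax p (Finset.mem_filter.1 hp).1).symm, ?_⟩
    rw [Set.mem_ofPred_eq, cellProb_congr fun p hp _ => hax p hp]
    exact not_lt.1 hx
  · exact (measure_biUnion_null_iff P.countable_toSet).2 fun a _ =>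
      measure_inter_condProb_nonpos cylinderEvents_le_pi
        (cylinderEvents_le_pi _ (measurableSet_cell L e a))

variable [IsProbabilityMeasure μ]

theorem measureReal_sdiff_refinement_le {P : Finset (BitArray κ)}
    (hP : ∀ x : BitArray κ, ∃ a ∈ P, ∀ p ∈ I, a p = x p)
    (hQ : MeasurableSet[cylinderEvents (retained (D + 1) I ∩ indicesWithin {j}ᶜ)] Q) :
    μ.real (Q \ refinement μ θ D L j Q) ≤ ∑ a ∈ P,
      μ.real (mergeAbove (D + 1) a ⁻¹' Q ∩ {x | sliceProb μ D L j Q a x ≤ θ}) := by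
  refine le_trans ?_ (measureReal_biUnion_finset_le P _)
  refine ENNReal.toReal_mono (measure_ne_top _ _) (measure_mono_ae ?_)
  filter_upwards [ae_forall_cellProb_pos μ L] with x hcell
  rintro ⟨hxQ, hxR⟩
  have hslice : sliceProb μ D L j Q x x ≤ θ := not_lt.1 fun h => hxR ⟨h, fun e _ => hcell e⟩
  obtain ⟨a, ha, hax⟩ := hP x
  refine Set.mem_biUnion ha ⟨?_, ?_⟩
  · rw [preimage_mergeAbove_congr hQ fun p hp hD => hax p (hp.1.resolve_left hD.not_gt)]
    rwa [Set.mem_preimage, mergeAbove_self]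
  · rwa [Set.mem_ofPred_eq, sliceProb_congr hQ fun p hp _ => hax p hp]

theorem exists_finset_integral_abs_sliceProb_sub_lt {Q : κ → Set (BitArray κ)}
    (hQ : ∀ j, MeasurableSet[cylinderEvents (indicesWithin {j}ᶜ)] (Q j))
    (P : Finset (BitArray κ)) {η : ℝ} (hη : 0 < η) :
    ∃ L : Finset (ArrayIndex κ), (∀ p ∈ L, #(rootSet p) = D) ∧ ∀ j, ∀ a ∈ P,
      ∫ x, |sliceProb μ D L j (Q j) a x -
        (mergeAbove (D + 1) a ⁻¹' Q j).indicator (fun _ => (1 : ℝ)) x| ∂μ < η := by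
  let level (n : ℕ) : Finset (ArrayIndex κ) :=
    {p ∈ (finite_indicesUpTo n).toFinset | #(rootSet p) = D}
  have hmono (j : κ) : Monotone fun n => retained D (level n) ∩ indicesWithin {j}ᶜ :=
    fun n n' h => Set.inter_subset_inter_left _ <| retained_mono <|
      Finset.filter_subset_filter _ (Set.Finite.toFinset_mono (monotone_indicesUpTo h))
  have hlim (j : κ) (a : BitArray κ) : ∀ᶠ n in atTop,
      ∫ x, |sliceProb μ D (level n) j (Q j) a x -
        (mergeAbove (D + 1) a ⁻¹' Q j).indicator (fun _ => (1 : ℝ)) x| ∂μ < η := by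
    have hslice := measurableSet_preimage_mergeAbove (D + 1) a (hQ j)
    have hsup : ⨆ n, cylinderFiltration (X := fun _ => Bool) _ (hmono j) n =
        cylinderEvents (indicesWithin {j}ᶜ ∩ {p | #(rootSet p) < D + 1}) := by
      refine (iSup_cylinderEvents _).trans ?_
      rw [← Set.iUnion_inter, iUnion_retained_indicesUpTo, Set.inter_comm]
    exact (tendsto_integral_abs_condExp_sub (cylinderFiltration _ (hmono j))
      ((integrable_const (1 : ℝ)).indicator (cylinderEvents_le_pi _ hslice))
      (hsup ▸ stronglyMeasurable_const.indicator hslice)).eventually_lt_const hη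
  obtain ⟨n, hn⟩ := (eventually_all.2 fun j =>
    (eventually_all_finset P).2 fun a _ => hlim j a).exists
  exact ⟨level n, fun p hp => (Finset.mem_filter.1 hp).2, hn⟩

theorem IsNullAtLevel.exists_of_succ (hμ : IsExchangeable μ) (hD : D < Fintype.card κ)
    {Q : κ → Set (BitArray κ)} (hQ : IsNullAtLevel μ (D + 1) Q) {ε : ℝ} (hε : 0 < ε) :
    ∃ F, IsNullAtLevel μ D F ∧ ∀ j, μ.real (Q j \ F j) ≤ ε := by
  obtain ⟨⟨I, hI, hQm⟩, hnull⟩ := hQ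
  obtain ⟨P, hP⟩ := exists_finset_forall_exists_eqOn (X := fun _ => Bool) I
  set τ : ℝ := 1 / (Fintype.card κ + 1)
  have hτ : 0 < τ := by positivity
  have hQj (j : κ) : MeasurableSet[cylinderEvents (indicesWithin {j}ᶜ)] (Q j) :=
    cylinderEvents_mono Set.inter_subset_right _ (hQm j)
  obtain ⟨L, hL, hlt⟩ := exists_finset_integral_abs_sliceProb_sub_lt (μ := μ) (D := D) hQj P
    (η := τ * (ε / (#P + 1))) (by positivity)
  have hloss (j : κ) (a : BitArray κ) (ha : a ∈ P) : μ.real (mergeAbove (D + 1) a ⁻¹' Q j ∩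
      {x | sliceProb μ D L j (Q j) a x ≤ 1 - τ}) ≤ ε / (#P + 1) := by
    have hslice := cylinderEvents_le_pi _ (measurableSet_preimage_mergeAbove (D + 1) a (hQj j))
    have hle := (mul_measureReal_inter_le_integral_abs_sub hslice
      (stronglyMeasurable_sliceProb.mono cylinderEvents_le_pi).measurable
      integrable_condExp (1 - τ)).trans (hlt j a ha).le
    rw [sub_sub_cancel] at hle
    exact le_of_mul_le_mul_left hle hτ
  refine ⟨fun j => refinement μ (1 - τ) D L j (Q j), ⟨⟨I ∪ L, fun p hp => ?_,
    fun j => measurableSet_refinement (hQm j)⟩, fun c => ?_⟩, fun j => ?_⟩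
  · exact (Finset.mem_union.1 hp).elim (fun h => Nat.le_of_succ_le (hI p h)) fun h => (hL p h).ge
  · refine measure_iInter_mergeAbove_refinement_eq_zero hμ hD ?_ hI hL hQm (hnull c)
    rw [sub_sub_cancel, mul_one_div, div_lt_one (by positivity)]
    exact lt_add_one _
  · calc μ.real (Q j \ refinement μ (1 - τ) D L j (Q j))
        ≤ ∑ _a ∈ P, ε / (#P + 1) :=
          (measureReal_sdiff_refinement_le hP (hQm j)).trans (Finset.sum_le_sum (hloss j))
      _ = #P / (#P + 1) * ε := by rw [Finset.sum_const, nsmul_eq_mul]; ring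
      _ ≤ ε := mul_le_of_le_one_left hε.le ((div_le_one (by positivity)).2 (by linarith))

theorem IsNullAtLevel.exists_zero (hμ : IsExchangeable μ) (hD : D ≤ Fintype.card κ)
    {Q : κ → Set (BitArray κ)} (hQ : IsNullAtLevel μ D Q) {ε : ℝ} (hε : 0 < ε) :
    ∃ F, IsNullAtLevel μ 0 F ∧ ∀ j, μ.real (Q j \ F j) ≤ ε := by
  induction D generalizing Q ε with
  | zero => exact ⟨Q, hQ, fun j => by simpa using hε.le⟩
  | succ D ih =>
    obtain ⟨R, hR, hQR⟩ := hQ.exists_of_succ hμ hD (half_pos hε)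
    obtain ⟨F, hF, hRF⟩ := ih (Nat.le_of_succ_le hD) hR (half_pos hε)
    refine ⟨F, hF, fun j => ?_⟩
    calc μ.real (Q j \ F j) ≤ μ.real (Q j \ R j ∪ R j \ F j) :=
          measureReal_mono (sdiff_triangle _ _ _)
      _ ≤ ε / 2 + ε / 2 := (measureReal_union_le _ _).trans (add_le_add (hQR j) (hRF j))
      _ = ε := add_halves ε

end LevelRefinement

section Removal

variable {κ : Type*}

theorem continuous_permute (s : κ → Equiv.Perm ℕ) : Continuous (permute s) :=
  continuous_pi fun p => continuous_apply (permuteIndex s p)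

theorem isClosed_setOf_isExchangeable [Finite κ] :
    IsClosed {μ : ProbabilityMeasure (BitArray κ) | IsExchangeable (μ : Measure (BitArray κ))} := by
  have heq : {μ : ProbabilityMeasure (BitArray κ) | IsExchangeable (μ : Measure (BitArray κ))} =
      ⋂ s, {μ | μ.map (continuous_permute s).measurable.aemeasurable = μ} := by
    ext μ
    simp only [Set.mem_ofPred_eq, Set.mem_iInter]
    exact forall_congr' fun s => ⟨fun h => Subtype.ext h.map_eq, fun h =>
      ⟨(continuous_permute s).measurable, congrArg Subtype.val h⟩⟩
  rw [heq]
  exact isClosed_iInter fun s => isClosed_eq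
    (ProbabilityMeasure.continuous_map (continuous_permute s)) continuous_id

theorem continuous_measureReal_of_isClopen {Ω : Type*} [TopologicalSpace Ω] [MeasurableSpace Ω]
    [OpensMeasurableSpace Ω] [HasOuterApproxClosed Ω] {A : Set Ω} (hA : IsClopen A) :
    Continuous fun μ : ProbabilityMeasure Ω => (μ : Measure Ω).real A :=
  continuous_iff_continuousAt.2 fun _ => (NNReal.continuous_coe.tendsto _).comp
    (ProbabilityMeasure.tendsto_measure_of_isClopen_of_tendsto tendsto_id hA)

variable [Fintype κ] [DecidableEq κ] {Q : κ → Set (BitArray κ)}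

theorem isNullAtLevel_card {μ : Measure (BitArray κ)}
    (hQ : ∀ j, MeasurableSet[cylinderEvents (indicesWithin {j}ᶜ)] (Q j))
    (hnull : μ (⋂ j, Q j) = 0) : IsNullAtLevel μ (Fintype.card κ) Q := by
  have hcard (j : κ) (p : ArrayIndex κ) (hp : p ∈ indicesWithin {j}ᶜ) :
      (rootSet p).card < Fintype.card κ :=
    Finset.card_lt_univ_of_notMem (x := j) fun h => by simpa using hp h
  refine ⟨⟨∅, by simp, fun j => ?_⟩, fun c => ?_⟩
  · exact cylinderEvents_mono
      (Set.subset_inter (fun p hp => Or.inl (hcard j p hp)) subset_rfl) _ (hQ j)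
  · have hpre (j : κ) : mergeAbove (Fintype.card κ) c ⁻¹' Q j = Q j :=
      Set.ext fun y => mem_iff_mem_of_eqOn (hQ j) fun p hp => mergeAbove_of_lt (hcard j p hp)
    simpa only [hpre] using hnull

theorem IsNullAtLevel.iInter_eq_empty {μ : Measure (BitArray κ)} [NeZero μ]
    (hQ : IsNullAtLevel μ 0 Q) : ⋂ j, Q j = ∅ := by
  refine Set.eq_empty_of_forall_notMem fun c hc => NeZero.ne (μ Set.univ) ?_
  have hmerge (y : BitArray κ) : mergeAbove 0 c y = c := funext fun _ => if_pos (Nat.zero_le _)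
  have huniv : ⋂ j, mergeAbove 0 c ⁻¹' Q j = Set.univ :=
    Set.eq_univ_of_forall fun y => Set.mem_iInter.2 fun j => by
      rw [Set.mem_preimage, hmerge]
      exact Set.mem_iInter.1 hc j
  rw [← huniv]
  exact hQ.measure_iInter_eq_zero c

theorem IsNullAtLevel.isClopen {μ : Measure (BitArray κ)} (hQ : IsNullAtLevel μ 0 Q) (j : κ) :
    IsClopen (Q j) := by
  obtain ⟨I, -, hI⟩ := hQ.exists_measurableSet
  refine isClopen_of_measurableSet_cylinderEvents ?_ (hI j)
  exact I.finite_toSet.subset fun p hp => hp.1.resolve_left (Nat.not_lt_zero _)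

/-- Deleting less than `ε` from each `Q j` can make the intersection of all of them empty. What
remains is covered by a clopen event that, like `Q j`, ignores the root of class `j`. -/
def IsRemovable (μ : Measure (BitArray κ)) (ε : ℝ) (Q : κ → Set (BitArray κ)) : Prop :=
  ∃ F : κ → Set (BitArray κ), (∀ j, IsClopen (F j)) ∧
    (∀ j, MeasurableSet[cylinderEvents (indicesWithin {j}ᶜ)] (F j)) ∧
    ⋂ j, F j = ∅ ∧ ∀ j, μ.real (Q j \ F j) < ε

theorem IsExchangeable.isRemovable_of_measure_eq_zero {μ : Measure (BitArray κ)}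
    [IsProbabilityMeasure μ] (hμ : IsExchangeable μ)
    (hQ : ∀ j, MeasurableSet[cylinderEvents (indicesWithin {j}ᶜ)] (Q j))
    (hnull : μ (⋂ j, Q j) = 0) {ε : ℝ} (hε : 0 < ε) : IsRemovable μ ε Q := by
  obtain ⟨F, hF, hlt⟩ := (isNullAtLevel_card hQ hnull).exists_zero hμ le_rfl (half_pos hε)
  obtain ⟨I, -, hI⟩ := hF.exists_measurableSet
  exact ⟨F, hF.isClopen, fun j => cylinderEvents_mono Set.inter_subset_right _ (hI j),
    hF.iInter_eq_empty, fun j => (hlt j).trans_lt (half_lt_self hε)⟩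

theorem isOpen_setOf_isRemovable (hclopen : ∀ j, IsClopen (Q j)) (ε : ℝ) :
    IsOpen {μ : ProbabilityMeasure (BitArray κ) | IsRemovable (μ : Measure (BitArray κ)) ε Q} := by
  refine isOpen_iff_mem_nhds.2 ?_
  rintro μ ⟨F, hF, hFm, hempty, hlt⟩
  have hnear (j : κ) : ∀ᶠ ν : ProbabilityMeasure (BitArray κ) in 𝓝 μ,
      (ν : Measure (BitArray κ)).real (Q j \ F j) < ε :=
    (continuous_measureReal_of_isClopen
      ((hclopen j).diff (hF j))).continuousAt.eventually_lt_const (hlt j)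
  filter_upwards [eventually_all.2 hnear] with ν hν using ⟨F, hF, hFm, hempty, hν⟩

theorem exists_forall_isRemovable_of_measureReal_lt (hclopen : ∀ j, IsClopen (Q j))
    (hQ : ∀ j, MeasurableSet[cylinderEvents (indicesWithin {j}ᶜ)] (Q j)) {ε : ℝ} (hε : 0 < ε) :
    ∃ ε' > 0, ∀ (μ : Measure (BitArray κ)) [IsProbabilityMeasure μ], IsExchangeable μ →
      μ.real (⋂ j, Q j) < ε' → IsRemovable μ ε Q := by
  set bad := {μ : ProbabilityMeasure (BitArray κ) | IsExchangeable (μ : Measure (BitArray κ))} \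
    {μ | IsRemovable (μ : Measure (BitArray κ)) ε Q}
  have hbad : IsCompact bad :=
    (isClosed_setOf_isExchangeable.sdiff (isOpen_setOf_isRemovable hclopen ε)).isCompact
  rcases bad.eq_empty_or_nonempty with hempty | hne
  · refine ⟨1, one_pos, fun μ _ hμ _ => by_contra fun hrem => ?_⟩
    exact Set.eq_empty_iff_forall_notMem.1 hempty ⟨μ, inferInstance⟩ ⟨hμ, hrem⟩
  · obtain ⟨ν, ⟨hνexch, hνrem⟩, hmin⟩ := hbad.exists_isMinOn hne
      (continuous_measureReal_of_isClopen (isClopen_iInter_of_finite hclopen)).continuousOn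
    refine ⟨(ν : Measure (BitArray κ)).real (⋂ j, Q j), measureReal_nonneg.lt_of_ne' fun h => ?_,
      fun μ _ hμ hlt => by_contra fun hrem => ?_⟩
    · exact hνrem (hνexch.isRemovable_of_measure_eq_zero hQ ((measureReal_eq_zero_iff).1 h) hε)
    · exact hlt.not_ge (hmin (a := (⟨μ, inferInstance⟩ : ProbabilityMeasure _)) ⟨hμ, hrem⟩)

end Removal

section ProbHaar

variable (H : Type*) [AddCommGroup H] [TopologicalSpace H] [IsTopologicalAddGroup H]
  [CompactSpace H] [MeasurableSpace H] [BorelSpace H]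

/-- The normalized Haar measure of a compact abelian group. -/
noncomputable def probHaar : Measure H :=
  Measure.addHaarMeasure (⊤ : TopologicalSpace.PositiveCompacts H)

instance : (probHaar H).IsAddHaarMeasure :=
  inferInstanceAs (Measure.addHaarMeasure _).IsAddHaarMeasure

instance : IsProbabilityMeasure (probHaar H) :=
  ⟨by simpa [probHaar] using
    Measure.addHaarMeasure_self (K₀ := (⊤ : TopologicalSpace.PositiveCompacts H))⟩

variable {H}

theorem measureReal_preimage_probHaar {H' : Type*} [AddCommGroup H'] [TopologicalSpace H']
    [IsTopologicalAddGroup H'] [CompactSpace H'] [MeasurableSpace H'] [BorelSpace H']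
    [SecondCountableTopology H'] {f : H →+ H'} (hf : Continuous f) (hsurj : Function.Surjective f)
    {B : Set H'} (hB : MeasurableSet B) :
    (probHaar H).real (f ⁻¹' B) = (probHaar H').real B :=
  (f.measurePreserving (μ := probHaar H) (ν := probHaar H') hf hsurj
    (by simp)).measureReal_preimage hB.nullMeasurableSet

theorem probHaar_real_coe_finset [DiscreteTopology H] [Fintype H] (A : Finset H) :
    (probHaar H).real A = A.card / Fintype.card H := by
  have hsingle (a : H) : (probHaar H).real {a} = (probHaar H).real {0} := by
    have hpre : (a + ·) ⁻¹' ({a} : Set H) = {0} := by ext; simp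
    rw [measureReal_def, measureReal_def, ← measure_preimage_add _ a {a}, hpre]
  have hsum (B : Finset H) : (probHaar H).real B = B.card * (probHaar H).real {0} := by
    rw [← sum_measureReal_singleton, Finset.sum_congr rfl fun a _ => hsingle a,
      Finset.sum_const, nsmul_eq_mul]
  have hone : Fintype.card H * (probHaar H).real {0} = 1 := by
    simpa using (hsum Finset.univ).symm
  rw [hsum, eq_div_iff (by simp), mul_right_comm, mul_assoc, hone, mul_one]

theorem measureReal_preimage_probHaar_pi {ι : Type*} [Countable ι] [SecondCountableTopology H]
    {Δ : Set ι} {f : (ι → H) →+ (ι → H)} (hf : Continuous f)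
    (hsurj : ∀ x : ι → H, ∃ y, ∀ i ∈ Δ, f y i = x i) {B : Set (ι → H)}
    (hB : MeasurableSet[cylinderEvents Δ] B) :
    (probHaar (ι → H)).real (f ⁻¹' B) = (probHaar (ι → H)).real B := by
  rw [cylinderEvents_eq_comap_domRestrict] at hB
  obtain ⟨C, hC, rfl⟩ := hB
  let π : (ι → H) →+ (Δ → H) := AddMonoidHom.mk' Δ.domRestrict fun _ _ => rfl
  have hπ : Continuous π := Pi.continuous_domRestrict Δ
  have hπsurj : Function.Surjective π := fun w =>
    ⟨fun i => if hi : i ∈ Δ then w ⟨i, hi⟩ else 0, funext fun i => dif_pos i.2⟩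
  have hπf : Function.Surjective (π.comp f) := fun w => by
    obtain ⟨x, rfl⟩ := hπsurj w
    obtain ⟨y, hy⟩ := hsurj x
    exact ⟨y, funext fun i => hy i i.2⟩
  exact (measureReal_preimage_probHaar (f := π.comp f) (hπ.comp hf) hπf hC).trans
    (measureReal_preimage_probHaar hπ hπsurj hC).symm

end ProbHaar

section Progressions

variable {G : Type*} [AddCommGroup G] {k : ℕ}

/-- The `k`-term arithmetic progressions in `A`, including degenerate ones, as pairs of a first
term and a common difference. -/
noncomputable def progressions [Fintype G] (k : ℕ) (A : Finset G) : Finset (G × G) :=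
  {q | ∀ i < k, q.1 + i • q.2 ∈ A}

theorem mem_progressions [Fintype G] {A : Finset G} {q : G × G} :
    q ∈ progressions k A ↔ ∀ i < k, q.1 + i • q.2 ∈ A := by
  simp [progressions]

theorem progressions_anti [Fintype G] (A : Finset G) : Antitone fun k => progressions k A :=
  fun _ _ h _ hq => mem_progressions.2 fun i hi => mem_progressions.1 hq i (hi.trans_le h)

/-- The linear form `∑ i, (i - j) • x i`, where the array label `j` is the first component of `p`
and `x i` is the group element at the vertex of `p` in class `i`. -/
def form (p : ArrayIndex (Fin k)) (x : Fin k × ℕ → G) : G :=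
  ∑ i : Fin k, ((i : ℤ) - (p.1 : ℤ)) • x (i, p.2 i)

/-- The array recording which of the linear forms take values in `A`. -/
noncomputable def bits (A : Finset G) (x : Fin k × ℕ → G) : BitArray (Fin k) :=
  fun p => decide (form p x ∈ A)

/-- The position in the array `j` that uses the root of every class except `j`, where the vertex
is irrelevant to the linear form. -/
def mainIndex (j : Fin k) : ArrayIndex (Fin k) := (j, fun i => if i = j then 1 else 0)

/-- The event that the linear form `j` at the roots takes its value in the given set. -/
def mainEvent (j : Fin k) : Set (BitArray (Fin k)) := {x | x (mainIndex j) = true}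

theorem isClopen_mainEvent (j : Fin k) : IsClopen (mainEvent j) :=
  (isClopen_discrete {true}).preimage (continuous_apply (mainIndex j))

theorem measurableSet_mainEvent (j : Fin k) :
    MeasurableSet[cylinderEvents (indicesWithin {j}ᶜ)] (mainEvent j) := by
  have hmem : mainIndex j ∈ indicesWithin {j}ᶜ := fun i hi => by
    simpa [mainIndex, mem_rootSet] using hi
  exact measurable_cylinderEvent_apply (X := fun _ => Bool) hmem (measurableSet_singleton true)

/-- The sum of the group elements at the roots. -/
def rootSum : (Fin k × ℕ → G) →+ G := ∑ i, Pi.evalAddMonoidHom (fun _ => G) (i, 0)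

/-- The sum of the group elements at the roots, weighted by the number of the class. -/
def weightedRootSum : (Fin k × ℕ → G) →+ G :=
  ∑ i : Fin k, (i : ℕ) • Pi.evalAddMonoidHom (fun _ => G) (i, 0)

theorem rootSum_apply (x : Fin k × ℕ → G) : rootSum x = ∑ i, x (i, 0) := by
  simp [rootSum]

theorem weightedRootSum_apply (x : Fin k × ℕ → G) :
    weightedRootSum x = ∑ i : Fin k, (i : ℕ) • x (i, 0) := by
  simp [weightedRootSum]

theorem rootSum_single (j : Fin k) (a : G) : rootSum (Pi.single (j, 0) a) = a := by
  simp [rootSum_apply, Pi.single_apply]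

theorem weightedRootSum_single (j : Fin k) (a : G) :
    weightedRootSum (Pi.single (j, 0) a) = (j : ℕ) • a := by
  simp [weightedRootSum_apply, Pi.single_apply]

theorem form_mainIndex (j : Fin k) (x : Fin k × ℕ → G) :
    form (mainIndex j) x = weightedRootSum x + (j : ℕ) • -rootSum x := by
  rw [weightedRootSum_apply, rootSum_apply, smul_neg, Finset.smul_sum, ← sub_eq_add_neg,
    ← Finset.sum_sub_distrib]
  refine Finset.sum_congr rfl fun i _ => ?_
  rcases eq_or_ne i j with rfl | hij
  · simp [mainIndex]
  · simp [mainIndex, hij, sub_smul]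

theorem bits_mem_mainEvent {A : Finset G} {x : Fin k × ℕ → G} {j : Fin k} :
    bits A x ∈ mainEvent j ↔ weightedRootSum x + (j : ℕ) • -rootSum x ∈ A := by
  rw [← form_mainIndex]
  exact decide_eq_true_iff

/-- The projection to the points with vanishing root sum that only changes the root of class
`j`. -/
def balance (j : Fin k) : (Fin k × ℕ → G) →+ (Fin k × ℕ → G) :=
  AddMonoidHom.id _ - (AddMonoidHom.single (fun _ => G) (j, 0)).comp rootSum

theorem balance_apply (j : Fin k) (x : Fin k × ℕ → G) :
    balance j x = x - Pi.single (j, 0) (rootSum x) := rfl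

theorem rootSum_balance (j : Fin k) (x : Fin k × ℕ → G) : rootSum (balance j x) = 0 := by
  rw [balance_apply, map_sub, rootSum_single, sub_self]

theorem balance_of_rootSum_eq_zero (j : Fin k) {x : Fin k × ℕ → G} (hx : rootSum x = 0) :
    balance j x = x := by
  rw [balance_apply, hx, Pi.single_zero, sub_zero]

theorem balance_apply_of_ne {j : Fin k} {q : Fin k × ℕ} (hq : q ≠ (j, 0)) (x : Fin k × ℕ → G) :
    balance j x q = x q := by
  rw [balance_apply, Pi.sub_apply, Pi.single_eq_of_ne hq, sub_zero]

theorem weightedRootSum_balance_zero (x : Fin (k + 1) × ℕ → G) :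
    weightedRootSum (balance 0 x) = weightedRootSum x := by
  rw [balance_apply, map_sub, weightedRootSum_single]
  simp

theorem weightedRootSum_surjective :
    Function.Surjective (weightedRootSum : (Fin (k + 2) × ℕ → G) → G) :=
  fun a => ⟨Pi.single (1, 0) a, by simp [weightedRootSum_single]⟩

theorem weightedRootSum_prod_neg_rootSum_surjective :
    Function.Surjective (weightedRootSum.prod (-rootSum) : (Fin (k + 2) × ℕ → G) →+ G × G) :=
  fun q => ⟨Pi.single (1, 0) q.1 + Pi.single (0, 0) (-q.2 - q.1), by
    ext <;> simp [weightedRootSum_single, rootSum_single]⟩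

variable [TopologicalSpace G] [DiscreteTopology G]

theorem continuous_rootSum : Continuous (rootSum : (Fin k × ℕ → G) → G) := by
  simp only [funext rootSum_apply]
  fun_prop

theorem continuous_weightedRootSum : Continuous (weightedRootSum : (Fin k × ℕ → G) → G) := by
  simp only [funext weightedRootSum_apply]
  fun_prop

theorem continuous_balance (j : Fin k) :
    Continuous (balance j : (Fin k × ℕ → G) → Fin k × ℕ → G) :=
  continuous_id.sub ((continuous_single (j, 0)).comp continuous_rootSum)

section Law

variable [Finite G] [MeasurableSpace G] [BorelSpace G]

theorem measurable_bits_apply {Δ : Set (Fin k × ℕ)} (A : Finset G) {p : ArrayIndex (Fin k)}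
    (hp : ∀ i, (i, p.2 i) ∈ Δ) :
    Measurable[cylinderEvents Δ] fun x : Fin k × ℕ → G => bits A x p := by
  have hform : Measurable[cylinderEvents Δ] (form p : (Fin k × ℕ → G) → G) :=
    Finset.measurable_fun_sum _ fun i _ => (measurable_of_finite _).comp
      (measurable_cylinderEvent_apply (X := fun _ => G) (hp i))
  exact (measurable_of_finite fun g : G => decide (g ∈ A)).comp hform

theorem measurable_bits (A : Finset G) :
    Measurable (bits A : (Fin k × ℕ → G) → BitArray (Fin k)) :=
  measurable_pi_iff.2 fun _ =>
    (measurable_bits_apply A fun _ => Set.mem_univ _).mono cylinderEvents_le_pi le_rfl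

theorem measurableSet_preimage_bits (A : Finset G) {j : Fin k} {B : Set (BitArray (Fin k))}
    (hB : MeasurableSet[cylinderEvents (indicesWithin {j}ᶜ)] B) :
    MeasurableSet[cylinderEvents ({(j, 0)}ᶜ : Set (Fin k × ℕ))]
      (bits A ⁻¹' B : Set (Fin k × ℕ → G)) := by
  refine measurable_cylinderEvents_iff.2 (fun p hp => measurable_bits_apply A fun i h => ?_) hB
  obtain ⟨rfl, hroot⟩ := Prod.mk.inj h
  simpa using hp (mem_rootSet.2 hroot)

/-- The law of the array `bits A` at a uniformly random point. -/
noncomputable def law (A : Finset G) : Measure (BitArray (Fin k)) :=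
  (probHaar (Fin k × ℕ → G)).map (bits A)

instance (A : Finset G) : IsProbabilityMeasure (law A : Measure (BitArray (Fin k))) :=
  Measure.isProbabilityMeasure_map (measurable_bits A).aemeasurable

theorem law_real_apply (A : Finset G) {B : Set (BitArray (Fin k))} (hB : MeasurableSet B) :
    (law A).real B = (probHaar (Fin k × ℕ → G)).real (bits A ⁻¹' B) :=
  map_measureReal_apply (measurable_bits A) hB

theorem isExchangeable_law (A : Finset G) :
    IsExchangeable (law A : Measure (BitArray (Fin k))) := by
  intro s
  let relabel : (Fin k × ℕ → G) →+ (Fin k × ℕ → G) :=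
    AddMonoidHom.mk' (fun x q => x (q.1, s q.1 q.2)) fun _ _ => rfl
  have hcont : Continuous relabel := continuous_pi fun q => continuous_apply _
  have hsurj : Function.Surjective relabel := fun x =>
    ⟨fun q => x (q.1, (s q.1).symm q.2), funext fun q => by simp [relabel]⟩
  have hpres : MeasurePreserving relabel (probHaar (Fin k × ℕ → G)) (probHaar _) :=
    relabel.measurePreserving hcont hsurj (by simp)
  have hmeas : Measurable (permute s : BitArray (Fin k) → _) := (continuous_permute s).measurable
  refine ⟨hmeas, ?_⟩
  calc (law A).map (permute s)
      = ((probHaar _).map relabel).map (bits A) := by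
        rw [law, Measure.map_map hmeas (measurable_bits A),
          Measure.map_map (measurable_bits A) hpres.measurable]
        rfl
    _ = law A := by rw [hpres.map_eq, law]

theorem measureReal_preimage_balance (A : Finset G) (i : Fin k) {j : Fin k}
    {B : Set (BitArray (Fin k))} (hB : MeasurableSet[cylinderEvents (indicesWithin {j}ᶜ)] B) :
    (probHaar (Fin k × ℕ → G)).real (balance i ⁻¹' (bits A ⁻¹' B)) = (law A).real B := by
  rw [law_real_apply A (cylinderEvents_le_pi _ hB)]
  refine measureReal_preimage_probHaar_pi (continuous_balance i) (fun x => ⟨balance j x, ?_⟩)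
    (measurableSet_preimage_bits A hB)
  intro q hq
  rw [balance_of_rootSum_eq_zero i (rootSum_balance j x), balance_apply_of_ne hq]

end Law

variable [Fintype G] [MeasurableSpace G] [BorelSpace G]

theorem law_real_iInter_mainEvent (A : Finset G) :
    (law A).real (⋂ j : Fin (k + 2), mainEvent j) =
      (progressions (k + 2) A).card / (Fintype.card G : ℝ) ^ 2 := by
  have hpre : bits A ⁻¹' ⋂ j : Fin (k + 2), mainEvent j =
      (weightedRootSum.prod (-rootSum) : (Fin (k + 2) × ℕ → G) →+ G × G) ⁻¹'
        (progressions (k + 2) A) := by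
    ext x
    simp [bits_mem_mainEvent, mem_progressions, Fin.forall_iff]
  have hcont : Continuous (weightedRootSum.prod (-rootSum) : (Fin (k + 2) × ℕ → G) →+ G × G) :=
    continuous_weightedRootSum.prodMk continuous_rootSum.neg
  rw [law_real_apply A (.iInter fun j => (isClopen_mainEvent j).isOpen.measurableSet), hpre,
    measureReal_preimage_probHaar hcont weightedRootSum_prod_neg_rootSum_surjective
      (Finset.measurableSet _), probHaar_real_coe_finset]
  simp [sq]

theorem card_div_card_le_sum_law_real_diff (A : Finset G)
    {F : Fin (k + 2) → Set (BitArray (Fin (k + 2)))}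
    (hF : ∀ j, MeasurableSet[cylinderEvents (indicesWithin {j}ᶜ)] (F j)) (hempty : ⋂ j, F j = ∅) :
    (A.card : ℝ) / Fintype.card G ≤ ∑ j, (law A).real (mainEvent j \ F j) := by
  have hcover : weightedRootSum ⁻¹' (A : Set G) ⊆
      ⋃ j, balance 0 ⁻¹' (bits A ⁻¹' (mainEvent j \ F j)) := by
    intro x hx
    obtain ⟨j, hj⟩ : ∃ j, bits A (balance 0 x) ∉ F j := by
      simpa using Set.eq_empty_iff_forall_notMem.1 hempty (bits A (balance 0 x))
    refine Set.mem_iUnion.2 ⟨j, bits_mem_mainEvent.2 ?_, hj⟩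
    simpa [rootSum_balance, weightedRootSum_balance_zero] using hx
  calc (A.card : ℝ) / Fintype.card G
      = (probHaar (Fin (k + 2) × ℕ → G)).real (weightedRootSum ⁻¹' (A : Set G)) := by
        rw [measureReal_preimage_probHaar continuous_weightedRootSum weightedRootSum_surjective
          (Finset.measurableSet A), probHaar_real_coe_finset]
    _ ≤ ∑ j, (probHaar _).real (balance 0 ⁻¹' (bits A ⁻¹' (mainEvent j \ F j))) :=
        (measureReal_mono hcover).trans (measureReal_iUnion_fintype_le _)
    _ = ∑ j, (law A).real (mainEvent j \ F j) := Finset.sum_congr rfl fun j _ =>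
        measureReal_preimage_balance A 0 ((measurableSet_mainEvent j).diff (hF j))

end Progressions

theorem exists_le_card_progressions (k : ℕ) {δ : ℝ} (hδ : 0 < δ) :
    ∃ ε > 0, ∀ (G : Type*) [AddCommGroup G] [Fintype G] (A : Finset G),
      δ * Fintype.card G ≤ A.card → ε * (Fintype.card G : ℝ) ^ 2 ≤ (progressions k A).card := by
  obtain ⟨ε, hε, hremove⟩ := exists_forall_isRemovable_of_measureReal_lt
    (Q := mainEvent (k := k + 2)) isClopen_mainEvent measurableSet_mainEvent
    (by positivity : 0 < δ / (k + 2))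
  refine ⟨ε, hε, fun G _ _ A hA => le_of_not_gt fun hlt => ?_⟩
  let _ : TopologicalSpace G := ⊥
  have : DiscreteTopology G := ⟨rfl⟩
  let _ : MeasurableSpace G := ⊤
  have : BorelSpace G := ⟨borel_eq_top_of_discrete.symm⟩
  have hcard : (0 : ℝ) < Fintype.card G := by simp [Fintype.card_pos]
  have hsmall : (law A).real (⋂ j : Fin (k + 2), mainEvent j) < ε := by
    rw [law_real_iInter_mainEvent, div_lt_iff₀ (by positivity)]
    refine lt_of_le_of_lt ?_ hlt
    exact_mod_cast Finset.card_le_card (progressions_anti A (Nat.le_add_right k 2))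
  obtain ⟨F, -, hF, hempty, hdiff⟩ := hremove (law A) (isExchangeable_law A) hsmall
  refine lt_irrefl δ ?_
  calc δ ≤ A.card / Fintype.card G := (le_div_iff₀ hcard).2 hA
    _ ≤ ∑ j, (law A).real (mainEvent j \ F j) := card_div_card_le_sum_law_real_diff A hF hempty
    _ < ∑ _j : Fin (k + 2), δ / (k + 2) :=
        Finset.sum_lt_sum_of_nonempty Finset.univ_nonempty fun j _ => hdiff j
    _ = δ := by simp; field_simp

section Transfer

variable {n k N : ℕ} {A : Finset ℕ}

theorem card_image_natCast_zmod (hN : n < N) (hA : A ⊆ Finset.Icc 1 n) :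
    (A.image (Nat.cast : ℕ → ZMod N)).card = A.card := by
  have hlt (a : ℕ) (ha : a ∈ A) : a < N := (Finset.mem_Icc.1 (hA ha)).2.trans_lt hN
  refine Finset.card_image_of_injOn fun a ha b hb hab => ?_
  exact ((ZMod.natCast_eq_natCast_iff a b N).1 hab).eq_of_lt_of_lt (hlt a ha) (hlt b hb)

theorem eq_add_of_natCast_zmod_eq (hN : 2 * n ≤ N) {a b c d : ℕ} (ha : a ∈ Finset.Icc 1 n)
    (hb : b ∈ Finset.Icc 1 n) (hc : c ∈ Finset.Icc 1 n) (hd : d ∈ Finset.Icc 1 n)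
    (h : (b - a : ZMod N) = d - c) : (b : ℤ) = a + (d - c) := by
  rw [Finset.mem_Icc] at ha hb hc hd
  have hdvd : (N : ℤ) ∣ b - a - (d - c) := by
    rw [← ZMod.intCast_zmod_eq_zero_iff_dvd]
    push_cast
    rw [h, sub_self]
  have hzero := Int.eq_zero_of_abs_lt_dvd hdvd (by rw [abs_lt]; omega)
  omega

theorem exists_int_progression (hN : 2 * n ≤ N) (hk : 2 ≤ k) (hA : A ⊆ Finset.Icc 1 n)
    {q : ZMod N × ZMod N} (hq : ∀ i < k, q.1 + i • q.2 ∈ A.image Nat.cast) :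
    ∃ a d : ℤ, ((a : ZMod N), (d : ZMod N)) = q ∧ ∀ i < k, ∃ m ∈ A, (m : ℤ) = a + i * d := by
  simp only [Finset.mem_image] at hq
  choose! t htA ht using hq
  have hstep (i : ℕ) (hi : i + 1 < k) : (t (i + 1) : ℤ) = t i + (t 1 - t 0) := by
    refine eq_add_of_natCast_zmod_eq hN (hA (htA i (by omega))) (hA (htA _ hi))
      (hA (htA 0 (by omega))) (hA (htA 1 (by omega))) ?_
    rw [ht _ hi, ht i (by omega), ht 0 (by omega), ht 1 (by omega), succ_nsmul]
    simp
  have hlin (i : ℕ) (hi : i < k) : (t i : ℤ) = t 0 + i * (t 1 - t 0) := by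
    induction i with
    | zero => simp
    | succ i ih => rw [hstep i hi, ih (by omega)]; push_cast; ring
  refine ⟨t 0, t 1 - t 0, Prod.ext ?_ ?_, fun i hi => ⟨t i, htA i hi, hlin i hi⟩⟩
  · simp [ht 0 (by omega)]
  · simp [ht 0 (by omega), ht 1 (by omega)]

/-- The `k`-term arithmetic progressions in `A` with first term and common difference in
`{1, …, n}`. -/
noncomputable def natProgressions (k n : ℕ) (A : Finset ℕ) : Finset (ℕ × ℕ) :=
  (Finset.Icc 1 n ×ˢ Finset.Icc 1 n).filter (fun ad : ℕ × ℕ => ∀ i < k, ad.1 + i * ad.2 ∈ A)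

theorem exists_mem_natProgressions (hk : 2 ≤ k) (hA : A ⊆ Finset.Icc 1 n) {a d : ℤ} (hd : 0 < d)
    (h : ∀ i < k, ∃ m ∈ A, (m : ℤ) = a + i * d) :
    ∃ p ∈ natProgressions k n A, ((p.1 : ℤ), (p.2 : ℤ)) = (a, d) := by
  obtain ⟨a, ha, rfl⟩ : ∃ m ∈ A, (m : ℤ) = a := by simpa using h 0 (by omega)
  obtain ⟨b, hb, hbd⟩ : ∃ m ∈ A, (m : ℤ) = a + d := by simpa using h 1 (by omega)
  lift d to ℕ using hd.le
  refine ⟨(a, d), Finset.mem_filter.2 ⟨Finset.mk_mem_product (hA ha) ?_, fun i hi => ?_⟩, rfl⟩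
  · have := Finset.mem_Icc.1 (hA hb)
    exact Finset.mem_Icc.2 (by omega)
  · obtain ⟨m, hm, hmi⟩ := h i hi
    rwa [show a + i * d = m by exact_mod_cast hmi.symm]

theorem exists_mem_natProgressions_reverse (hk : 2 ≤ k) (hA : A ⊆ Finset.Icc 1 n) {a d : ℤ}
    (hd : d < 0) (h : ∀ i < k, ∃ m ∈ A, (m : ℤ) = a + i * d) :
    ∃ p ∈ natProgressions k n A, ((p.1 : ℤ), (p.2 : ℤ)) = (a + (k - 1) * d, -d) := by
  refine exists_mem_natProgressions hk hA (neg_pos.2 hd) fun i hi => ?_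
  obtain ⟨m, hm, hmi⟩ := h (k - 1 - i) (by omega)
  refine ⟨m, hm, hmi.trans ?_⟩
  rw [Nat.sub_sub, Nat.cast_sub (by omega)]
  push_cast
  ring

theorem card_progressions_image_natCast_le [NeZero N] (hN : 2 * n ≤ N) (hk : 2 ≤ k)
    (hA : A ⊆ Finset.Icc 1 n) :
    (progressions k (A.image (Nat.cast : ℕ → ZMod N))).card ≤
      n + 2 * (natProgressions k n A).card := by
  let constant : Finset (ZMod N × ZMod N) := A.image fun m : ℕ => ((m : ZMod N), 0)
  let increasing : Finset (ZMod N × ZMod N) := (natProgressions k n A).image fun p => (p.1, p.2)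
  let decreasing : Finset (ZMod N × ZMod N) :=
    (natProgressions k n A).image fun p => (p.1 + (k - 1) * p.2, -p.2)
  have hcover : progressions k (A.image (Nat.cast : ℕ → ZMod N)) ⊆
      constant ∪ (increasing ∪ decreasing) := by
    intro q hq
    obtain ⟨a, d, rfl, h⟩ := exists_int_progression hN hk hA (mem_progressions.1 hq)
    simp only [Finset.mem_union]
    rcases lt_trichotomy d 0 with hd | rfl | hd
    · obtain ⟨p, hp, hpad⟩ := exists_mem_natProgressions_reverse hk hA hd h
      obtain ⟨h1, h2⟩ := Prod.mk.inj hpad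
      refine .inr (.inr (Finset.mem_image.2 ⟨p, hp, ?_⟩))
      rw [← Int.cast_natCast p.1, ← Int.cast_natCast p.2, h1, h2]
      simp
    · obtain ⟨m, hm, rfl⟩ : ∃ m ∈ A, (m : ℤ) = a := by simpa using h 0 (by omega)
      exact .inl (Finset.mem_image.2 ⟨m, hm, by simp⟩)
    · obtain ⟨p, hp, hpad⟩ := exists_mem_natProgressions hk hA hd h
      obtain ⟨rfl, rfl⟩ := Prod.mk.inj hpad
      exact .inr (.inl (Finset.mem_image.2 ⟨p, hp, by simp⟩))
  have hconstant : constant.card ≤ n :=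
    Finset.card_image_le.trans (by simpa using Finset.card_le_card hA)
  have hincreasing : increasing.card ≤ (natProgressions k n A).card := Finset.card_image_le
  have hdecreasing : decreasing.card ≤ (natProgressions k n A).card := Finset.card_image_le
  have hunion := Finset.card_union_le constant (increasing ∪ decreasing)
  have hunion' := Finset.card_union_le increasing decreasing
  have hle := Finset.card_le_card hcover
  omega

end Transfer

end Varnavides

/-- Lemma 4.2 (Varnavides): a robust version of Szemerédi's theorem.  Every subset of
`{1, …, n}` of size at least `δn` contains at least `εn²` `k`-term arithmetic
progressions, counted as pairs `(a, d)` with `a, d ≥ 1`. -/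
theorem varnavides (δ : ℝ) (hδ : 0 < δ) (k : ℕ) (hk : 3 ≤ k) :
    ∃ ε : ℝ, 0 < ε ∧ ∃ n₀ : ℕ, ∀ n : ℕ, n₀ ≤ n →
      ∀ A ⊆ Finset.Icc 1 n, δ * (n : ℝ) ≤ (A.card : ℝ) →
        ε * (n : ℝ) ^ 2 ≤
          (((Finset.Icc 1 n ×ˢ Finset.Icc 1 n).filter
              (fun ad : ℕ × ℕ => ∀ i < k, ad.1 + i * ad.2 ∈ A)).card : ℝ) := by
  obtain ⟨ε, hε, hgroup⟩ := Varnavides.exists_le_card_progressions k (half_pos hδ)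
  refine ⟨ε, hε, ⌈1 / (2 * ε)⌉₊ + 1, fun n hn A hA hcard => ?_⟩
  have : NeZero (2 * n) := ⟨by omega⟩
  have hlarge : 1 ≤ n * (2 * ε) := (div_le_iff₀ (by positivity)).1 (Nat.ceil_le.1 (by omega))
  have hcyclic : ε * (2 * n : ℝ) ^ 2 ≤
      (Varnavides.progressions k (A.image (Nat.cast : ℕ → ZMod (2 * n)))).card := by
    have hdense := hgroup (ZMod (2 * n)) (A.image Nat.cast)
    rw [ZMod.card, Varnavides.card_image_natCast_zmod (by omega) hA] at hdense
    push_cast at hdense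
    exact hdense (by linarith)
  have htransfer : ((Varnavides.progressions k (A.image (Nat.cast : ℕ → ZMod (2 * n)))).card : ℝ) ≤
      n + 2 * (Varnavides.natProgressions k n A).card := by
    exact_mod_cast Varnavides.card_progressions_image_natCast_le le_rfl (by omega) hA
  have hn_le : (n : ℝ) ≤ 2 * ε * n ^ 2 := by
    linarith [mul_le_mul_of_nonneg_left hlarge n.cast_nonneg]
  change _ ≤ ((Varnavides.natProgressions k n A).card : ℝ)
  linarith
end

section
/- For every t-uniform hypergraph H (t ≥ 2) with at least t+1 vertices and at least one edge, and every positive real δ, there exists a positive constant C such that the following holds for every n ∈ ℕ: if m ≥ C·n^{t − 1/m_t(H)}, then binom(ex(n,H), m) ≤ f_{n,m}(H) ≤ binom(ex(n,H) + ⌈δ·n^t⌉, m), where f_{n,m}(H) denotes the number of H-free t-uniform hypergraphs on the vertex set {1,…,n} with exactly m edges. -/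
attribute [local instance] Classical.propDecidable

/-- The `t`-uniform hypergraph `G` contains a copy of the `t`-uniform hypergraph `H`. -/
def HContains {α β : Type*} (H : Finset (Finset α)) (G : Finset (Finset β)) : Prop :=
  ∃ f : α → β, Function.Injective f ∧ ∀ E ∈ H, E.image f ∈ G

/-- The `t`-density `m_t(H)` of a `t`-uniform hypergraph `H`: the maximum of
`(e(H') - 1)/(v(H') - t)` over all subhypergraphs `H' ⊆ H` with at least `t + 1` vertices. -/
noncomputable def tDensity {α : Type*} [Fintype α] (t : ℕ) (H : Finset (Finset α)) : ℝ :=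
  sSup {x : ℝ | ∃ s : Finset α, t + 1 ≤ s.card ∧
    x = (((H.filter fun E => E ⊆ s).card : ℝ) - 1) / ((s.card : ℝ) - (t : ℝ))}

/-- The Turán number `ex(n, H)`: the maximum number of edges of an `H`-free `t`-uniform
hypergraph on `n` vertices. -/
noncomputable def exTuran {α : Type*} (t n : ℕ) (H : Finset (Finset α)) : ℕ :=
  sSup {m : ℕ | ∃ G : Finset (Finset (Fin n)),
    (∀ E ∈ G, E.card = t) ∧ ¬ HContains H G ∧ G.card = m}

/-!
The lower bound counts the subhypergraphs with `m` edges of an extremal `H`-free hypergraph. The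
upper bound is the container method. Regard the `t`-subsets of the vertex set as the vertices of an
auxiliary hypergraph whose edges are the copies of `H`; an `H`-free hypergraph is an independent set
of it. By supersaturation, a set `A` of `t`-sets with at least `ex(n, H) + δ n ^ t` members spans a
positive proportion of all copies of `H`, and the definition of `m_t(H)` says precisely that the
codegrees of these copies are balanced at the scale `p = n ^ (-1 / m_t(H))`. In a balanced
hypergraph every independent set has a fingerprint of `O(p n ^ t)` vertices that determines a
container smaller than `A` by a positive proportion of `n ^ t`. The fingerprint is found by
induction on the uniformity: select greedily vertices of the independent set whose links have large
codegrees, so that either the vertices of large degree are excluded from the container or the sum of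
the links becomes a balanced hypergraph of smaller uniformity. After boundedly many rounds all
containers have at most `ex(n, H) + δ n ^ t` members. Choosing the fingerprint costs little because
`m` is a large multiple of `n ^ (t - 1 / m_t(H))`, so the sum over fingerprints of the number of
`m`-sets in a container is absorbed by doubling `δ`.
-/

open Finset

section Containers

variable {V ι : Type*}

/-- A fingerprint map `T` for a labelling `L` of finite sets: `T I ⊆ I`, and both the fingerprint
and the label depend only on the part of `I` exposed by the fingerprint, in the sense that they are
the same for every set between `T I` and `I`. In particular `L I = L (T I)`. -/
structure IsFingerprint (T : Finset V → Finset V) (L : Finset V → ι) : Prop where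
  subset : ∀ I, T I ⊆ I
  fingerprint_eq : ∀ {I J}, T I ⊆ J → J ⊆ I → T J = T I
  label_eq : ∀ {I J}, T I ⊆ J → J ⊆ I → L J = L I

/-- The sets satisfying `P` have containers of size at most `b`, each determined by a fingerprint
of size at most `a`. -/
def HasContainers (P : Finset V → Prop) (a : ℕ) (b : ℝ) : Prop :=
  ∃ T C : Finset V → Finset V, IsFingerprint T C ∧ (∀ I, #(T I) ≤ a) ∧
    (∀ I, P I → I ⊆ C I) ∧ ∀ I, (#(C I) : ℝ) ≤ b

variable {P Q : Finset V → Prop} {a a' : ℕ} {b b' : ℝ}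

lemma IsFingerprint.union {κ : Type*} {T₀ : Finset V → Finset V} {L : Finset V → ι}
    (h₀ : IsFingerprint T₀ L) {T₁ : ι → Finset V → Finset V} {L₁ : ι → Finset V → κ}
    (h₁ : ∀ I, IsFingerprint (T₁ (L I)) (L₁ (L I))) :
    IsFingerprint (fun I ↦ T₀ I ∪ T₁ (L I) I) (fun I ↦ L₁ (L I) I) where
  subset I := union_subset (h₀.subset I) ((h₁ I).subset I)
  fingerprint_eq {I J} hTJ hJI := by
    obtain ⟨h₀J, h₁J⟩ := union_subset_iff.1 hTJ
    rw [h₀.fingerprint_eq h₀J hJI, h₀.label_eq h₀J hJI, (h₁ I).fingerprint_eq h₁J hJI]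
  label_eq {I J} hTJ hJI := by
    obtain ⟨h₀J, h₁J⟩ := union_subset_iff.1 hTJ
    rw [h₀.label_eq h₀J hJI, (h₁ I).label_eq h₁J hJI]

lemma exists_isFingerprint_singleton (X : Finset V) :
    ∃ T : Finset V → Finset V, IsFingerprint T T ∧ (∀ I, #(T I) ≤ 1) ∧ (∀ I, T I ⊆ X) ∧
      ∀ I, T I = ∅ → Disjoint I X := by
  obtain ⟨_⟩ : Nonempty (LinearOrder V) := ⟨linearOrderOfSTO WellOrderingRel⟩
  let T (I : Finset V) : Finset V := {v ∈ I | v ∈ X ∧ ∀ u ∈ I, u ∈ X → v ≤ u}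
  have exists_mem {I : Finset V} {u : V} (hu : u ∈ I) (huX : u ∈ X) : ∃ v ∈ T I, v ≤ u := by
    obtain ⟨v, hv, hmin⟩ := exists_min_image {v ∈ I | v ∈ X} id ⟨u, mem_filter.2 ⟨hu, huX⟩⟩
    simp only [mem_filter, id_eq, and_imp] at hv hmin
    exact ⟨v, mem_filter.2 ⟨hv.1, hv.2, hmin⟩, hmin u hu huX⟩
  have congr {I J : Finset V} (hTJ : T I ⊆ J) (hJI : J ⊆ I) : T J = T I := by
    ext v
    refine ⟨fun hv ↦ ?_, fun hv ↦ ?_⟩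
    · obtain ⟨hvJ, hvX, hmin⟩ := mem_filter.1 hv
      refine mem_filter.2 ⟨hJI hvJ, hvX, fun u hu huX ↦ ?_⟩
      obtain ⟨x, hx, hxu⟩ := exists_mem hu huX
      exact (hmin x (hTJ hx) (mem_filter.1 hx).2.1).trans hxu
    · obtain ⟨-, hvX, hmin⟩ := mem_filter.1 hv
      exact mem_filter.2 ⟨hTJ hv, hvX, fun u hu ↦ hmin u (hJI hu)⟩
  refine ⟨T, ⟨fun I ↦ filter_subset _ _, congr, congr⟩, fun I ↦ ?_,
    fun I v hv ↦ (mem_filter.1 hv).2.1, fun I hI ↦ disjoint_left.2 fun u hu huX ↦ ?_⟩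
  · refine card_le_one.2 fun u hu v hv ↦ ?_
    obtain ⟨huI, huX, hu_min⟩ := mem_filter.1 hu
    obtain ⟨hvI, hvX, hv_min⟩ := mem_filter.1 hv
    exact le_antisymm (hu_min v hvI hvX) (hv_min u huI huX)
  · obtain ⟨v, hv, -⟩ := exists_mem hu huX
    simp [hI] at hv

namespace HasContainers

lemma mono (h : HasContainers P a b) (ha : a ≤ a') (hb : b ≤ b') (hQ : ∀ I, Q I → P I) :
    HasContainers Q a' b' := by
  obtain ⟨T, C, hTC, hT, hC, hcard⟩ := h
  exact ⟨T, C, hTC, fun I ↦ (hT I).trans ha, fun I hI ↦ hC I (hQ I hI),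
    fun I ↦ (hcard I).trans hb⟩

lemma const (C : Finset V) (hC : ∀ I, P I → I ⊆ C) (hb : (#C : ℝ) ≤ b) :
    HasContainers P a b :=
  ⟨fun _ ↦ ∅, fun _ ↦ C, ⟨fun _ ↦ empty_subset _, fun _ _ ↦ rfl, fun _ _ ↦ rfl⟩,
    fun _ ↦ Nat.zero_le _, hC, fun _ ↦ hb⟩

lemma of_label {T : Finset V → Finset V} {L : Finset V → ι} (hT : IsFingerprint T L)
    (ha : ∀ I, #(T I) ≤ a) (h : ∀ I, HasContainers (fun J ↦ P J ∧ L J = L I) a' b) :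
    HasContainers P (a + a') b := by
  have h_label (i : ι) (hi : i ∈ Set.range L) : HasContainers (fun J ↦ P J ∧ L J = i) a' b := by
    obtain ⟨I, rfl⟩ := hi
    exact h I
  choose! T₁ C₁ hT₁ hcard hC₁ hb using h_label
  have hrange (I : Finset V) : L I ∈ Set.range L := ⟨I, rfl⟩
  exact ⟨_, _, hT.union fun I ↦ hT₁ _ (hrange I),
    fun I ↦ (card_union_le _ _).trans (add_le_add (ha I) (hcard _ (hrange I) I)),
    fun I hI ↦ hC₁ _ (hrange I) I ⟨hI, rfl⟩, fun I ↦ hb _ (hrange I) I⟩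

lemma branch (X : Finset V) (h_disj : HasContainers (fun I ↦ P I ∧ Disjoint I X) a b)
    (h_mem : ∀ v ∈ X, HasContainers (fun I ↦ P I ∧ v ∈ I) a b) : HasContainers P (1 + a) b := by
  obtain ⟨T, hT, hcard, hTX, hdisj⟩ := exists_isFingerprint_singleton X
  refine of_label hT hcard fun I ↦ ?_
  rcases (T I).eq_empty_or_nonempty with hI | ⟨v, hv⟩
  · exact h_disj.mono le_rfl le_rfl fun J hJ ↦ ⟨hJ.1, hdisj J (hJ.2.trans hI)⟩
  · exact (h_mem v (hTX I hv)).mono le_rfl le_rfl fun J hJ ↦ ⟨hJ.1, hT.subset J (hJ.2 ▸ hv)⟩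

lemma trans (h : HasContainers P a b)
    (h' : ∀ C : Finset V, (#C : ℝ) ≤ b → HasContainers (fun I ↦ P I ∧ I ⊆ C) a' b') :
    HasContainers P (a + a') b' := by
  obtain ⟨T, C, hTC, hT, hC, hcard⟩ := h
  exact of_label hTC hT fun I ↦ (h' (C I) (hcard I)).mono le_rfl le_rfl
    fun J hJ ↦ ⟨hJ.1, hJ.2 ▸ hC J hJ.1⟩

lemma iterate {A₀ : Finset V} {d : ℝ} (hb : 0 ≤ b) (hd : 0 ≤ d)
    (h : ∀ A ⊆ A₀, b < #A → HasContainers (fun I ↦ P I ∧ I ⊆ A) a (max 0 (#A - d))) (j : ℕ) :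
    ∀ A ⊆ A₀, (#A : ℝ) ≤ b + j * d → HasContainers (fun I ↦ P I ∧ I ⊆ A) (j * a) b := by
  induction j with
  | zero => exact fun A _ hA ↦ const A (fun I hI ↦ hI.2) (by simpa using hA)
  | succ j ih =>
    intro A hA₀ hA
    rcases le_or_gt (#A : ℝ) b with hsmall | hlarge
    · exact const A (fun I hI ↦ hI.2) hsmall
    refine ((h A hA₀ hlarge).trans (a' := j * a) fun C hC ↦ ?_).mono (by linarith) le_rfl
      fun _ hI ↦ hI
    have hAC : (#(A ∩ C) : ℝ) ≤ b + j * d := by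
      have hle : (#(A ∩ C) : ℝ) ≤ #C := mod_cast card_le_card inter_subset_right
      push_cast at hA
      rcases le_max_iff.1 hC with hC | hC
      · have : 0 ≤ j * d := by positivity
        linarith
      · linarith
    exact (ih (A ∩ C) (inter_subset_left.trans hA₀) hAC).mono le_rfl le_rfl
      fun I hI ↦ ⟨hI.1.1, subset_inter hI.1.2 hI.2⟩

lemma card_le_sum_choose {b : ℕ} (h : HasContainers P a b) (A : Finset V) (m : ℕ)
    (F : Finset (Finset V)) (hF : ∀ I ∈ F, P I ∧ I ⊆ A ∧ #I = m) :
    #F ≤ ∑ s ∈ range (a + 1), (#A).choose s * b.choose (m - s) := by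
  obtain ⟨T, C, hTC, hT, hC, hcard⟩ := h
  -- `I` is recovered from `S = T I` and `I \ S ⊆ C S`.
  have hsub : F ⊆ (range (a + 1)).biUnion fun s ↦ (A.powersetCard s).biUnion fun S ↦
      ((C S).powersetCard (m - s)).image (S ∪ ·) := by
    intro I hI
    obtain ⟨hPI, hIA, hIm⟩ := hF I hI
    have hCI : C (T I) = C I := hTC.label_eq subset_rfl (hTC.subset I)
    simp only [mem_biUnion, mem_range, mem_powersetCard, mem_image]
    exact ⟨#(T I), Nat.lt_succ_of_le (hT I), T I, ⟨(hTC.subset I).trans hIA, rfl⟩, I \ T I,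
      ⟨sdiff_subset.trans (hCI ▸ hC I hPI), by rw [card_sdiff_of_subset (hTC.subset I), hIm]⟩,
      union_sdiff_of_subset (hTC.subset I)⟩
  refine (card_le_card hsub).trans <| card_biUnion_le.trans <| sum_le_sum fun s _ ↦ ?_
  rw [← card_powersetCard s A]
  refine card_biUnion_le_card_mul _ _ _ fun S _ ↦ card_image_le.trans ?_
  rw [card_powersetCard]
  exact Nat.choose_le_choose _ (mod_cast hcard S)

end HasContainers

end Containers

section WeightedHypergraphs

variable {V : Type*}

/-- The link of a vertex `v` in a weighted hypergraph, a weighted hypergraph on the remaining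
vertices. -/
noncomputable def weightedLink (w : Finset V → ℝ) (v : V) (f : Finset V) : ℝ :=
  if v ∈ f then 0 else w (insert v f)

/-- The set `I` contains no edge of positive weight. -/
def IsIndependent (w : Finset V → ℝ) (I : Finset V) : Prop := ∀ e, 0 < w e → ¬ e ⊆ I

lemma weightedLink_nonneg {w : Finset V → ℝ} (hw : 0 ≤ w) (v : V) : 0 ≤ weightedLink w v := by
  intro f
  unfold weightedLink
  split_ifs
  exacts [le_rfl, hw (insert v f)]

variable [Fintype V]

/-- The codegree of a vertex set `S` in a weighted hypergraph, encoded as a weight function on all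
vertex sets: the total weight of the edges containing `S`. -/
noncomputable def codegree (w : Finset V → ℝ) (S : Finset V) : ℝ := ∑ e with S ⊆ e, w e

/-- A `k`-uniform weighted hypergraph on `A` of total weight at least `N` whose codegrees are
small at scale `p`: a nonempty set `S` has codegree at most `K * p ^ (#S - 1)`. The codegree bound
is multiplied through by `p` to avoid the subtraction. -/
structure IsBalanced (A : Finset V) (N p : ℝ) (k : ℕ) (K : ℝ) (w : Finset V → ℝ) : Prop where
  nonneg : 0 ≤ w
  subset_and_card : ∀ e, w e ≠ 0 → e ⊆ A ∧ #e = k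
  codegree_mul_le : ∀ S : Finset V, S.Nonempty → codegree w S * p ≤ K * p ^ #S
  le_weight : N ≤ ∑ e, w e

variable {u w g : Finset V → ℝ} {v : V} {A S T : Finset V} {N p K L : ℝ} {k : ℕ}

lemma codegree_empty (w : Finset V → ℝ) : codegree w ∅ = ∑ e, w e := by simp [codegree]

lemma codegree_nonneg (hw : 0 ≤ w) (S : Finset V) : 0 ≤ codegree w S :=
  sum_nonneg fun e _ ↦ hw e

lemma codegree_mono (h : u ≤ w) (S : Finset V) : codegree u S ≤ codegree w S :=
  sum_le_sum fun e _ ↦ h e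

lemma codegree_add (u w : Finset V → ℝ) (S : Finset V) :
    codegree (u + w) S = codegree u S + codegree w S := sum_add_distrib

lemma codegree_const_mul (c : ℝ) (w : Finset V → ℝ) (S : Finset V) :
    codegree (fun e ↦ c * w e) S = c * codegree w S := (mul_sum ..).symm

lemma sum_codegree (w : Finset V → ℝ) (Z : Finset (Finset V)) :
    ∑ S ∈ Z, codegree w S = ∑ e, #{S ∈ Z | S ⊆ e} * w e := by
  simp only [codegree, sum_filter]
  rw [sum_comm]
  simp only [← sum_filter, sum_const, nsmul_eq_mul]

lemma sum_codegree_singleton (hw : ∀ e, w e ≠ 0 → e ⊆ A ∧ #e = k) :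
    ∑ v ∈ A, codegree w {v} = k * ∑ e, w e := by
  simp only [codegree, sum_filter, singleton_subset_iff]
  rw [sum_comm, mul_sum]
  refine sum_congr rfl fun e _ ↦ ?_
  rcases eq_or_ne (w e) 0 with he | he
  · simp [he]
  · obtain ⟨heA, hcard⟩ := hw e he
    rw [← sum_filter, sum_const, filter_mem_eq_inter, inter_eq_right.2 heA, hcard, nsmul_eq_mul]

lemma sum_codegree_univ (hw : ∀ e, w e ≠ 0 → #e = k) :
    ∑ S, codegree w S = 2 ^ k * ∑ e, w e := by
  rw [sum_codegree, mul_sum]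
  refine sum_congr rfl fun e _ ↦ ?_
  rcases eq_or_ne (w e) 0 with he | he
  · simp [he]
  · have hpow : ({S | S ⊆ e} : Finset (Finset V)) = e.powerset := by ext; simp
    rw [hpow, card_powerset, hw e he, Nat.cast_pow, Nat.cast_ofNat]

lemma codegree_weightedLink_of_notMem (w : Finset V → ℝ) (hv : v ∉ S) :
    codegree (weightedLink w v) S = codegree w (insert v S) := by
  have hsupp : codegree (weightedLink w v) S =
      ∑ f with S ⊆ f ∧ v ∉ f, weightedLink w v f := by
    rw [codegree, ← filter_filter]
    refine (sum_filter_of_ne (p := fun f ↦ v ∉ f) fun f _ hf hvf ↦ hf ?_).symm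
    simp [weightedLink, hvf]
  rw [hsupp, codegree]
  refine sum_bij' (fun f _ ↦ insert v f) (fun e _ ↦ e.erase v) ?_ ?_ ?_ ?_ ?_ <;>
    simp only [mem_filter, mem_univ, true_and]
  · exact fun f hf ↦ insert_subset_insert v hf.1
  · exact fun e he ↦ ⟨subset_erase.2 ⟨(subset_insert v S).trans he, hv⟩, notMem_erase v e⟩
  · exact fun f hf ↦ erase_insert hf.2
  · exact fun e he ↦ insert_erase (he (mem_insert_self v S))
  · exact fun f hf ↦ if_neg hf.2

lemma codegree_weightedLink_of_mem (w : Finset V → ℝ) (hv : v ∈ S) :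
    codegree (weightedLink w v) S = 0 :=
  sum_eq_zero fun _ hf ↦ if_pos ((mem_filter.1 hf).2 hv)

lemma sum_weightedLink (w : Finset V → ℝ) (v : V) :
    ∑ f, weightedLink w v f = codegree w {v} := by
  rw [← codegree_empty, codegree_weightedLink_of_notMem w (notMem_empty v), insert_empty_eq]

lemma card_filter_codegree_lt_le {β : ℝ} (hk : k ≠ 0) (hw : 0 ≤ w)
    (hsupp : ∀ e, w e ≠ 0 → e ⊆ A ∧ #e = k) (hβ : 0 ≤ β) (hK : 0 < K)
    (hdeg : ∀ v, codegree w {v} ≤ K) :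
    (#{v ∈ A | codegree w {v} < β} : ℝ) ≤ #A - (∑ e, w e - β * #A) / K := by
  have hweight : ∑ e, w e ≤ k * ∑ e, w e :=
    le_mul_of_one_le_left (sum_nonneg fun e _ ↦ hw e) (mod_cast Nat.one_le_iff_ne_zero.2 hk)
  rw [← sum_codegree_singleton hsupp,
    ← sum_filter_add_sum_filter_not A (fun v ↦ codegree w {v} < β)] at hweight
  have hlight : ∑ v ∈ A with codegree w {v} < β, codegree w {v} ≤ #A * β :=
    (sum_le_card_nsmul _ _ β fun v hv ↦ (mem_filter.1 hv).2.le).trans <| by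
      rw [nsmul_eq_mul]
      gcongr
      exact filter_subset _ _
  have hheavy := sum_le_card_nsmul {v ∈ A | ¬ codegree w {v} < β} _ K fun v _ ↦ hdeg v
  have hcard : (#{v ∈ A | codegree w {v} < β} : ℝ) + #{v ∈ A | ¬ codegree w {v} < β} = #A :=
    mod_cast card_filter_add_card_filter_not (s := A) fun v ↦ codegree w {v} < β
  rw [nsmul_eq_mul] at hheavy
  have : (∑ e, w e - β * #A) / K ≤ #{v ∈ A | ¬ codegree w {v} < β} := by
    rw [div_le_iff₀ hK]
    linarith
  linarith

lemma IsBalanced.codegree_singleton_le (h : IsBalanced A N p k K w) (hp : 0 < p) (v : V) :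
    codegree w {v} ≤ K := by
  have := h.codegree_mul_le {v} (singleton_nonempty v)
  rw [card_singleton, pow_one] at this
  exact le_of_mul_le_mul_right this hp

/-- The set `S` is saturated in the weighted hypergraph `g` if its codegree has reached the
threshold `L * p ^ #S`. -/
def IsSaturated (p L : ℝ) (g : Finset V → ℝ) (S : Finset V) : Prop :=
  S.Nonempty ∧ L * p ^ #S ≤ codegree g S

/-- The part of `w` still available after the vertices of `T` have been chosen and their links
collected in `g`: the edges that avoid `T` and contain no saturated set. -/
noncomputable def available (p L : ℝ) (w g : Finset V → ℝ) (T e : Finset V) : ℝ :=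
  if Disjoint e T ∧ ∀ S ⊆ e, ¬ IsSaturated p L g S then w e else 0

/-- The invariant of the container algorithm: `g` collects the links of the vertices of `T`, each
taken in the part of `w` available at that time. An independent set of `w` that contains `T` is
independent in `g`. -/
structure IsLinkSum (p K L : ℝ) (w g : Finset V → ℝ) (T : Finset V) : Prop where
  nonneg : 0 ≤ g
  exists_insert : ∀ f, g f ≠ 0 → ∃ v ∈ T, v ∉ f ∧ 0 < w (insert v f)
  codegree_le : ∀ S : Finset V, S.Nonempty → codegree g S ≤ (L + K) * p ^ #S
  weight_le : ∑ f, g f ≤ #T * K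
  le_weight : #T * (1 / 4) ≤ ∑ f, g f

lemma available_nonneg (hw : 0 ≤ w) (g : Finset V → ℝ) (T : Finset V) :
    0 ≤ available p L w g T := by
  intro e
  unfold available
  split_ifs
  exacts [hw e, le_rfl]

lemma available_le (hw : 0 ≤ w) (g : Finset V → ℝ) (T : Finset V) : available p L w g T ≤ w := by
  intro e
  unfold available
  split_ifs
  exacts [le_rfl, hw e]

lemma ne_zero_of_available_ne_zero {e : Finset V} (he : available p L w g T e ≠ 0) : w e ≠ 0 :=
  fun h ↦ he <| by simp [available, h]

lemma codegree_available_eq_zero_of_mem (hv : v ∈ T) : codegree (available p L w g T) {v} = 0 := by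
  refine sum_eq_zero fun e he ↦ if_neg fun h ↦ ?_
  exact disjoint_left.1 h.1 (singleton_subset_iff.1 (mem_filter.1 he).2) hv

lemma codegree_weightedLink_available_of_isSaturated (hS : IsSaturated p L g S) :
    codegree (weightedLink (available p L w g T) v) S = 0 := by
  refine sum_eq_zero fun f hf ↦ ?_
  have hSf : S ⊆ insert v f := (mem_filter.1 hf).2.trans (subset_insert v f)
  have : available p L w g T (insert v f) = 0 := if_neg fun h ↦ h.2 S hSf hS
  simp [weightedLink, this]

lemma IsBalanced.codegree_weightedLink_le (hw : IsBalanced A N p k K w) (hp : 0 < p) (hK : 0 ≤ K)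
    (hu : u ≤ w) (v : V) (S : Finset V) : codegree (weightedLink u v) S ≤ K * p ^ #S := by
  by_cases hvS : v ∈ S
  · rw [codegree_weightedLink_of_mem u hvS]
    positivity
  · have := hw.codegree_mul_le (insert v S) (insert_nonempty v S)
    rw [card_insert_of_notMem hvS, pow_succ, ← mul_assoc] at this
    rw [codegree_weightedLink_of_notMem u hvS]
    exact (codegree_mono hu _).trans (le_of_mul_le_mul_right this hp)

namespace IsLinkSum

lemma zero (hp : 0 ≤ p) (hK : 0 ≤ K) (hL : 0 ≤ L) (w : Finset V → ℝ) :
    IsLinkSum p K L w 0 ∅ where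
  nonneg := le_rfl
  exists_insert f hf := absurd rfl hf
  codegree_le S _ := by
    simp only [codegree, Pi.zero_apply, sum_const_zero]
    positivity
  weight_le := by simp
  le_weight := by simp

lemma insert (hw : IsBalanced A N p k K w) (hp : 0 < p) (hK : 0 ≤ K) (h : IsLinkSum p K L w g T)
    (hvT : v ∉ T) (hv : 1 / 4 ≤ codegree (available p L w g T) {v}) :
    IsLinkSum p K L w (g + weightedLink (available p L w g T) v) (insert v T) where
  nonneg := add_nonneg h.nonneg (weightedLink_nonneg (available_nonneg hw.nonneg g T) v)
  exists_insert f hf := by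
    rcases eq_or_ne (g f) 0 with hgf | hgf
    · have hlink : weightedLink (available p L w g T) v f ≠ 0 := by simpa [hgf] using hf
      have hvf : v ∉ f := fun hvf ↦ hlink (if_pos hvf)
      rw [weightedLink, if_neg hvf] at hlink
      exact ⟨v, mem_insert_self v T, hvf,
        (hw.nonneg _).lt_of_ne' (ne_zero_of_available_ne_zero hlink)⟩
    · obtain ⟨x, hxT, hx⟩ := h.exists_insert f hgf
      exact ⟨x, mem_insert_of_mem hxT, hx⟩
  codegree_le S hS := by
    rw [codegree_add]
    by_cases hsat : IsSaturated p L g S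
    · rw [codegree_weightedLink_available_of_isSaturated hsat, add_zero]
      exact h.codegree_le S hS
    · have hlt : codegree g S < L * p ^ #S := by simpa [IsSaturated, hS] using hsat
      have := hw.codegree_weightedLink_le hp hK (available_le (p := p) (L := L) hw.nonneg g T) v S
      linarith
  weight_le := by
    have hdeg := (codegree_mono (available_le (p := p) (L := L) hw.nonneg g T) {v}).trans
      (hw.codegree_singleton_le hp v)
    simp only [Pi.add_apply, sum_add_distrib, sum_weightedLink, card_insert_of_notMem hvT]
    push_cast
    linarith [h.weight_le]
  le_weight := by
    simp only [Pi.add_apply, sum_add_distrib, sum_weightedLink, card_insert_of_notMem hvT]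
    push_cast
    linarith [h.le_weight]

lemma subset_and_card (hw : IsBalanced A N p (k + 1) K w) (h : IsLinkSum p K L w g T) {f : Finset V}
    (hf : g f ≠ 0) : f ⊆ A ∧ #f = k := by
  obtain ⟨v, -, hvf, hwf⟩ := h.exists_insert f hf
  obtain ⟨hA, hcard⟩ := hw.subset_and_card _ hwf.ne'
  rw [card_insert_of_notMem hvf] at hcard
  exact ⟨(subset_insert v f).trans hA, by omega⟩

end IsLinkSum

lemma sum_le_sum_filter_add_sum_codegree (hw : 0 ≤ w) (Z : Finset (Finset V)) :
    ∑ e, w e ≤ ∑ e with ∀ S ∈ Z, ¬ S ⊆ e, w e + ∑ S ∈ Z, codegree w S := by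
  rw [sum_codegree, ← sum_filter_add_sum_filter_not univ (fun e ↦ ∀ S ∈ Z, ¬ S ⊆ e)]
  gcongr
  refine (sum_le_sum fun e he ↦ ?_).trans <|
    sum_le_sum_of_subset_of_nonneg (filter_subset _ _)
      fun e _ _ ↦ mul_nonneg (Nat.cast_nonneg _) (hw e)
  obtain ⟨S, hSZ, hSe⟩ : ∃ S ∈ Z, S ⊆ e := by simpa using he
  have : 1 ≤ #{S ∈ Z | S ⊆ e} := card_pos.2 ⟨S, mem_filter.2 ⟨hSZ, hSe⟩⟩
  exact le_mul_of_one_le_left (hw e) (mod_cast this)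

lemma sum_le_sum_available_add (hw : 0 ≤ w) (g : Finset V → ℝ) (T : Finset V) :
    ∑ e, w e ≤ ∑ e, available p L w g T e + (∑ v ∈ T, codegree w {v} +
      ∑ S with IsSaturated p L g S, codegree w S) := by
  let Z : Finset (Finset V) := T.image singleton ∪ ({S | IsSaturated p L g S} : Finset _)
  have havail : ∑ e with ∀ S ∈ Z, ¬ S ⊆ e, w e = ∑ e, available p L w g T e := by
    rw [sum_filter]
    refine sum_congr rfl fun e _ ↦ if_congr ?_ rfl rfl
    simp only [Z, mem_union, mem_image, mem_filter, mem_univ, true_and, or_imp, forall_and,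
      forall_exists_index, and_imp, forall_apply_eq_imp_iff₂, singleton_subset_iff, disjoint_right]
    exact and_congr_right fun _ ↦ forall_congr' fun S ↦ imp_not_comm
  have hZ : ∑ S ∈ Z, codegree w S ≤
      ∑ v ∈ T, codegree w {v} + ∑ S with IsSaturated p L g S, codegree w S := by
    rw [← sum_image (f := codegree w) (singleton_injective.injOn (s := (T : Set V))),
      ← sum_union_inter]
    exact le_add_of_nonneg_right (sum_nonneg fun S _ ↦ codegree_nonneg hw S)
  linarith [sum_le_sum_filter_add_sum_codegree hw Z]

lemma IsBalanced.sum_codegree_isSaturated_le (hw : IsBalanced A N p k K w) (hp : 0 < p)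
    (hK : 0 ≤ K) (hL : 0 < L) (hg : 0 ≤ g) :
    ∑ S with IsSaturated p L g S, codegree w S ≤ K / (L * p) * ∑ S, codegree g S := by
  rw [mul_sum]
  refine (sum_le_sum fun S hS ↦ ?_).trans <|
    sum_le_sum_of_subset_of_nonneg (filter_subset _ _)
      fun S _ _ ↦ mul_nonneg (by positivity) (codegree_nonneg hg S)
  obtain ⟨hne, hsat⟩ := (mem_filter.1 hS).2
  calc codegree w S ≤ K * p ^ #S / p := (le_div_iff₀ hp).2 (hw.codegree_mul_le S hne)
    _ = K / (L * p) * (L * p ^ #S) := by field_simp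
    _ ≤ K / (L * p) * codegree g S := by gcongr

namespace IsLinkSum

lemma half_le_sum_available (hw : IsBalanced A N p (k + 1) K w) (hp : 0 < p) (hK : 0 < K)
    (hpK : p ≤ 1 / (8 * K)) (hN : 0 < N) (h : IsLinkSum p K (2 ^ (k + 3) * K ^ 2) w g T)
    (hT : (#T : ℝ) ≤ 2 * (p * N)) :
    N / 2 ≤ ∑ e, available p (2 ^ (k + 3) * K ^ 2) w g T e := by
  have hpK' : p * K ≤ 1 / 8 := by
    rw [le_div_iff₀ (by positivity)] at hpK
    linarith
  have hchosen : ∑ v ∈ T, codegree w {v} ≤ N / 4 :=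
    calc ∑ v ∈ T, codegree w {v} ≤ #T * K := by
          simpa using sum_le_card_nsmul T _ K fun v _ ↦ hw.codegree_singleton_le hp v
      _ ≤ 2 * (p * N) * K := by gcongr
      _ = 2 * N * (p * K) := by ring
      _ ≤ 2 * N * (1 / 8) := by gcongr
      _ = N / 4 := by ring
  have hsaturated : ∑ S with IsSaturated p (2 ^ (k + 3) * K ^ 2) g S, codegree w S ≤ N / 4 :=
    calc ∑ S with IsSaturated p (2 ^ (k + 3) * K ^ 2) g S, codegree w S
        ≤ K / (2 ^ (k + 3) * K ^ 2 * p) * (2 ^ k * ∑ f, g f) := by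
          rw [← sum_codegree_univ fun f hf ↦ (h.subset_and_card hw hf).2]
          exact hw.sum_codegree_isSaturated_le hp hK.le (by positivity) h.nonneg
      _ ≤ K / (2 ^ (k + 3) * K ^ 2 * p) * (2 ^ k * (2 * (p * N) * K)) := by
          gcongr
          exact h.weight_le.trans (by gcongr)
      _ = N / 4 := by field_simp; ring
  linarith [hw.le_weight, sum_le_sum_available_add hw.nonneg (p := p)
    (L := 2 ^ (k + 3) * K ^ 2) g T]

lemma isBalanced (hw : IsBalanced A N p (k + 1) K w) (hp : 0 < p)
    (h : IsLinkSum p K L w g T) (hT : p * N ≤ #T) :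
    IsBalanced A N p k (4 * (L + K)) (fun f ↦ 4 / p * g f) where
  nonneg f := mul_nonneg (by positivity) (h.nonneg f)
  subset_and_card f hf := h.subset_and_card hw (right_ne_zero_of_mul hf)
  codegree_mul_le S hS := by
    rw [codegree_const_mul]
    calc 4 / p * codegree g S * p = 4 * codegree g S := by field_simp
      _ ≤ 4 * ((L + K) * p ^ #S) := by gcongr; exact h.codegree_le S hS
      _ = 4 * (L + K) * p ^ #S := by ring
  le_weight := by
    rw [← mul_sum, div_mul_eq_mul_div, le_div_iff₀ hp]
    linarith [h.le_weight]

lemma isIndependent (h : IsLinkSum p K L w g T) {I : Finset V}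
    (hI : IsIndependent w I) (hT : T ⊆ I) : IsIndependent (fun f ↦ 4 / p * g f) I := by
  intro f hf hfI
  obtain ⟨v, hvT, -, hv⟩ := h.exists_insert f (right_ne_zero_of_mul hf.ne')
  exact hI _ hv (insert_subset (hT hvT) hfI)

end IsLinkSum

lemma IsBalanced.hasContainers_of_isLinkSum {a r : ℕ} {b : ℝ}
    (hw : IsBalanced A N p (k + 1) K w)
    (hp : 0 < p) (hK : 0 < K) (hpK : p ≤ 1 / (8 * K)) (hN : 0 < N) (hA : #A ≤ N)
    (hred : ∀ g, IsBalanced A N p k (4 * (2 ^ (k + 3) * K ^ 2 + K)) g →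
      HasContainers (fun I ↦ IsIndependent g I ∧ I ⊆ A) a b)
    (h : IsLinkSum p K (2 ^ (k + 3) * K ^ 2) w g T) (hTr : p * N ≤ #T + r)
    (hTr' : (#T + r : ℝ) ≤ 2 * (p * N)) :
    HasContainers (fun I ↦ (IsIndependent w I ∧ I ⊆ A) ∧ T ⊆ I) (r + a)
      (max b (#A - N / (4 * K))) := by
  induction r generalizing g T with
  | zero =>
    refine (hred _ (h.isBalanced hw hp (by simpa using hTr))).mono (by simp) (le_max_left _ _) ?_
    exact fun I hI ↦ ⟨h.isIndependent hI.1.1 hI.2, hI.1.2⟩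
  | succ r ih =>
    set w' := available p (2 ^ (k + 3) * K ^ 2) w g T
    push_cast at hTr hTr'
    rw [show r + 1 + a = 1 + (r + a) by ring]
    refine .branch {v | 1 / 4 ≤ codegree w' {v}}
      (.const {v ∈ A | codegree w' {v} < 1 / 4} ?_ ?_) fun v hv ↦ ?_
    · intro I ⟨hI, hdisj⟩ v hv
      exact mem_filter.2 ⟨hI.1.2 hv, by simpa using disjoint_left.1 hdisj hv⟩
    · have hweight : N / 2 ≤ ∑ e, w' e :=
        h.half_le_sum_available hw hp hK hpK hN (by linarith [r.cast_nonneg (α := ℝ)])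
      have hlight := card_filter_codegree_lt_le (w := w') k.succ_ne_zero
        (available_nonneg hw.nonneg g T)
        (fun e he ↦ hw.subset_and_card e (ne_zero_of_available_ne_zero he))
        (by norm_num : (0 : ℝ) ≤ 1 / 4) hK
        fun v ↦ (codegree_mono (available_le hw.nonneg g T) {v}).trans
          (hw.codegree_singleton_le hp v)
      refine hlight.trans (le_max_of_le_right ?_)
      rw [← div_div]
      gcongr
      linarith
    · have hv' : 1 / 4 ≤ codegree w' {v} := (mem_filter.1 hv).2
      have hvT : v ∉ T := fun hvT ↦ by
        rw [codegree_available_eq_zero_of_mem hvT] at hv'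
        norm_num at hv'
      refine (ih (h.insert hw hp hK.le hvT hv') ?_ ?_).mono le_rfl le_rfl
        fun I hI ↦ ⟨hI.1.1, insert_subset hI.2 hI.1.2⟩ <;>
      · rw [card_insert_of_notMem hvT]
        push_cast
        linarith

lemma IsBalanced.hasContainers_succ {a : ℕ} {b : ℝ} (hw : IsBalanced A N p (k + 1) K w)
    (hp : 0 < p) (hK : 0 < K) (hpK : p ≤ 1 / (8 * K)) (hpN : 1 ≤ p * N) (hA : #A ≤ N)
    (hred : ∀ g, IsBalanced A N p k (4 * (2 ^ (k + 3) * K ^ 2 + K)) g →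
      HasContainers (fun I ↦ IsIndependent g I ∧ I ⊆ A) a b) :
    HasContainers (fun I ↦ IsIndependent w I ∧ I ⊆ A) (⌈p * N⌉₊ + a)
      (max b (#A - N / (4 * K))) := by
  have hN : 0 < N := pos_of_mul_pos_right (one_pos.trans_le hpN) hp.le
  refine (hw.hasContainers_of_isLinkSum hp hK hpK hN hA hred (r := ⌈p * N⌉₊)
    (.zero hp.le hK.le (by positivity) w) ?_ ?_).mono le_rfl le_rfl
    fun I hI ↦ ⟨hI, empty_subset I⟩
  · simpa using Nat.le_ceil (p * N)
  · have := Nat.ceil_lt_add_one (zero_le_one.trans hpN)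
    simp only [card_empty, CharP.cast_eq_zero, zero_add]
    linarith

theorem exists_hasContainers_of_isBalanced (k : ℕ) {K : ℝ} (hK : 0 < K) :
    ∃ δ : ℝ, 0 < δ ∧ ∃ (D : ℕ) (p₀ : ℝ), 0 < p₀ ∧
      ∀ (V : Type*) [Fintype V] (A : Finset V) (N p : ℝ) (w : Finset V → ℝ), 0 < p → p ≤ p₀ →
        1 ≤ p * N → #A ≤ N → IsBalanced A N p k K w →
        HasContainers (fun I ↦ IsIndependent w I ∧ I ⊆ A) (D * ⌈p * N⌉₊)
          (max 0 (#A - δ * N)) := by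
  induction k generalizing K with
  | zero =>
    refine ⟨1, one_pos, 0, 1, one_pos, fun V _ A N p w hp _ hpN _ hw ↦ ?_⟩
    have hN : 0 < N := pos_of_mul_pos_right (one_pos.trans_le hpN) hp.le
    obtain ⟨e, -, he⟩ := exists_ne_zero_of_sum_ne_zero (hN.trans_le hw.le_weight).ne'
    obtain rfl := card_eq_zero.1 (hw.subset_and_card e he).2
    exact .const ∅ (fun I hI ↦ (hI.1 ∅ ((hw.nonneg ∅).lt_of_ne' he) (empty_subset I)).elim)
      (by simp)
  | succ k ih =>
    obtain ⟨δ, hδ, D, p₀, hp₀, h⟩ := ih (K := 4 * (2 ^ (k + 3) * K ^ 2 + K)) (by positivity)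
    refine ⟨min δ (1 / (4 * K)), by positivity, D + 1, min p₀ (1 / (8 * K)), by positivity,
      fun V _ A N p w hp hpp₀ hpN hA hw ↦ ?_⟩
    have hN : 0 < N := pos_of_mul_pos_right (one_pos.trans_le hpN) hp.le
    obtain ⟨hpp₀, hpK⟩ := le_min_iff.1 hpp₀
    refine (hw.hasContainers_succ hp hK hpK hpN hA fun g hg ↦ h V A N p g hp hpp₀ hpN hA hg).mono
      (by linarith) (max_le (max_le_max le_rfl ?_) (le_max_of_le_right ?_)) fun _ hI ↦ hI
    · gcongr
      exact min_le_left _ _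
    · rw [div_eq_inv_mul, ← one_div]
      gcongr
      exact min_le_right _ _

end WeightedHypergraphs

section Supersaturation

variable {α β : Type*} {t m : ℕ} {H : Finset (Finset α)} {G G' : Finset (Finset β)}

/-- The embeddings of the vertices of `H` that map every edge of `H` to an edge of `G`. -/
noncomputable def copies [Fintype α] [Fintype β] (H : Finset (Finset α)) (G : Finset (Finset β)) :
    Finset (α ↪ β) := {f | ∀ E ∈ H, E.map f ∈ G}

/-- The possible numbers of edges of an `H`-free `t`-uniform hypergraph on `n` vertices, so that
`exTuran t n H` is the supremum. -/
def freeCards (t n : ℕ) (H : Finset (Finset α)) : Set ℕ :=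
  {m | ∃ G : Finset (Finset (Fin n)), (∀ E ∈ G, #E = t) ∧ ¬ HContains H G ∧ #G = m}

/-- The proportion of all `t`-sets in an extremal `H`-free hypergraph on `n` vertices. -/
noncomputable def turanDensity (t : ℕ) (H : Finset (Finset α)) (n : ℕ) : ℝ :=
  exTuran t n H / n.choose t

/-- The `m`-sets of vertices that span more than `ex(m, H)` edges of `G`. -/
noncomputable def denseSets [Fintype β] (t m : ℕ) (H : Finset (Finset α))
    (G : Finset (Finset β)) : Finset (Finset β) :=
  {M ∈ powersetCard m univ | exTuran t m H < #{E ∈ G | E ⊆ M}}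

lemma HContains.mono (h : HContains H G) (hG : G ⊆ G') : HContains H G' :=
  let ⟨f, hf, hH⟩ := h
  ⟨f, hf, fun E hE ↦ hG (hH E hE)⟩

lemma not_hContains_empty (hH : H.Nonempty) : ¬ HContains H (∅ : Finset (Finset β)) :=
  fun ⟨_, _, h⟩ ↦ notMem_empty _ (h _ hH.choose_spec)

lemma mem_copies [Fintype α] [Fintype β] {f : α ↪ β} :
    f ∈ copies H G ↔ ∀ E ∈ H, E.map f ∈ G := by
  simp [copies]

lemma hContains_iff_nonempty_copies [Fintype α] [Fintype β] :
    HContains H G ↔ (copies H G).Nonempty := by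
  simp only [HContains, Finset.Nonempty, mem_copies, map_eq_image]
  exact ⟨fun ⟨f, hf, hH⟩ ↦ ⟨⟨f, hf⟩, hH⟩, fun ⟨f, hH⟩ ↦ ⟨f, f.injective, hH⟩⟩

lemma choose_mem_upperBounds_freeCards (t n : ℕ) (H : Finset (Finset α)) :
    n.choose t ∈ upperBounds (freeCards t n H) := by
  rintro _ ⟨G, hG, -, rfl⟩
  simpa using Set.Sized.card_le hG

lemma exTuran_le_choose (t n : ℕ) (H : Finset (Finset α)) : exTuran t n H ≤ n.choose t :=
  csSup_le' (choose_mem_upperBounds_freeCards t n H)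

lemma exTuran_le_pow (t n : ℕ) (H : Finset (Finset α)) : exTuran t n H ≤ n ^ t :=
  (exTuran_le_choose t n H).trans (Nat.choose_le_pow n t)

lemma card_le_exTuran {n : ℕ} {G : Finset (Finset (Fin n))} (hG : ∀ E ∈ G, #E = t)
    (hfree : ¬ HContains H G) : #G ≤ exTuran t n H :=
  le_csSup ⟨_, choose_mem_upperBounds_freeCards t n H⟩ ⟨G, hG, hfree, rfl⟩

lemma exTuran_mem_freeCards (t n : ℕ) (hH : H.Nonempty) : exTuran t n H ∈ freeCards t n H :=
  Nat.sSup_mem ⟨0, ∅, by simp, not_hContains_empty hH, card_empty⟩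
    ⟨_, choose_mem_upperBounds_freeCards t n H⟩

lemma exists_mem_copies_of_exTuran_lt [Fintype α] [Fintype β] {M : Finset β}
    (hG : ∀ E ∈ G, #E = t) (hM : exTuran t #M H < #{E ∈ G | E ⊆ M}) :
    ∃ f ∈ copies H G, univ.map f ⊆ M := by
  let e : Fin #M ↪ β := M.equivFin.symm.toEmbedding.trans (.subtype _)
  have hrange : univ.map e = M := by
    rw [← map_map, map_univ_equiv, ← subtype_univ, subtype_map]
    simp
  let G' : Finset (Finset (Fin #M)) := {E | E.map e ∈ G}
  have hcard : #{E ∈ G | E ⊆ M} ≤ #G' := by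
    rw [← card_map (mapEmbedding e).toEmbedding]
    refine card_le_card fun E hE ↦ ?_
    obtain ⟨hEG, hEM⟩ := mem_filter.1 hE
    obtain ⟨E', -, rfl⟩ := subset_map_iff.1 (hrange ▸ hEM)
    exact mem_map.2 ⟨E', mem_filter.2 ⟨mem_univ E', hEG⟩, rfl⟩
  have hcontains : HContains H G' := by
    by_contra hfree
    refine hM.not_ge (hcard.trans (card_le_exTuran (fun E hE ↦ ?_) hfree))
    rw [← hG _ (mem_filter.1 hE).2, card_map]
  obtain ⟨f, hf⟩ := hContains_iff_nonempty_copies.1 hcontains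
  refine ⟨f.trans e, mem_copies.2 fun E hE ↦ ?_, ?_⟩
  · rw [← map_map]
    exact (mem_filter.1 (mem_copies.1 hf E hE)).2
  · rw [← map_map]
    exact (map_subset_map.2 (subset_univ _)).trans hrange.subset

lemma card_filter_subset_powersetCard_univ [Fintype β] {S : Finset β} (hS : #S ≤ m) :
    #{M ∈ powersetCard m univ | S ⊆ M} = (Fintype.card β - #S).choose (m - #S) := by
  rw [card_filter_powersetCard_subset S univ m (subset_univ S) hS, card_univ]

lemma sum_card_filter_subset_powersetCard [Fintype β] (htm : t ≤ m) (hG : ∀ E ∈ G, #E = t) :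
    ∑ M ∈ powersetCard m univ, #{E ∈ G | E ⊆ M} =
      #G * (Fintype.card β - t).choose (m - t) := by
  simp only [card_filter]
  rw [sum_comm, ← smul_eq_mul, ← sum_const]
  refine sum_congr rfl fun E hE ↦ ?_
  rw [← card_filter, card_filter_subset_powersetCard_univ ((hG E hE).trans_le htm), hG E hE]

lemma card_mul_choose_le_add_card_denseSets [Fintype β] (H : Finset (Finset α)) (htm : t ≤ m)
    (hG : ∀ E ∈ G, #E = t) :
    #G * (Fintype.card β - t).choose (m - t) ≤
      (Fintype.card β).choose m * exTuran t m H + #(denseSets t m H G) * m.choose t := by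
  have hspan : ∀ M ∈ powersetCard m univ, #{E ∈ G | E ⊆ M} ≤
      exTuran t m H + if exTuran t m H < #{E ∈ G | E ⊆ M} then m.choose t else 0 := by
    intro M hM
    split_ifs with hdense
    · have hsub : {E ∈ G | E ⊆ M} ⊆ M.powersetCard t := fun E hE ↦
        have ⟨hEG, hEM⟩ := mem_filter.1 hE
        mem_powersetCard.2 ⟨hEM, hG E hEG⟩
      have := card_le_card hsub
      rw [card_powersetCard, (mem_powersetCard.1 hM).2] at this
      omega
    · omega
  rw [← sum_card_filter_subset_powersetCard htm hG]
  refine (sum_le_sum hspan).trans_eq ?_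
  rw [sum_add_distrib, ← sum_filter, sum_const, sum_const, card_powersetCard, card_univ,
    smul_eq_mul, smul_eq_mul, denseSets]

lemma mul_choose_le_card_denseSets [Fintype β] {η : ℝ} (htm : t ≤ m) (hmβ : m ≤ Fintype.card β)
    (hG : ∀ E ∈ G, #E = t)
    (hdense : (turanDensity t H m + η) * (Fintype.card β).choose t ≤ #G) :
    η * (Fintype.card β).choose m ≤ #(denseSets t m H G) := by
  set n := Fintype.card β
  have hmt : (0 : ℝ) < m.choose t := mod_cast Nat.choose_pos htm
  have hchoose : (n.choose m : ℝ) * m.choose t = n.choose t * (n - t).choose (m - t) :=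
    mod_cast Nat.choose_mul htm
  have hcount : (#G : ℝ) * (n - t).choose (m - t) ≤
      n.choose m * exTuran t m H + #(denseSets t m H G) * m.choose t :=
    mod_cast card_mul_choose_le_add_card_denseSets H htm hG
  have hex : (exTuran t m H : ℝ) = turanDensity t H m * m.choose t :=
    (div_mul_cancel₀ _ hmt.ne').symm
  have : (turanDensity t H m + η) * (n.choose m * m.choose t) ≤
      n.choose m * exTuran t m H + #(denseSets t m H G) * m.choose t :=
    calc (turanDensity t H m + η) * (n.choose m * m.choose t)
        = (turanDensity t H m + η) * n.choose t * (n - t).choose (m - t) := by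
          rw [hchoose, mul_assoc]
      _ ≤ #G * (n - t).choose (m - t) := by gcongr
      _ ≤ _ := hcount
  rw [hex] at this
  exact le_of_mul_le_mul_right (by linarith) hmt

lemma card_denseSets_le [Fintype α] [Fintype β] (hαm : Fintype.card α ≤ m)
    (hG : ∀ E ∈ G, #E = t) :
    #(denseSets t m H G) ≤ #(copies H G) *
      (Fintype.card β - Fintype.card α).choose (m - Fintype.card α) := by
  have hsub : denseSets t m H G ⊆ (copies H G).biUnion fun f ↦
      {M ∈ powersetCard m univ | univ.map f ⊆ M} := by
    intro M hM
    obtain ⟨hMm, hdense⟩ := mem_filter.1 hM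
    obtain ⟨f, hf, hfM⟩ := exists_mem_copies_of_exTuran_lt hG
      ((mem_powersetCard.1 hMm).2.symm ▸ hdense)
    exact mem_biUnion.2 ⟨f, hf, mem_filter.2 ⟨hMm, hfM⟩⟩
  refine (card_le_card hsub).trans (card_biUnion_le_card_mul _ _ _ fun f _ ↦ ?_)
  have hcard : #(univ.map f) = Fintype.card α := by rw [card_map, card_univ]
  rw [card_filter_subset_powersetCard_univ (hcard.trans_le hαm), hcard]

lemma mul_choose_le_card_copies [Fintype α] [Fintype β] {η : ℝ} (htm : t ≤ m)
    (hαm : Fintype.card α ≤ m) (hmβ : m ≤ Fintype.card β) (hG : ∀ E ∈ G, #E = t)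
    (hdense : (turanDensity t H m + η) * (Fintype.card β).choose t ≤ #G) :
    η * (Fintype.card β).choose (Fintype.card α) ≤ #(copies H G) * m.choose (Fintype.card α) := by
  set n := Fintype.card β
  set v := Fintype.card α
  have hpos : (0 : ℝ) < (n - v).choose (m - v) :=
    mod_cast Nat.choose_pos (Nat.sub_le_sub_right hmβ v)
  have hchoose : (n.choose m : ℝ) * m.choose v = n.choose v * (n - v).choose (m - v) :=
    mod_cast Nat.choose_mul hαm
  have hcard : (#(denseSets t m H G) : ℝ) ≤ #(copies H G) * (n - v).choose (m - v) :=
    mod_cast card_denseSets_le hαm hG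
  refine le_of_mul_le_mul_right ?_ hpos
  calc η * n.choose v * (n - v).choose (m - v)
      = η * n.choose m * m.choose v := by rw [mul_assoc, mul_assoc, hchoose]
    _ ≤ #(copies H G) * (n - v).choose (m - v) * m.choose v := by
        gcongr ?_ * _
        exact (mul_choose_le_card_denseSets htm hmβ hG hdense).trans hcard
    _ = #(copies H G) * m.choose v * (n - v).choose (m - v) := by ring

lemma exists_forall_ge_le_add {f : ℕ → ℝ} (hf : 0 ≤ f) (v : ℕ) {η : ℝ} (hη : 0 < η) :
    ∃ m ≥ v, ∀ n ≥ m, f m ≤ f n + η := by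
  have hbdd : BddBelow (f '' Set.Ici v) := ⟨0, Set.forall_mem_image.2 fun n _ ↦ hf n⟩
  obtain ⟨_, ⟨m, hm, rfl⟩, hlt⟩ :=
    Real.lt_sInf_add_pos (Set.nonempty_Ici.image f) hη
  refine ⟨m, hm, fun n hn ↦ ?_⟩
  have := csInf_le hbdd (Set.mem_image_of_mem f (le_trans hm hn : v ≤ n))
  linarith

lemma pow_le_mul_choose {v n : ℕ} (hvn : 2 * v ≤ n) :
    (n : ℝ) ^ v ≤ 2 ^ v * v.factorial * n.choose v := by
  have hhalf : (n : ℝ) / 2 ≤ (n + 1 - v : ℕ) := by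
    have : (2 * v : ℝ) ≤ n := mod_cast hvn
    rw [Nat.cast_sub (by omega)]
    push_cast
    linarith
  calc (n : ℝ) ^ v = 2 ^ v * (n / 2) ^ v := by rw [← mul_pow, mul_div_cancel₀ _ two_ne_zero]
    _ ≤ 2 ^ v * (n + 1 - v : ℕ) ^ v := by gcongr
    _ ≤ 2 ^ v * (v.factorial * n.choose v) := by
        gcongr
        exact (div_le_iff₀' (by positivity)).1 (Nat.pow_le_choose v n)
    _ = 2 ^ v * v.factorial * n.choose v := by ring

theorem supersaturation [Fintype α] (t : ℕ) (H : Finset (Finset α)) {δ : ℝ} (hδ : 0 < δ) :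
    ∃ c : ℝ, 0 < c ∧ ∃ n₀ : ℕ, ∀ (β : Type*) [Fintype β] (G : Finset (Finset β)),
      n₀ ≤ Fintype.card β → (∀ E ∈ G, #E = t) →
      exTuran t (Fintype.card β) H + δ * (Fintype.card β : ℝ) ^ t ≤ #G →
      c * (Fintype.card β : ℝ) ^ Fintype.card α ≤ #(copies H G) := by
  set v := Fintype.card α
  have hnonneg : 0 ≤ turanDensity t H := fun n ↦ by unfold turanDensity; positivity
  obtain ⟨m, hm, hturan⟩ := exists_forall_ge_le_add hnonneg (max v t) (half_pos hδ)
  obtain ⟨hvm, htm⟩ := max_le_iff.1 hm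
  have hmv : (0 : ℝ) < m.choose v := mod_cast Nat.choose_pos hvm
  refine ⟨δ / 2 / (2 ^ v * v.factorial * m.choose v), by positivity, m + 2 * v,
    fun β _ G hn hG hcard ↦ ?_⟩
  set n := Fintype.card β
  have hnt : (0 : ℝ) < n.choose t := mod_cast Nat.choose_pos (by omega)
  have hdense : (turanDensity t H m + δ / 2) * n.choose t ≤ #G :=
    calc (turanDensity t H m + δ / 2) * n.choose t
        ≤ (turanDensity t H n + δ) * n.choose t := by
          gcongr ?_ * _
          linarith [hturan n (by omega)]
      _ = exTuran t n H + δ * n.choose t := by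
          rw [add_mul, turanDensity, div_mul_cancel₀ _ hnt.ne']
      _ ≤ exTuran t n H + δ * (n : ℝ) ^ t := by
          gcongr
          exact mod_cast Nat.choose_le_pow n t
      _ ≤ #G := hcard
  rw [div_mul_eq_mul_div, div_le_iff₀ (by positivity)]
  calc δ / 2 * (n : ℝ) ^ v ≤ δ / 2 * (2 ^ v * v.factorial * n.choose v) := by
        gcongr
        exact pow_le_mul_choose (by omega)
    _ = 2 ^ v * v.factorial * (δ / 2 * n.choose v) := by ring
    _ ≤ 2 ^ v * v.factorial * (#(copies H G) * m.choose v) := by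
        gcongr _ * ?_
        exact mul_choose_le_card_copies htm hvm (by omega) hG hdense
    _ = #(copies H G) * (2 ^ v * v.factorial * m.choose v) := by ring

end Supersaturation

section CopyHypergraph

variable {α β : Type*} {H : Finset (Finset α)} {A S I : Finset (Finset β)} {l p B N : ℝ}

/-- The edge set of the image of `H` under an embedding of the vertices. -/
noncomputable def copyEdges (H : Finset (Finset α)) (f : α ↪ β) : Finset (Finset β) :=
  H.map (mapEmbedding f).toEmbedding

lemma card_copyEdges (H : Finset (Finset α)) (f : α ↪ β) : #(copyEdges H f) = #H :=
  card_map _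

lemma map_biUnion_id_eq_biUnion_copyEdges (H : Finset (Finset α)) (f : α ↪ β) :
    (H.biUnion id).map f = (copyEdges H f).biUnion id := by
  simp [map_eq_image, biUnion_image, copyEdges, image_biUnion]

lemma copyEdges_filter_map_mem {f : α ↪ β} (hS : S ⊆ copyEdges H f) :
    copyEdges {E ∈ H | E.map f ∈ S} f = S := by
  ext F
  simp only [copyEdges, mem_map, mem_filter]
  constructor
  · rintro ⟨E, ⟨-, hE⟩, rfl⟩
    exact hE
  · intro hF
    obtain ⟨E, hE, rfl⟩ := mem_map.1 (hS hF)
    exact ⟨E, ⟨hE, hF⟩, rfl⟩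

variable [Fintype α] [Fintype β]

/-- The hypergraph of copies of `H` in `A`: its vertices are the edges of the host, and the edge
set of a copy of `H` is an edge, weighted by `l` times the number of embeddings producing it. -/
noncomputable def copyWeight (H : Finset (Finset α)) (l : ℝ) (A e : Finset (Finset β)) : ℝ :=
  l * #{f ∈ copies H A | copyEdges H f = e}

lemma mem_copies_iff_copyEdges_subset {f : α ↪ β} : f ∈ copies H A ↔ copyEdges H f ⊆ A := by
  simp [mem_copies, copyEdges, subset_iff]

lemma exists_of_copyWeight_ne_zero {e : Finset (Finset β)} (he : copyWeight H l A e ≠ 0) :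
    ∃ f ∈ copies H A, copyEdges H f = e := by
  by_contra! h
  exact he (by simp [copyWeight, filter_false_of_mem h])

lemma isIndependent_copyWeight (hI : ¬ HContains H I) : IsIndependent (copyWeight H l A) I := by
  intro e he heI
  obtain ⟨f, -, rfl⟩ := exists_of_copyWeight_ne_zero he.ne'
  exact hI (hContains_iff_nonempty_copies.2 ⟨f, mem_copies_iff_copyEdges_subset.2 heI⟩)

lemma codegree_copyWeight (H : Finset (Finset α)) (l : ℝ) (A S : Finset (Finset β)) :
    codegree (copyWeight H l A) S = l * #{f ∈ copies H A | S ⊆ copyEdges H f} := by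
  have hmaps : ∀ f ∈ ({f ∈ copies H A | S ⊆ copyEdges H f} : Finset (α ↪ β)),
      copyEdges H f ∈ ({e | S ⊆ e} : Finset (Finset (Finset β))) := fun f hf ↦
    mem_filter.2 ⟨mem_univ _, (mem_filter.1 hf).2⟩
  simp only [codegree, copyWeight]
  rw [← mul_sum, card_eq_sum_card_fiberwise hmaps, Nat.cast_sum]
  refine congrArg (l * ·) (sum_congr (by ext; simp) fun e he ↦ ?_)
  rw [filter_filter, filter_congr fun f _ ↦ and_iff_right_of_imp fun hf ↦ ?_]
  exact hf ▸ (mem_filter.1 he).2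

lemma card_piFinset_ite_univ {U : Finset α} {W : Finset β} (h : #W = #U) :
    #(Fintype.piFinset fun a ↦ if a ∈ U then W else univ) =
      #U ^ #U * Fintype.card β ^ (Fintype.card α - #U) := by
  simp only [Fintype.card_piFinset, apply_ite card, card_univ, h]
  rw [prod_ite, prod_const, prod_const, filter_univ_mem, filter_not, filter_univ_mem,
    ← compl_eq_univ_sdiff, card_compl]

/-- Such an embedding sends the vertices covered by `H` to those covered by `S`, and is free on the
remaining ones. -/
lemma card_filter_copyEdges_eq_le (H : Finset (Finset α)) (S : Finset (Finset β)) :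
    #{f : α ↪ β | copyEdges H f = S} ≤ Fintype.card α ^ Fintype.card α *
      Fintype.card β ^ (Fintype.card α - #(H.biUnion id)) := by
  obtain hempty | ⟨f₀, hf₀⟩ := ({f : α ↪ β | copyEdges H f = S} : Finset _).eq_empty_or_nonempty
  · simp [hempty]
  have hcover : ∀ f : α ↪ β, copyEdges H f = S → (H.biUnion id).map f = S.biUnion id :=
    fun f hf ↦ hf ▸ map_biUnion_id_eq_biUnion_copyEdges H f
  have hcard : #(S.biUnion id) = #(H.biUnion id) := by
    rw [← hcover f₀ (mem_filter.1 hf₀).2, card_map]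
  have hU : #(H.biUnion id) ≤ Fintype.card α := card_le_univ _
  calc #{f : α ↪ β | copyEdges H f = S}
      ≤ #(Fintype.piFinset fun a ↦ if a ∈ H.biUnion id then S.biUnion id else univ) := by
        refine card_le_card_of_injOn (fun f ↦ (f : α → β)) (fun f hf ↦ ?_)
          DFunLike.coe_injective.injOn
        refine mem_coe.2 (Fintype.mem_piFinset.2 fun a ↦ ?_)
        split_ifs with ha
        · exact hcover f (mem_filter.1 (mem_coe.1 hf)).2 ▸ mem_map_of_mem f ha
        · exact mem_univ _
    _ = #(H.biUnion id) ^ #(H.biUnion id) *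
          Fintype.card β ^ (Fintype.card α - #(H.biUnion id)) := card_piFinset_ite_univ hcard
    _ ≤ _ := Nat.mul_le_mul_right _ (Nat.pow_self_mono hU)

lemma card_filter_subset_copyEdges_le (H : Finset (Finset α)) (S : Finset (Finset β)) :
    #{f : α ↪ β | S ⊆ copyEdges H f} ≤
      ∑ H' ∈ H.powerset, #{f : α ↪ β | copyEdges H' f = S} := by
  refine (card_le_card fun f hf ↦ ?_).trans card_biUnion_le
  exact mem_biUnion.2 ⟨{E ∈ H | E.map f ∈ S}, mem_powerset.2 (filter_subset _ _),
    mem_filter.2 ⟨mem_univ f, copyEdges_filter_map_mem (mem_filter.1 hf).2⟩⟩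

lemma mul_card_filter_copyEdges_eq_le (hl : 0 ≤ l) (hp : 0 ≤ p) (hB : 0 ≤ B) (hS : S.Nonempty)
    (hH : H.Nonempty → l * p * (Fintype.card β : ℝ) ^ (Fintype.card α - #(H.biUnion id)) ≤
      B * p ^ #H) :
    l * p * #{f : α ↪ β | copyEdges H f = S} ≤
      (Fintype.card α : ℝ) ^ Fintype.card α * (B * p ^ #S) := by
  obtain hempty | ⟨f, hf⟩ := ({f : α ↪ β | copyEdges H f = S} : Finset _).eq_empty_or_nonempty
  · rw [hempty, card_empty, Nat.cast_zero, mul_zero]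
    positivity
  have hcard : #H = #S := by rw [← (mem_filter.1 hf).2, card_copyEdges]
  calc l * p * #{f : α ↪ β | copyEdges H f = S}
      ≤ l * p * ((Fintype.card α : ℝ) ^ Fintype.card α *
          (Fintype.card β : ℝ) ^ (Fintype.card α - #(H.biUnion id))) := by
        gcongr
        exact_mod_cast card_filter_copyEdges_eq_le H S
    _ = (Fintype.card α : ℝ) ^ Fintype.card α *
          (l * p * (Fintype.card β : ℝ) ^ (Fintype.card α - #(H.biUnion id))) := by ring
    _ ≤ (Fintype.card α : ℝ) ^ Fintype.card α * (B * p ^ #S) := by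
        rw [← hcard]
        refine mul_le_mul_of_nonneg_left (hH ?_) (by positivity)
        exact card_pos.1 (hcard ▸ card_pos.2 hS)

lemma codegree_copyWeight_mul_le (A : Finset (Finset β)) (hl : 0 ≤ l) (hp : 0 ≤ p) (hB : 0 ≤ B)
    (hsub : ∀ H' ⊆ H, H'.Nonempty →
      l * p * (Fintype.card β : ℝ) ^ (Fintype.card α - #(H'.biUnion id)) ≤ B * p ^ #H')
    (hS : S.Nonempty) :
    codegree (copyWeight H l A) S * p ≤
      2 ^ #H * ((Fintype.card α : ℝ) ^ Fintype.card α * B) * p ^ #S := by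
  have hcount : #{f ∈ copies H A | S ⊆ copyEdges H f} ≤
      ∑ H' ∈ H.powerset, #{f : α ↪ β | copyEdges H' f = S} :=
    (card_le_card (filter_subset_filter _ (subset_univ _))).trans
      (card_filter_subset_copyEdges_le H S)
  calc codegree (copyWeight H l A) S * p
      = l * p * #{f ∈ copies H A | S ⊆ copyEdges H f} := by rw [codegree_copyWeight]; ring
    _ ≤ l * p * ∑ H' ∈ H.powerset, (#{f : α ↪ β | copyEdges H' f = S} : ℝ) := by
        gcongr
        exact_mod_cast hcount
    _ = ∑ H' ∈ H.powerset, l * p * #{f : α ↪ β | copyEdges H' f = S} := mul_sum ..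
    _ ≤ ∑ _H' ∈ H.powerset, (Fintype.card α : ℝ) ^ Fintype.card α * (B * p ^ #S) :=
        sum_le_sum fun H' hH' ↦
          mul_card_filter_copyEdges_eq_le hl hp hB hS (hsub H' (mem_powerset.1 hH'))
    _ = 2 ^ #H * ((Fintype.card α : ℝ) ^ Fintype.card α * B) * p ^ #S := by
        rw [sum_const, card_powerset, nsmul_eq_mul]
        push_cast
        ring

lemma isBalanced_copyWeight (hl : 0 ≤ l) (hp : 0 ≤ p) (hB : 0 ≤ B)
    (hsub : ∀ H' ⊆ H, H'.Nonempty →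
      l * p * (Fintype.card β : ℝ) ^ (Fintype.card α - #(H'.biUnion id)) ≤ B * p ^ #H')
    (hN : N ≤ l * #(copies H A)) :
    IsBalanced A N p #H (2 ^ #H * ((Fintype.card α : ℝ) ^ Fintype.card α * B))
      (copyWeight H l A) where
  nonneg e := mul_nonneg hl (Nat.cast_nonneg _)
  subset_and_card e he := by
    obtain ⟨f, hf, rfl⟩ := exists_of_copyWeight_ne_zero he
    exact ⟨mem_copies_iff_copyEdges_subset.1 hf, card_copyEdges H f⟩
  codegree_mul_le S hS := codegree_copyWeight_mul_le A hl hp hB hsub hS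
  le_weight := by
    rw [← codegree_empty, codegree_copyWeight]
    simpa using hN

end CopyHypergraph

section Density

variable {α : Type*} {t : ℕ} {H H' : Finset (Finset α)}

lemma succ_le_card_union_of_ne {E F : Finset α} (hE : #E = t) (hF : #F = t) (hne : E ≠ F) :
    t + 1 ≤ #(E ∪ F) := by
  by_contra! h
  have hle : #(E ∪ F) ≤ t := Nat.lt_succ_iff.1 h
  exact hne ((eq_of_subset_of_card_le subset_union_left (hE ▸ hle)).trans
    (eq_of_subset_of_card_le subset_union_right (hF ▸ hle)).symm)

lemma pos_of_uniform_of_one_lt_card (hH : ∀ E ∈ H, #E = t) (hcard : 1 < #H) : 0 < t := by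
  obtain ⟨E, hE, F, hF, hne⟩ := one_lt_card.1 hcard
  refine Nat.pos_of_ne_zero fun ht ↦ hne ?_
  rw [card_eq_zero.1 ((hH E hE).trans ht), card_eq_zero.1 ((hH F hF).trans ht)]

lemma eq_singleton_biUnion_of_card_le (hH : ∀ E ∈ H, #E = t) (hne : H.Nonempty)
    (hcard : #(H.biUnion id) ≤ t) : H = {H.biUnion id} :=
  eq_singleton_iff_nonempty_unique_mem.2 ⟨hne, fun E hE ↦
    eq_of_subset_of_card_le (subset_biUnion_of_mem id hE) (hcard.trans_eq (hH E hE).symm)⟩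

variable [Fintype α]

lemma le_tDensity (H : Finset (Finset α)) {s : Finset α} (hs : t + 1 ≤ #s) :
    ((#{E ∈ H | E ⊆ s} : ℝ) - 1) / (#s - t) ≤ tDensity t H := by
  refine le_csSup (Set.Finite.bddAbove ?_) ⟨s, hs, rfl⟩
  refine (Set.finite_range fun s : Finset α ↦ ((#{E ∈ H | E ⊆ s} : ℝ) - 1) / (#s - t)).subset ?_
  rintro _ ⟨s, -, rfl⟩
  exact ⟨s, rfl⟩

lemma card_sub_one_le_tDensity_mul (hH' : H' ⊆ H) (ht : t + 1 ≤ #(H'.biUnion id)) :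
    (#H' : ℝ) - 1 ≤ tDensity t H * (#(H'.biUnion id) - t) := by
  have hle : (#H' : ℝ) ≤ #{E ∈ H | E ⊆ H'.biUnion id} := by
    exact_mod_cast card_le_card fun E hE ↦
      mem_filter.2 ⟨hH' hE, subset_biUnion_of_mem id hE⟩
  have hpos : (0 : ℝ) < #(H'.biUnion id) - t := sub_pos.2 (by exact_mod_cast ht)
  linarith [(div_le_iff₀ hpos).1 (le_tDensity H ht)]

lemma tDensity_eq_zero_of_card_eq_one (ht : t + 1 ≤ Fintype.card α) (hH : #H = 1) :
    tDensity t H = 0 := by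
  refine le_antisymm (csSup_le ⟨_, univ, ht, rfl⟩ ?_) ?_
  · rintro _ ⟨s, hs, rfl⟩
    have hcard : (#{E ∈ H | E ⊆ s} : ℝ) ≤ 1 := by exact_mod_cast hH ▸ card_filter_le H (· ⊆ s)
    have hts : (t : ℝ) ≤ #s := by exact_mod_cast t.le_succ.trans hs
    exact div_nonpos_of_nonpos_of_nonneg (sub_nonpos.2 hcard) (sub_nonneg.2 hts)
  · simpa [hH] using le_tDensity H (s := univ) ht

lemma one_div_le_tDensity (hH : ∀ E ∈ H, #E = t) (hcard : 1 < #H) : 1 / t ≤ tDensity t H := by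
  obtain ⟨E, hE, F, hF, hne⟩ := one_lt_card.1 hcard
  have hunion : t + 1 ≤ #(E ∪ F) := succ_le_card_union_of_ne (hH E hE) (hH F hF) hne
  have hunion_le : #(E ∪ F) ≤ t + t := (card_union_le E F).trans_eq (by rw [hH E hE, hH F hF])
  have hpair : 1 < #{X ∈ H | X ⊆ E ∪ F} := one_lt_card.2
    ⟨E, mem_filter.2 ⟨hE, subset_union_left⟩, F, mem_filter.2 ⟨hF, subset_union_right⟩, hne⟩
  have hpos : (0 : ℝ) < #(E ∪ F) - t := sub_pos.2 (by exact_mod_cast hunion)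
  have hden : (#(E ∪ F) : ℝ) - t ≤ t := sub_le_iff_le_add.2 (by exact_mod_cast hunion_le)
  have hnum : (1 : ℝ) ≤ #{X ∈ H | X ⊆ E ∪ F} - 1 := le_sub_iff_add_le.2 (by exact_mod_cast hpair)
  exact (div_le_div₀ (zero_le_one.trans hnum) hnum hpos hden).trans (le_tDensity H hunion)

lemma tDensity_pos (hH : ∀ E ∈ H, #E = t) (hcard : 1 < #H) : 0 < tDensity t H :=
  (one_div_pos.2 (Nat.cast_pos.2 (pos_of_uniform_of_one_lt_card hH hcard))).trans_le
    (one_div_le_tDensity hH hcard)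

lemma one_le_rpow_sub_one_div_tDensity (hH : ∀ E ∈ H, #E = t) (hcard : 1 < #H) {n : ℕ}
    (hn : 1 ≤ n) : 1 ≤ (n : ℝ) ^ ((t : ℝ) - 1 / tDensity t H) := by
  have ht : (0 : ℝ) < t := Nat.cast_pos.2 (pos_of_uniform_of_one_lt_card hH hcard)
  refine Real.one_le_rpow (by exact_mod_cast hn) (sub_nonneg.2 ?_)
  exact (one_div_le (tDensity_pos hH hcard) ht).2 (one_div_le_tDensity hH hcard)

/-- At `p = n ^ (-1 / m_t(H))`, the expected number of copies of each subhypergraph of `H` in the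
random `t`-uniform hypergraph is at least of the order of the expected number of edges. -/
lemma pow_mul_rpow_le_of_subset (hH : ∀ E ∈ H, #E = t) (hpos : 0 < tDensity t H) {n : ℕ}
    (hn : 1 ≤ n) (hH' : H' ⊆ H) (hne : H'.Nonempty) :
    (n : ℝ) ^ t * (n : ℝ) ^ (-(1 / tDensity t H)) ≤
      ((n : ℝ) ^ (-(1 / tDensity t H))) ^ #H' * (n : ℝ) ^ #(H'.biUnion id) := by
  have hn' : (0 : ℝ) < n := by exact_mod_cast hn
  simp only [← Real.rpow_natCast, ← Real.rpow_mul hn'.le, ← Real.rpow_add hn']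
  refine Real.rpow_le_rpow_of_exponent_le (by exact_mod_cast hn) ?_
  obtain ht | ht := Nat.lt_or_ge t #(H'.biUnion id)
  · have hdensity : ((#H' : ℝ) - 1) / tDensity t H ≤ #(H'.biUnion id) - t :=
      (div_le_iff₀' hpos).2 (card_sub_one_le_tDensity_mul hH' ht)
    linarith [show ((#H' : ℝ) - 1) / tDensity t H =
      1 / tDensity t H * #H' - 1 / tDensity t H by ring]
  · have hsingle := eq_singleton_biUnion_of_card_le (fun E hE ↦ hH E (hH' hE)) hne ht
    have hcard : #H' = 1 := by rw [hsingle, card_singleton]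
    have hcover : #(H'.biUnion id) = t :=
      hH _ (hH' (by rw [hsingle]; simp))
    rw [hcard, hcover]
    simp [add_comm]

end Density

section HFreeContainers

variable {α : Type*} [Fintype α] {t : ℕ} {H : Finset (Finset α)} {δ c : ℝ}

lemma isBalanced_copyWeight_rpow {β : Type*} [Fintype β] [Nonempty β] {A : Finset (Finset β)}
    (hH : ∀ E ∈ H, #E = t) (hpos : 0 < tDensity t H) (hc : 0 < c)
    (hA : c * (Fintype.card β : ℝ) ^ Fintype.card α ≤ #(copies H A)) :
    IsBalanced A ((Fintype.card β : ℝ) ^ t) ((Fintype.card β : ℝ) ^ (-(1 / tDensity t H))) #H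
      (2 ^ #H * ((Fintype.card α : ℝ) ^ Fintype.card α * (1 / c)))
      (copyWeight H
        ((Fintype.card β : ℝ) ^ t / (c * (Fintype.card β : ℝ) ^ Fintype.card α)) A) := by
  have : (0 : ℝ) < Fintype.card β := by exact_mod_cast Fintype.card_pos
  set p : ℝ := (Fintype.card β : ℝ) ^ (-(1 / tDensity t H))
  refine isBalanced_copyWeight (by positivity) (by positivity) (by positivity)
    (fun H' hH' hne ↦ ?_) ?_
  · have hsplit : (Fintype.card β : ℝ) ^ Fintype.card α =
        (Fintype.card β : ℝ) ^ (Fintype.card α - #(H'.biUnion id)) *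
          (Fintype.card β : ℝ) ^ #(H'.biUnion id) :=
      (pow_sub_mul_pow _ (card_le_univ _)).symm
    calc (Fintype.card β : ℝ) ^ t / (c * (Fintype.card β : ℝ) ^ Fintype.card α) * p *
          (Fintype.card β : ℝ) ^ (Fintype.card α - #(H'.biUnion id))
        = (Fintype.card β : ℝ) ^ t * p / (c * (Fintype.card β : ℝ) ^ #(H'.biUnion id)) := by
          rw [hsplit]
          field_simp
      _ ≤ p ^ #H' * (Fintype.card β : ℝ) ^ #(H'.biUnion id) /
            (c * (Fintype.card β : ℝ) ^ #(H'.biUnion id)) :=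
          div_le_div_of_nonneg_right (pow_mul_rpow_le_of_subset hH hpos Fintype.card_pos hH' hne)
            (by positivity)
      _ = 1 / c * p ^ #H' := by field_simp
  · rw [div_mul_eq_mul_div, le_div_iff₀ (by positivity)]
    gcongr

lemma exists_hasContainers_of_exTuran_add_le (hH : ∀ E ∈ H, #E = t) (hcard : 1 < #H)
    (hδ : 0 < δ) :
    ∃ ε : ℝ, 0 < ε ∧ ∃ D n₀ : ℕ, ∀ n ≥ n₀, ∀ A ⊆ powersetCard t (univ : Finset (Fin n)),
      exTuran t n H + δ * (n : ℝ) ^ t ≤ #A →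
        HasContainers (fun I ↦ ¬ HContains H I ∧ I ⊆ A)
          (D * ⌈(n : ℝ) ^ ((t : ℝ) - 1 / tDensity t H)⌉₊) (max 0 (#A - ε * (n : ℝ) ^ t)) := by
  have hpos : 0 < tDensity t H := tDensity_pos hH hcard
  obtain ⟨c, hc, n₁, hcopies⟩ := supersaturation t H hδ
  obtain ⟨ε, hε, D, p₀, hp₀, hstep⟩ := exists_hasContainers_of_isBalanced #H
    (show 0 < 2 ^ #H * ((Fintype.card α : ℝ) ^ Fintype.card α * (1 / c)) by
      have : (0 : ℝ) < (Fintype.card α : ℝ) ^ Fintype.card α := by exact_mod_cast Nat.pow_self_pos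
      positivity)
  obtain ⟨n₂, hn₂⟩ : ∃ n₂ : ℕ, ∀ n ≥ n₂, (n : ℝ) ^ (-(1 / tDensity t H)) < p₀ :=
    Filter.eventually_atTop.1 <| ((tendsto_rpow_neg_atTop (one_div_pos.2 hpos)).comp
      tendsto_natCast_atTop_atTop).eventually (Iio_mem_nhds hp₀)
  refine ⟨ε, hε, D, n₁ + n₂ + 1, fun n hn A hA hdense ↦ ?_⟩
  have hn₀ : 1 ≤ n := by omega
  have hnpos : (0 : ℝ) < n := by exact_mod_cast hn₀
  have : Nonempty (Fin n) := ⟨⟨0, hn₀⟩⟩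
  have hmul : (n : ℝ) ^ (-(1 / tDensity t H)) * (n : ℝ) ^ t =
      (n : ℝ) ^ ((t : ℝ) - 1 / tDensity t H) := by
    rw [← Real.rpow_natCast, ← Real.rpow_add hnpos, neg_add_eq_sub]
  have hA_le : (#A : ℝ) ≤ (n : ℝ) ^ t := by
    have hle := card_le_card hA
    rw [card_powersetCard, card_fin] at hle
    exact_mod_cast hle.trans (Nat.choose_le_pow n t)
  have hbalanced := isBalanced_copyWeight_rpow hH hpos hc
    (hcopies (Fin n) A (by rw [Fintype.card_fin]; omega)
      (fun E hE ↦ (mem_powersetCard.1 (hA hE)).2) (by rwa [Fintype.card_fin]))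
  rw [Fintype.card_fin] at hbalanced
  rw [← hmul]
  exact (hstep (Finset (Fin n)) A _ _ _ (by positivity) (hn₂ n (by omega)).le
    (hmul ▸ one_le_rpow_sub_one_div_tDensity hH hcard hn₀) hA_le hbalanced).mono le_rfl le_rfl
      fun I hI ↦ ⟨isIndependent_copyWeight hI.1, hI.2⟩

theorem exists_hasContainers_hFree (hH : ∀ E ∈ H, #E = t) (hcard : 1 < #H) (hδ : 0 < δ) :
    ∃ D n₀ : ℕ, ∀ n ≥ n₀,
      HasContainers (fun I ↦ ¬ HContains H I ∧ I ⊆ powersetCard t (univ : Finset (Fin n)))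
        (D * ⌈(n : ℝ) ^ ((t : ℝ) - 1 / tDensity t H)⌉₊) (exTuran t n H + δ * (n : ℝ) ^ t) := by
  obtain ⟨ε, hε, D, n₀, hstep⟩ := exists_hasContainers_of_exTuran_add_le hH hcard hδ
  refine ⟨⌈1 / ε⌉₊ * D, n₀, fun n hn ↦ ?_⟩
  have hsteps : (n : ℝ) ^ t ≤ ⌈1 / ε⌉₊ * (ε * (n : ℝ) ^ t) := by
    rw [← mul_assoc]
    exact le_mul_of_one_le_left (by positivity) ((div_le_iff₀ hε).1 (Nat.le_ceil _))
  have hcomplete : (#(powersetCard t (univ : Finset (Fin n))) : ℝ) ≤ (n : ℝ) ^ t := by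
    rw [card_powersetCard, card_fin]
    exact_mod_cast Nat.choose_le_pow n t
  rw [mul_assoc]
  refine HasContainers.iterate (by positivity) (by positivity)
    (fun A hA hdense ↦ hstep n hn A hA hdense.le) ⌈1 / ε⌉₊ _ subset_rfl ?_
  exact (hcomplete.trans hsteps).trans (le_add_of_nonneg_left (by positivity))

end HFreeContainers

section BinomialSums

variable {N a b d m s M : ℕ} {K B η δ : ℝ}

lemma choose_sub_mul_pow_le (hs : s ≤ m) (hb : m + d ≤ b) :
    b.choose (m - s) * d ^ s ≤ b.choose m * m ^ s := by
  induction s with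
  | zero => simp
  | succ s ih =>
    have habsorb : b.choose (m - s) * (m - s) =
        b.choose (m - (s + 1)) * (b - (m - (s + 1))) := by
      rw [← Nat.choose_succ_right_eq, show m - (s + 1) + 1 = m - s by omega]
    calc b.choose (m - (s + 1)) * d ^ (s + 1)
        = b.choose (m - (s + 1)) * d * d ^ s := by ring
      _ ≤ b.choose (m - (s + 1)) * (b - (m - (s + 1))) * d ^ s := by
          gcongr
          omega
      _ = b.choose (m - s) * d ^ s * (m - s) := by rw [← habsorb]; ring
      _ ≤ b.choose m * m ^ s * m := Nat.mul_le_mul (ih (by omega)) (Nat.sub_le m s)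
      _ = b.choose m * m ^ (s + 1) := by ring

lemma choose_mul_pow_le_choose_mul_pow (h : b ≤ M) (m : ℕ) :
    b.choose m * M ^ m ≤ M.choose m * b ^ m := by
  induction m with
  | zero => simp
  | succ m ih =>
    have hratio : (b - m) * M ≤ (M - m) * b := by
      rw [Nat.sub_mul, Nat.sub_mul, mul_comm M b]
      exact Nat.sub_le_sub_left (Nat.mul_le_mul_left m h) _
    refine Nat.le_of_mul_le_mul_right ?_ m.succ_pos
    calc b.choose (m + 1) * M ^ (m + 1) * (m + 1)
        = b.choose (m + 1) * (m + 1) * M ^ m * M := by ring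
      _ = b.choose m * M ^ m * ((b - m) * M) := by rw [Nat.choose_succ_right_eq]; ring
      _ ≤ M.choose m * b ^ m * ((M - m) * b) := Nat.mul_le_mul ih hratio
      _ = M.choose m * (M - m) * b ^ (m + 1) := by ring
      _ = M.choose (m + 1) * b ^ (m + 1) * (m + 1) := by rw [← Nat.choose_succ_right_eq]; ring

lemma choose_mul_pow_le_choose {r : ℝ} (hr : 1 ≤ r) (hM : r * b ≤ M) (m : ℕ) :
    b.choose m * r ^ m ≤ M.choose m := by
  obtain rfl | hb := b.eq_zero_or_pos
  · cases m <;> simp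
  have hbM : b ≤ M := by exact_mod_cast (le_mul_of_one_le_left b.cast_nonneg hr).trans hM
  have hpos : (0 : ℝ) < (b : ℝ) ^ m := by positivity
  refine le_of_mul_le_mul_right ?_ hpos
  calc b.choose m * r ^ m * (b : ℝ) ^ m = b.choose m * (r * b) ^ m := by rw [mul_pow]; ring
    _ ≤ b.choose m * (M : ℝ) ^ m := by gcongr
    _ ≤ M.choose m * (b : ℝ) ^ m := by exact_mod_cast choose_mul_pow_le_choose_mul_pow hbM m

lemma choose_mul_choose_sub_le (hK : 0 ≤ K) (hN : N ≤ K * d) (hs : s ≤ m) (hb : m + d ≤ b) :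
    (N.choose s : ℝ) * b.choose (m - s) ≤ b.choose m * ((K * m) ^ s / s.factorial) :=
  calc (N.choose s : ℝ) * b.choose (m - s)
      ≤ (K * d) ^ s / s.factorial * b.choose (m - s) := by
        gcongr
        exact (Nat.choose_le_pow_div s N).trans (by gcongr)
    _ = K ^ s / s.factorial * (b.choose (m - s) * (d : ℝ) ^ s) := by rw [mul_pow]; ring
    _ ≤ K ^ s / s.factorial * (b.choose m * (m : ℝ) ^ s) :=
        mul_le_mul_of_nonneg_left (by exact_mod_cast choose_sub_mul_pow_le hs hb) (by positivity)
    _ = b.choose m * ((K * m) ^ s / s.factorial) := by rw [mul_pow]; ring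

lemma sum_choose_mul_choose_sub_le (hη : 0 ≤ η) (hB : 1 ≤ B) (hN : N ≤ B * η * d) (ha : a ≤ m)
    (hb : m + d ≤ b) :
    ∑ s ∈ range (a + 1), (N.choose s : ℝ) * b.choose (m - s) ≤
      b.choose m * (B ^ a * Real.exp (η * m)) := by
  have hterm : ∀ s ∈ range (a + 1), (N.choose s : ℝ) * b.choose (m - s) ≤
      b.choose m * (B ^ a * ((η * m) ^ s / s.factorial)) := by
    intro s hs
    have hsa : s ≤ a := mem_range_succ_iff.1 hs
    calc (N.choose s : ℝ) * b.choose (m - s)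
        ≤ b.choose m * ((B * η * m) ^ s / s.factorial) :=
          choose_mul_choose_sub_le (by positivity) hN (hsa.trans ha) hb
      _ = b.choose m * (B ^ s * ((η * m) ^ s / s.factorial)) := by rw [mul_assoc B, mul_pow]; ring
      _ ≤ b.choose m * (B ^ a * ((η * m) ^ s / s.factorial)) := by gcongr
  refine (sum_le_sum hterm).trans ?_
  rw [← mul_sum, ← mul_sum]
  gcongr
  exact Real.sum_le_exp_of_nonneg (by positivity) _

lemma sum_choose_mul_choose_sub_le_choose (hη : 0 ≤ η) (hB : 1 ≤ B) (hN : N ≤ B * η * d)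
    (ha : a ≤ m) (hb : m + d ≤ b) (hlog : a * Real.log B ≤ η * m)
    (hM : Real.exp (2 * η) * b ≤ M) :
    ∑ s ∈ range (a + 1), N.choose s * b.choose (m - s) ≤ M.choose m := by
  have hpow : B ^ a ≤ Real.exp (η * m) := by
    rw [← Real.exp_log (zero_lt_one.trans_le hB), ← Real.exp_nat_mul]
    exact Real.exp_le_exp.2 hlog
  have hsum : ∑ s ∈ range (a + 1), (N.choose s : ℝ) * b.choose (m - s) ≤ M.choose m :=
    calc ∑ s ∈ range (a + 1), (N.choose s : ℝ) * b.choose (m - s)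
        ≤ b.choose m * (B ^ a * Real.exp (η * m)) := sum_choose_mul_choose_sub_le hη hB hN ha hb
      _ ≤ b.choose m * (Real.exp (η * m) * Real.exp (η * m)) := by gcongr
      _ = b.choose m * Real.exp (2 * η) ^ m := by
          rw [← Real.exp_add, ← Real.exp_nat_mul]
          ring_nf
      _ ≤ M.choose m := choose_mul_pow_le_choose (Real.one_le_exp (by positivity)) hM m
  exact_mod_cast hsum

lemma add_ceil_half_mul_le_add_ceil (hδ : 0 < δ) {X : ℝ} {e : ℕ} (hX : 4 / δ ≤ X) (he : e ≤ X) :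
    (1 + δ / (4 * (2 + δ))) * (e + ⌈δ / 2 * X⌉₊ : ℕ) ≤ (e + ⌈δ * X⌉₊ : ℕ) := by
  have hXpos : 0 < X := (by positivity : 0 < 4 / δ).trans_le hX
  have hone : 1 ≤ δ / 4 * X := by linarith [(div_le_iff₀ hδ).1 hX]
  have hceil : (⌈δ / 2 * X⌉₊ : ℝ) < δ / 2 * X + 1 := Nat.ceil_lt_add_one (by positivity)
  have hgain : δ / (4 * (2 + δ)) * (e + ⌈δ / 2 * X⌉₊ : ℝ) ≤ δ / 4 * X :=
    calc δ / (4 * (2 + δ)) * (e + ⌈δ / 2 * X⌉₊ : ℝ) ≤ δ / (4 * (2 + δ)) * ((2 + δ) * X) := by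
          gcongr
          linarith [mul_pos hδ hXpos]
      _ = δ / 4 * X := by field_simp
  push_cast
  linarith [Nat.le_ceil (δ * X)]

lemma exists_sum_choose_mul_choose_le_choose (hδ : 0 < δ) :
    ∃ ε : ℝ, 0 < ε ∧ ∀ (X : ℝ) (N e m a : ℕ), 4 / δ ≤ X → N ≤ X → e ≤ X → m ≤ e → a ≤ ε * m →
      ∑ s ∈ range (a + 1), N.choose s * (e + ⌈δ / 2 * X⌉₊).choose (m - s) ≤
        (e + ⌈δ * X⌉₊).choose m := by
  obtain ⟨η, hη, hexp⟩ : ∃ η : ℝ, 0 < η ∧ Real.exp (2 * η) = 1 + δ / (4 * (2 + δ)) := by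
    have hγ : 0 < δ / (4 * (2 + δ)) := by positivity
    refine ⟨Real.log (1 + δ / (4 * (2 + δ))) / 2, half_pos (Real.log_pos (by linarith)), ?_⟩
    rw [mul_div_cancel₀ _ two_ne_zero, Real.exp_log (by positivity)]
  obtain ⟨B, hB, hBη⟩ : ∃ B : ℝ, 1 ≤ B ∧ 2 / δ ≤ B * η :=
    ⟨max 1 (2 / δ / η), le_max_left _ _, (div_le_iff₀ hη).1 (le_max_right _ _)⟩
  have hlogB : 0 ≤ Real.log B := Real.log_nonneg hB
  refine ⟨η / (η + Real.log B), by positivity, fun X N e m a hX hN he hm ha ↦ ?_⟩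
  have hsplit : a * η + a * Real.log B ≤ η * m := by
    rw [div_mul_eq_mul_div, le_div_iff₀ (by positivity)] at ha
    linarith
  have ha' : (a : ℝ) ≤ m := by
    refine le_of_mul_le_mul_right ?_ hη
    linarith [mul_nonneg a.cast_nonneg hlogB]
  refine sum_choose_mul_choose_sub_le_choose (d := ⌈δ / 2 * X⌉₊) hη.le hB ?_
    (by exact_mod_cast ha') (by omega) (by linarith [mul_nonneg a.cast_nonneg hη.le])
    (hexp ▸ add_ceil_half_mul_le_add_ceil hδ hX he)
  have hXpos : 0 < X := (by positivity : 0 < 4 / δ).trans_le hX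
  calc (N : ℝ) ≤ X := hN
    _ = 2 / δ * (δ / 2 * X) := by field_simp
    _ ≤ B * η * ⌈δ / 2 * X⌉₊ :=
        mul_le_mul hBη (Nat.le_ceil _) (by positivity) (by positivity)

end BinomialSums

section Counting

variable {α : Type*} {t n m : ℕ} {H : Finset (Finset α)} {δ : ℝ}

/-- The `H`-free `t`-uniform hypergraphs with `m` edges on the vertex set `Fin n`; their number is
`f_{n,m}(H)`. -/
noncomputable def hFreeHypergraphs (t n m : ℕ) (H : Finset (Finset α)) :
    Finset (Finset (Finset (Fin n))) :=
  {G ∈ powersetCard m (powersetCard t univ) | ¬ HContains H G}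

lemma mem_hFreeHypergraphs {G : Finset (Finset (Fin n))} :
    G ∈ hFreeHypergraphs t n m H ↔ (G ⊆ powersetCard t univ ∧ #G = m) ∧ ¬ HContains H G := by
  rw [hFreeHypergraphs, mem_filter, mem_powersetCard]

theorem choose_exTuran_le_card_hFreeHypergraphs (t n m : ℕ) (hH : H.Nonempty) :
    (exTuran t n H).choose m ≤ #(hFreeHypergraphs t n m H) := by
  obtain ⟨G, hG, hfree, hcard⟩ := exTuran_mem_freeCards t n hH
  rw [← hcard, ← card_powersetCard]
  refine card_le_card fun I hI ↦ ?_
  obtain ⟨hIG, hIm⟩ := mem_powersetCard.1 hI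
  exact mem_hFreeHypergraphs.2 ⟨⟨fun E hE ↦ mem_powersetCard_univ.2 (hG E (hIG hE)), hIm⟩,
    fun h ↦ hfree (h.mono hIG)⟩

lemma card_hFreeHypergraphs_le_choose_of_eq_zero_or_exTuran_lt (h : m = 0 ∨ exTuran t n H < m)
    (M : ℕ) : #(hFreeHypergraphs t n m H) ≤ M.choose m := by
  obtain rfl | hlt := h
  · exact (card_filter_le _ _).trans (by simp)
  · rw [card_eq_zero.2]
    · exact Nat.zero_le _
    refine eq_empty_of_forall_notMem fun G hG ↦ hlt.not_ge ?_
    obtain ⟨⟨hGt, rfl⟩, hfree⟩ := mem_hFreeHypergraphs.1 hG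
    exact card_le_exTuran (fun E hE ↦ mem_powersetCard_univ.1 (hGt hE)) hfree

lemma card_hFreeHypergraphs_le_sum_choose {a b : ℕ} (h : HasContainers
      (fun I ↦ ¬ HContains H I ∧ I ⊆ powersetCard t (univ : Finset (Fin n))) a b) (m : ℕ) :
    #(hFreeHypergraphs t n m H) ≤
      ∑ s ∈ range (a + 1), (n.choose t).choose s * b.choose (m - s) := by
  have hcard : #(powersetCard t (univ : Finset (Fin n))) = n.choose t := by
    rw [card_powersetCard, card_fin]
  refine hcard ▸ h.card_le_sum_choose _ m _ fun I hI ↦ ?_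
  obtain ⟨hI, hfree⟩ := mem_hFreeHypergraphs.1 hI
  exact ⟨⟨hfree, hI.1⟩, hI⟩

variable [Fintype α]

/-- The density is `0` here, so the exponent is `t` by the convention `x / 0 = 0`. -/
lemma card_hFreeHypergraphs_le_of_card_eq_one (ht : t + 1 ≤ Fintype.card α) (hH : #H = 1)
    (hm : 2 * (n : ℝ) ^ ((t : ℝ) - 1 / tDensity t H) ≤ m) (M : ℕ) :
    #(hFreeHypergraphs t n m H) ≤ M.choose m := by
  rw [tDensity_eq_zero_of_card_eq_one ht hH, div_zero, sub_zero, Real.rpow_natCast] at hm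
  have hmpow : 2 * n ^ t ≤ m := by exact_mod_cast hm
  have hex : exTuran t n H ≤ n ^ t := exTuran_le_pow t n H
  exact card_hFreeHypergraphs_le_choose_of_eq_zero_or_exTuran_lt (by omega) M

lemma le_of_mul_rpow_le_of_le_exTuran (hH : ∀ E ∈ H, #E = t) (hcard : 1 < #H) {C : ℝ} {n₁ : ℕ}
    (hn : 1 ≤ n) (hC : (n₁ : ℝ) ^ t ≤ C) (hm : C * (n : ℝ) ^ ((t : ℝ) - 1 / tDensity t H) ≤ m)
    (hmex : m ≤ exTuran t n H) : n₁ ≤ n := by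
  have hC₀ : 0 ≤ C := (by positivity : (0 : ℝ) ≤ (n₁ : ℝ) ^ t).trans hC
  have hpow : (n₁ : ℝ) ^ t ≤ (n : ℝ) ^ t :=
    calc (n₁ : ℝ) ^ t ≤ C := hC
      _ ≤ C * (n : ℝ) ^ ((t : ℝ) - 1 / tDensity t H) :=
          le_mul_of_one_le_right hC₀ (one_le_rpow_sub_one_div_tDensity hH hcard hn)
      _ ≤ m := hm
      _ ≤ (n : ℝ) ^ t := by exact_mod_cast hmex.trans (exTuran_le_pow t n H)
  exact_mod_cast (pow_le_pow_iff_left₀ n₁.cast_nonneg n.cast_nonneg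
    (pos_of_uniform_of_one_lt_card hH hcard).ne').1 hpow

lemma natCast_mul_ceil_le {x y ε : ℝ} {D : ℕ} (hx : 1 ≤ x) (hε : 0 < ε)
    (hy : 2 * D / ε * x ≤ y) : ((D * ⌈x⌉₊ : ℕ) : ℝ) ≤ ε * y := by
  have hceil : (⌈x⌉₊ : ℝ) ≤ 2 * x := by linarith [Nat.ceil_lt_add_one (zero_le_one.trans hx)]
  calc ((D * ⌈x⌉₊ : ℕ) : ℝ) ≤ D * (2 * x) := by
        push_cast
        gcongr
    _ = ε * (2 * D / ε * x) := by field_simp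
    _ ≤ ε * y := by gcongr

lemma exists_card_hFreeHypergraphs_le_of_one_lt_card (hH : ∀ E ∈ H, #E = t) (hcard : 1 < #H)
    (hδ : 0 < δ) :
    ∃ C : ℝ, 0 < C ∧ ∀ n m : ℕ, C * (n : ℝ) ^ ((t : ℝ) - 1 / tDensity t H) ≤ m →
      #(hFreeHypergraphs t n m H) ≤ (exTuran t n H + ⌈δ * (n : ℝ) ^ t⌉₊).choose m := by
  have ht : t ≠ 0 := (pos_of_uniform_of_one_lt_card hH hcard).ne'
  obtain ⟨D, n₀, hcontainers⟩ := exists_hasContainers_hFree hH hcard (half_pos hδ)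
  obtain ⟨ε, hε, hsum⟩ := exists_sum_choose_mul_choose_le_choose hδ
  obtain ⟨n₁, hn₀n₁, hδn₁⟩ : ∃ n₁ : ℕ, n₀ ≤ n₁ ∧ ⌈4 / δ⌉₊ ≤ n₁ :=
    ⟨max n₀ ⌈4 / δ⌉₊, le_max_left _ _, le_max_right _ _⟩
  have hn₁ : 0 < n₁ := (Nat.ceil_pos.2 (by positivity)).trans_le hδn₁
  refine ⟨(n₁ : ℝ) ^ t + 2 * D / ε, by positivity, fun n m hm ↦ ?_⟩
  by_cases hm₀ : m = 0 ∨ exTuran t n H < m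
  · exact card_hFreeHypergraphs_le_choose_of_eq_zero_or_exTuran_lt hm₀ _
  obtain ⟨hmpos, hmex⟩ : 0 < m ∧ m ≤ exTuran t n H := by omega
  have hn : 1 ≤ n := Nat.pos_of_ne_zero <| by
    rintro rfl
    exact (hmpos.trans_le (hmex.trans (exTuran_le_pow t 0 H))).ne' (zero_pow ht)
  have hn₁n : n₁ ≤ n := le_of_mul_rpow_le_of_le_exTuran hH hcard hn
    (le_add_of_nonneg_right (by positivity)) hm hmex
  have hX : 4 / δ ≤ (n : ℝ) ^ t :=
    calc 4 / δ ≤ ⌈4 / δ⌉₊ := Nat.le_ceil _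
      _ ≤ (n : ℝ) ^ t := by exact_mod_cast (hδn₁.trans hn₁n).trans (Nat.le_self_pow ht n)
  have hfingerprint : ((D * ⌈(n : ℝ) ^ ((t : ℝ) - 1 / tDensity t H)⌉₊ : ℕ) : ℝ) ≤ ε * m := by
    refine natCast_mul_ceil_le (one_le_rpow_sub_one_div_tDensity hH hcard hn) hε (le_trans ?_ hm)
    gcongr
    exact le_add_of_nonneg_left (by positivity)
  have hsize : exTuran t n H + δ / 2 * (n : ℝ) ^ t ≤
      (exTuran t n H + ⌈δ / 2 * (n : ℝ) ^ t⌉₊ : ℕ) := by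
    push_cast
    gcongr
    exact Nat.le_ceil _
  exact (card_hFreeHypergraphs_le_sum_choose
    ((hcontainers n (hn₀n₁.trans hn₁n)).mono le_rfl hsize fun _ ↦ id) m).trans
    (hsum _ _ _ _ _ hX (by exact_mod_cast Nat.choose_le_pow n t)
      (by exact_mod_cast exTuran_le_pow t n H) hmex hfingerprint)

end Counting

/-- Theorem 7.1: the number of `H`-free `t`-uniform hypergraphs on `{1, …, n}`
with exactly `m` edges. -/
theorem count_Hfree_hypergraphs {α : Type} [Fintype α] [DecidableEq α]
    (t : ℕ) (ht : 2 ≤ t)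
    (H : Finset (Finset α)) (hHuni : ∀ E ∈ H, E.card = t)
    (hv : t + 1 ≤ Fintype.card α) (he : 1 ≤ H.card)
    (δ : ℝ) (hδ : 0 < δ) :
    ∃ C : ℝ, 0 < C ∧ ∀ n : ℕ, ∀ m : ℕ,
      C * (n : ℝ) ^ ((t : ℝ) - 1 / tDensity t H) ≤ (m : ℝ) →
      Nat.choose (exTuran t n H) m ≤
        ((((Finset.univ : Finset (Fin n)).powersetCard t).powersetCard m).filter
          (fun G : Finset (Finset (Fin n)) => ¬ HContains H G)).card ∧
      ((((Finset.univ : Finset (Fin n)).powersetCard t).powersetCard m).filter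
          (fun G : Finset (Finset (Fin n)) => ¬ HContains H G)).card ≤
        Nat.choose (exTuran t n H + ⌈δ * (n : ℝ) ^ t⌉₊) m := by
  have hlower := fun n m ↦ choose_exTuran_le_card_hFreeHypergraphs t n m (card_pos.1 he)
  obtain hcard | hcard := he.eq_or_lt
  · exact ⟨2, two_pos, fun n m hm ↦
      ⟨hlower n m, card_hFreeHypergraphs_le_of_card_eq_one hv hcard.symm hm _⟩⟩
  · obtain ⟨C, hC, hupper⟩ := exists_card_hFreeHypergraphs_le_of_one_lt_card hHuni hcard hδ
    exact ⟨C, hC, fun n m hm ↦ ⟨hlower n m, hupper n m hm⟩⟩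
end
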